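/- arXiv:1907.12243 — 5 statements merged into one kernel-verified Lean document; each statement's English description precedes it below -/
import Mathlib

section
/- If the discrete Sobolev inner product ⟨·,·⟩ is sequentially-ordered, then for every n the Sobolev orthogonal polynomial S_n has at least n − N changes of sign on the open interval (−1,1), i.e., there exist at least n − N points in (−1,1) at which S_n changes sign. -/
open MeasureTheory Polynomial Filter
open scoped Classical

noncomputable section

/-- The discrete Sobolev inner product with a single derivative order `d j` at each
mass point `c j`, with weight `η j`. -/
def sobInner (μ : Measure ℝ) {N : ℕ} (c : Fin N → ℝ) (d : Fin N → ℕ) (η : Fin N → ℝ)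
    (f g : Polynomial ℝ) : ℝ :=
  (∫ x in Set.Icc (-1:ℝ) 1, f.eval x * g.eval x ∂μ) +
    ∑ j, η j * ((derivative^[d j] f).eval (c j)) * ((derivative^[d j] g).eval (c j))

/-- The general discrete Sobolev inner product with weights `η j i` for the `i`-th
derivatives, `0 ≤ i ≤ d j`, at each mass point `c j`. -/
def sobInner2 (μ : Measure ℝ) {N : ℕ} (c : Fin N → ℝ) (d : Fin N → ℕ) (η : Fin N → ℕ → ℝ)
    (f g : Polynomial ℝ) : ℝ :=
  (∫ x in Set.Icc (-1:ℝ) 1, f.eval x * g.eval x ∂μ) +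
    ∑ j, ∑ i ∈ Finset.range (d j + 1),
      η j i * ((derivative^[i] f).eval (c j)) * ((derivative^[i] g).eval (c j))

/-- Sequential order for the data of a discrete Sobolev inner product:
`d` is nondecreasing and each `c k` lies outside the convex hull of
`(-1,1) ∪ {c 1, …, c (k-1)}`. -/
def SeqOrdered {N : ℕ} (c : Fin N → ℝ) (d : Fin N → ℕ) : Prop :=
  (∀ i j : Fin N, i ≤ j → d i ≤ d j) ∧
    ∀ k : Fin N, c k ∉ convexHull ℝ (Set.Ioo (-1:ℝ) 1 ∪ c '' {j : Fin N | j < k})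

/-- The polynomial ρ(x) = ∏_{c j < -1} (x - c j)^(d j + 1) · ∏_{c j > 1} (c j - x)^(d j + 1). -/
def rhoPoly {N : ℕ} (c : Fin N → ℝ) (d : Fin N → ℕ) : Polynomial ℝ :=
  (∏ j ∈ Finset.univ.filter (fun j => c j < -1), (X - C (c j)) ^ (d j + 1)) *
    ∏ j ∈ Finset.univ.filter (fun j => (1:ℝ) < c j), (C (c j) - X) ^ (d j + 1)

/-- ν = number of mass points greater than 1. -/
def nuCount {N : ℕ} (c : Fin N → ℝ) : ℕ :=
  (Finset.univ.filter (fun j : Fin N => (1:ℝ) < c j)).card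

/-- μ belongs to the Nevai class M(0,1): supp μ = [-1,1] and the monic orthogonal
polynomials of μ satisfy a three-term recurrence with aₙ → 1/2 and bₙ → 0. -/
def NevaiClass (μ : Measure ℝ) : Prop :=
  μ (Set.Icc (-1:ℝ) 1)ᶜ = 0 ∧
  (∀ x ∈ Set.Icc (-1:ℝ) 1, ∀ ε > 0, 0 < μ (Metric.ball x ε)) ∧
  ∃ (P : ℕ → Polynomial ℝ) (a b : ℕ → ℝ),
    (∀ n, (P n).Monic) ∧ (∀ n, (P n).natDegree = n) ∧
    (∀ n, ∀ m < n, (∫ x in Set.Icc (-1:ℝ) 1, x ^ m * (P n).eval x ∂μ) = 0) ∧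
    P 0 = 1 ∧ P 1 = X - C (b 0) ∧
    (∀ n, P (n + 2) = (X - C (b (n + 1))) * P (n + 1) - C ((a (n + 1)) ^ 2) * P n) ∧
    Tendsto a atTop (nhds (1 / 2)) ∧ Tendsto b atTop (nhds 0)

/-- The segment [-1,1] regarded as a subset of ℂ. -/
def segIcc : Set ℂ := Complex.ofReal '' Set.Icc (-1:ℝ) 1

/-- Markov-type function: z ↦ ∫ q(x) / (z - x) w(x) dμ(x). -/
def markovHat (μ : Measure ℝ) (w q : Polynomial ℝ) (z : ℂ) : ℂ :=
  ∫ x in Set.Icc (-1:ℝ) 1, ((q.eval x * w.eval x : ℝ) : ℂ) / (z - (x : ℂ)) ∂μ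

/-- Associated function: z ↦ ∫ (p(z) - p(x)) / (z - x) · q(x) w(x) dμ(x). -/
def assocFun (μ : Measure ℝ) (w q p : Polynomial ℝ) (z : ℂ) : ℂ :=
  ∫ x in Set.Icc (-1:ℝ) 1,
    ((aeval z p - ((p.eval x : ℝ) : ℂ)) / (z - (x : ℂ))) * ((q.eval x * w.eval x : ℝ) : ℂ) ∂μ

/-- A function changes sign at `t` if arbitrarily close to `t`, on the left and right,
it takes values of opposite signs. -/
def SignChangeAt (p : Polynomial ℝ) (t : ℝ) : Prop :=
  ∀ δ > 0, ∃ x ∈ Set.Ioo (t - δ) t, ∃ y ∈ Set.Ioo t (t + δ), p.eval x * p.eval y < 0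

/-- N₀(f; A): number of zeros of `f` in `A`, counted with multiplicity. -/
def N0 (f : Polynomial ℝ) (A : Set ℝ) : ℕ :=
  (f.roots.filter (fun x => x ∈ A)).card

lemma aux_rolle (p : ℝ[X]) (A : Set ℝ) (hA : A.OrdConnected) :
    N0 p A ≤ N0 (derivative p) A + 1 := by
  rcases eq_or_ne (derivative p) 0 with hp' | hp'
  · rw [eq_C_of_derivative_eq_zero hp']
    simp [N0]
  have hp : p ≠ 0 := ne_of_apply_ne derivative (by rwa [derivative_zero])
  unfold N0
  set M := p.roots.filter (fun x => x ∈ A) with hM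
  set M' := (derivative p).roots.filter (fun x => x ∈ A) with hM'
  have h1 : M.toFinset.card ≤ (M'.toFinset \ M.toFinset).card + 1 := by
    refine Finset.card_le_sdiff_of_interleaved fun x hx y hy hxy hxy' => ?_
    rw [Multiset.mem_toFinset, hM, Multiset.mem_filter, mem_roots hp] at hx hy
    obtain ⟨z, hz1, hz2⟩ := exists_deriv_eq_zero hxy p.continuousOn (hx.1.trans hy.1.symm)
    refine ⟨z, ?_, hz1⟩
    rw [Multiset.mem_toFinset, hM', Multiset.mem_filter, mem_roots hp', IsRoot, ← p.deriv]
    exact ⟨hz2, hA.out hx.2 hy.2 ⟨hz1.1.le, hz1.2.le⟩⟩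
  have hc : ∀ x ∈ M.toFinset, M.count x ≤ M'.count x + 1 := by
    intro x hx
    rw [Multiset.mem_toFinset, hM, Multiset.mem_filter] at hx
    rw [hM, hM', Multiset.count_filter_of_pos hx.2, Multiset.count_filter_of_pos hx.2,
      count_roots, count_roots]
    have := rootMultiplicity_sub_one_le_derivative_rootMultiplicity p x
    omega
  calc
    Multiset.card M = ∑ x ∈ M.toFinset, M.count x := (Multiset.toFinset_sum_count_eq _).symm
    _ ≤ ∑ x ∈ M.toFinset, (M'.count x + 1) := Finset.sum_le_sum hc
    _ = (∑ x ∈ M.toFinset, M'.count x) + M.toFinset.card := by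
      simp only [Finset.sum_add_distrib, Finset.card_eq_sum_ones]
    _ ≤ (∑ x ∈ M.toFinset, M'.count x) + ((M'.toFinset \ M.toFinset).card + 1) := by
      gcongr
    _ ≤ (∑ x ∈ M.toFinset, M'.count x) +
          ((∑ x ∈ M'.toFinset \ M.toFinset, M'.count x) + 1) := by
      rw [Finset.card_eq_sum_ones]
      gcongr with x hx
      rw [Nat.succ_le_iff, Multiset.count_pos, ← Multiset.mem_toFinset]
      exact (Finset.mem_sdiff.1 hx).1
    _ = Multiset.card M' + 1 := by
      rw [← add_assoc, ← Finset.sum_union Finset.disjoint_sdiff, Finset.union_sdiff_self_eq_union, ←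
        Multiset.toFinset_sum_count_eq, ← Finset.sum_subset Finset.subset_union_right]
      intro x _ hx₂
      simpa only [Multiset.mem_toFinset, Multiset.count_eq_zero] using hx₂

lemma aux_rolle_iter (p : ℝ[X]) (A : Set ℝ) (hA : A.OrdConnected) (e : ℕ) :
    N0 p A ≤ N0 (derivative^[e] p) A + e := by
  induction e with
  | zero => simp
  | succ e ih =>
    rw [Function.iterate_succ_apply']
    have := aux_rolle (derivative^[e] p) A hA
    omega

lemma aux_rolle_le (p : ℝ[X]) (A : Set ℝ) (hA : A.OrdConnected) {e f : ℕ} (h : e ≤ f) :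
    N0 (derivative^[e] p) A + e ≤ N0 (derivative^[f] p) A + f := by
  obtain ⟨g, rfl⟩ := Nat.exists_eq_add_of_le h
  have := aux_rolle_iter (derivative^[e] p) A hA g
  rw [← Function.iterate_add_apply, add_comm g e] at this
  omega

lemma aux_N0_mono (p : ℝ[X]) {A B : Set ℝ} (h : A ⊆ B) : N0 p A ≤ N0 p B := by
  unfold N0
  exact Multiset.card_le_card (Multiset.monotone_filter_right _ fun x hx => h hx)

lemma aux_N0_add (p : ℝ[X]) (hp : p ≠ 0) {A B : Set ℝ} (h : A ⊆ B) {c : ℝ} (hcA : c ∉ A)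
    (hcB : c ∈ B) (hc : p.eval c = 0) : N0 p A + 1 ≤ N0 p B := by
  unfold N0
  refine Nat.succ_le_of_lt (Multiset.card_lt_card ?_)
  refine lt_of_le_of_ne (Multiset.monotone_filter_right _ fun x hx => h hx) ?_
  intro heq
  have : c ∈ p.roots.filter (fun x => x ∈ B) :=
    Multiset.mem_filter.2 ⟨(mem_roots hp).2 hc, hcB⟩
  rw [← heq] at this
  exact hcA (Multiset.mem_filter.1 this).2

lemma aux_iter_ne_zero (p : ℝ[X]) (hp : p ≠ 0) {e : ℕ} (he : e ≤ p.natDegree) :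
    derivative^[e] p ≠ 0 := by
  intro h
  have h2 : (derivative^[e] p).coeff (p.natDegree - e) = 0 := by rw [h]; simp
  rw [coeff_iterate_derivative, Nat.sub_add_cancel he, nsmul_eq_mul] at h2
  have h3 : p.leadingCoeff ≠ 0 := leadingCoeff_ne_zero.2 hp
  have h4 : (p.natDegree.descFactorial e) ≠ 0 := by
    rw [Ne, Nat.descFactorial_eq_zero_iff_lt]; omega
  rcases mul_eq_zero.1 h2 with h | h
  · exact h4 (by exact_mod_cast h)
  · exact h3 h

lemma aux_key {N : ℕ} (c : Fin N → ℝ) (d : Fin N → ℕ) (hseq : SeqOrdered c d) (Q : ℝ[X])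
    (hQ : Q ≠ 0) (hz : ∀ j, (derivative^[d j] Q).eval (c j) = 0) :
    N0 Q (Set.Ioo (-1:ℝ) 1) + (Finset.univ.filter (fun j => d j ≤ Q.natDegree)).card
      ≤ Q.natDegree := by
  have key : ∀ k : ℕ, ∀ e : ℕ, (∀ j : Fin N, (j:ℕ) < k → d j ≤ Q.natDegree → d j ≤ e) →
      N0 Q (Set.Ioo (-1:ℝ) 1) +
        (Finset.univ.filter (fun j : Fin N => (j:ℕ) < k ∧ d j ≤ Q.natDegree)).card ≤
      N0 (derivative^[e] Q)
        (convexHull ℝ (Set.Ioo (-1:ℝ) 1 ∪ c '' {j : Fin N | (j:ℕ) < k})) + e := by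
    intro k
    induction k with
    | zero =>
      intro e _
      have h1 := aux_rolle_iter Q _ (Set.ordConnected_Ioo (a := (-1:ℝ)) (b := 1)) e
      have h2 : Set.Ioo (-1:ℝ) 1 ⊆
        (convexHull ℝ (Set.Ioo (-1:ℝ) 1 ∪ c '' {j : Fin N | (j:ℕ) < 0})) :=
        Set.subset_union_left.trans (subset_convexHull ℝ _)
      have h3 := aux_N0_mono (derivative^[e] Q) h2
      simp only [Nat.not_lt_zero, false_and, Finset.filter_false, Finset.card_empty]
      simp only [Nat.not_lt_zero] at h3
      omega
    | succ k ih =>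
      intro e he
      have hsub : convexHull ℝ (Set.Ioo (-1:ℝ) 1 ∪ c '' {j : Fin N | (j:ℕ) < k}) ⊆
          convexHull ℝ (Set.Ioo (-1:ℝ) 1 ∪ c '' {j : Fin N | (j:ℕ) < k + 1}) := by
        apply convexHull_mono
        apply Set.union_subset_union_right
        apply Set.image_mono
        intro j hj
        exact Nat.lt_succ_of_lt hj
      by_cases hk : ∃ hk : k < N, d ⟨k, hk⟩ ≤ Q.natDegree
      · obtain ⟨hk, hdk⟩ := hk
        have h1 := ih (d ⟨k, hk⟩) (fun j hj _ => hseq.1 _ _ (by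
          rw [Fin.le_def]; exact hj.le))
        have h2 := aux_N0_add (derivative^[d ⟨k, hk⟩] Q) (aux_iter_ne_zero Q hQ hdk) hsub
          (hseq.2 ⟨k, hk⟩) (subset_convexHull ℝ _ (Or.inr ⟨⟨k, hk⟩, by simp, rfl⟩)) (hz _)
        have h3 := aux_rolle_le Q _ (convex_convexHull ℝ
          (Set.Ioo (-1:ℝ) 1 ∪ c '' {j : Fin N | (j:ℕ) < k + 1})).ordConnected
          (he ⟨k, hk⟩ (by simp) hdk)
        have h4 : (Finset.univ.filter (fun j : Fin N => (j:ℕ) < k + 1 ∧ d j ≤ Q.natDegree)).card ≤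
          (Finset.univ.filter (fun j : Fin N => (j:ℕ) < k ∧ d j ≤ Q.natDegree)).card + 1 := by
          refine (Finset.card_le_card ?_).trans (Finset.card_insert_le ⟨k, hk⟩ _)
          intro j hj
          simp only [Finset.mem_filter, Finset.mem_univ, true_and, Finset.mem_insert,
            Fin.ext_iff] at hj ⊢
          omega
        omega
      · have h1 := ih e (fun j hj => he j (by omega))
        have h2 := aux_N0_mono (derivative^[e] Q) hsub
        have h4 : (Finset.univ.filter (fun j : Fin N => (j:ℕ) < k + 1 ∧ d j ≤ Q.natDegree)).card ≤
          (Finset.univ.filter (fun j : Fin N => (j:ℕ) < k ∧ d j ≤ Q.natDegree)).card := by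
          refine (Finset.card_le_card ?_)
          intro j hj
          simp only [Finset.mem_filter, Finset.mem_univ, true_and] at hj ⊢
          refine ⟨?_, hj.2⟩
          rcases Nat.lt_succ_iff_lt_or_eq.1 hj.1 with h | h
          · exact h
          · exact absurd ⟨h ▸ j.2, by subst h; exact hj.2⟩ hk
        omega
  have h := key N Q.natDegree (fun j _ h => h)
  have h0 : N0 (derivative^[Q.natDegree] Q)
        (convexHull ℝ (Set.Ioo (-1:ℝ) 1 ∪ c '' {j : Fin N | (j:ℕ) < N})) = 0 := by
    unfold N0
    have h1 : (derivative^[Q.natDegree] Q).natDegree = 0 := by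
      have := natDegree_iterate_derivative Q Q.natDegree
      omega
    rw [eq_C_of_natDegree_eq_zero h1]
    simp
  rw [h0, zero_add] at h
  simpa using h

lemma aux_exists {N : ℕ} (c : Fin N → ℝ) (d : Fin N → ℕ) (T : Finset ℝ) (D : ℕ)
    (hD : T.card + (Finset.univ.filter (fun j => d j < D)).card < D) :
    ∃ Q : ℝ[X], Q ≠ 0 ∧ Q.natDegree < D ∧ (∀ t ∈ T, Q.eval t = 0) ∧
      ∀ j, (derivative^[d j] Q).eval (c j) = 0 := by
  let J := Finset.univ.filter (fun j => d j < D)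
  let f : ℝ[X] →ₗ[ℝ] ((T → ℝ) × (J → ℝ)) :=
    LinearMap.prod (LinearMap.pi fun t => leval (t : ℝ))
      (LinearMap.pi fun j => (leval (c j)) ∘ₗ ((derivative (R := ℝ)) ^ (d j)))
  let g : (Fin D → ℝ) →ₗ[ℝ] ((T → ℝ) × (J → ℝ)) :=
    f ∘ₗ (degreeLT ℝ D).subtype ∘ₗ (degreeLTEquiv ℝ D).symm.toLinearMap
  have hg : LinearMap.ker g ≠ ⊥ := by
    apply LinearMap.ker_ne_bot_of_finrank_lt
    rw [Module.finrank_prod, Module.finrank_fintype_fun_eq_card, Module.finrank_fintype_fun_eq_card,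
      Module.finrank_fintype_fun_eq_card, Fintype.card_coe, Fintype.card_coe, Fintype.card_fin]
    exact hD
  obtain ⟨v, hv, hv0⟩ := (Submodule.ne_bot_iff _).1 hg
  let q := (degreeLTEquiv ℝ D).symm v
  have hq0 : (q : ℝ[X]) ≠ 0 := by
    simpa [q] using hv0
  have hdeg : (q : ℝ[X]).natDegree < D :=
    (natDegree_lt_iff_degree_lt hq0).2 (mem_degreeLT.1 q.2)
  have hf : f (q : ℝ[X]) = 0 := hv
  refine ⟨q, hq0, hdeg, ?_, ?_⟩
  · intro t ht
    exact congrFun (congrArg Prod.fst hf) ⟨t, ht⟩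
  · intro j
    by_cases hj : d j < D
    · have := congrFun (congrArg Prod.snd hf) ⟨j, by simp [J, hj]⟩
      simpa [f, Module.End.pow_apply] using this
    · rw [iterate_derivative_eq_zero (by omega)]
      simp

lemma aux_decomp (m : ℕ) : ∀ F : ℝ[X], F ≠ 0 → F.natDegree ≤ m →
    ∃ (T : Finset ℝ) (H K : ℝ[X]), (∀ t ∈ T, t ∈ Set.Ioo (-1:ℝ) 1) ∧
      (∀ x ∈ Set.Ioo (-1:ℝ) 1, K.eval x ≠ 0) ∧ F = (∏ t ∈ T, (X - C t)) * H ^ 2 * K := by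
  induction m with
  | zero =>
    intro F hF hd
    refine ⟨∅, 1, F, by simp, ?_, by simp⟩
    intro x _ hx
    rw [eq_C_of_natDegree_le_zero hd] at hx hF
    simp at hx hF
    exact hF hx
  | succ m ih =>
    intro F hF hd
    by_cases h : ∃ a ∈ Set.Ioo (-1:ℝ) 1, F.eval a = 0
    · obtain ⟨a, ha, ha0⟩ := h
      obtain ⟨G, rfl⟩ := dvd_iff_isRoot.2 ha0
      have hG : G ≠ 0 := right_ne_zero_of_mul hF
      rw [natDegree_mul (X_sub_C_ne_zero a) hG, natDegree_X_sub_C] at hd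
      obtain ⟨T, H, K, hT, hK, hGe⟩ := ih G hG (by omega)
      by_cases haT : a ∈ T
      · refine ⟨T.erase a, (X - C a) * H, K, fun t ht => hT t (Finset.mem_of_mem_erase ht), hK, ?_⟩
        rw [hGe, ← Finset.mul_prod_erase T _ haT]
        ring
      · refine ⟨insert a T, H, K, ?_, hK, ?_⟩
        · intro t ht
          rcases Finset.mem_insert.1 ht with rfl | ht
          · exact ha
          · exact hT t ht
        · rw [hGe, Finset.prod_insert haT]
          ring
    · push Not at h
      exact ⟨∅, 1, F, by simp, h, by simp⟩

lemma aux_pick (H : ℝ[X]) (hH : H ≠ 0) (a b : ℝ) (hab : a < b) :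
    ∃ x ∈ Set.Ioo a b, H.eval x ≠ 0 := by
  by_contra h
  push Not at h
  refine (Set.Ioo_infinite hab) ((H.roots.toFinset.finite_toSet).subset ?_)
  intro x hx
  simpa [hH] using h x hx

lemma aux_sign (F V H : ℝ[X]) (t : ℝ) (hF : F = (X - C t) * V * H ^ 2) (hH : H ≠ 0)
    (hV : V.eval t ≠ 0) : SignChangeAt F t := by
  intro δ hδ
  have hpos : 0 < V.eval t * V.eval t := mul_self_pos.2 hV
  have hcont : ContinuousAt (fun x => V.eval t * V.eval x) t := by fun_prop
  obtain ⟨ε, hε, hb⟩ := Metric.eventually_nhds_iff.1 (hcont.eventually (lt_mem_nhds hpos))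
  have hm : 0 < min δ ε := lt_min hδ hε
  obtain ⟨x, hx, hx0⟩ := aux_pick H hH (t - min δ ε) t (by linarith)
  obtain ⟨y, hy, hy0⟩ := aux_pick H hH t (t + min δ ε) (by linarith)
  have h1 := min_le_left δ ε
  have h2 := min_le_right δ ε
  refine ⟨x, ⟨by linarith [hx.1], hx.2⟩, y, ⟨hy.1, by linarith [hy.2]⟩, ?_⟩
  have hVx := hb (y := x) (by rw [Real.dist_eq, abs_lt]; constructor <;> linarith [hx.1, hx.2])
  have hVy := hb (y := y) (by rw [Real.dist_eq, abs_lt]; constructor <;> linarith [hy.1, hy.2])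
  have hVxy : 0 < V.eval x * V.eval y := by
    have h3 := mul_pos hVx hVy
    have : V.eval t * V.eval x * (V.eval t * V.eval y)
      = (V.eval t * V.eval t) * (V.eval x * V.eval y) := by ring
    rw [this] at h3
    exact (pos_iff_pos_of_mul_pos h3).1 hpos
  have hxy : 0 < (t - x) * (y - t) := mul_pos (by linarith [hx.2]) (by linarith [hy.1])
  have hHH : 0 < (H.eval x * H.eval y) ^ 2 := by positivity
  have := mul_pos (mul_pos hxy hVxy) hHH
  rw [hF]
  simp only [eval_mul, eval_sub, eval_X, eval_C, eval_pow]
  nlinarith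

lemma aux_const_sign (K : ℝ[X]) (hK : ∀ x ∈ Set.Ioo (-1:ℝ) 1, K.eval x ≠ 0) :
    (∀ x ∈ Set.Icc (-1:ℝ) 1, 0 ≤ K.eval x) ∨ (∀ x ∈ Set.Icc (-1:ℝ) 1, K.eval x ≤ 0) := by
  have hcl : closure (Set.Ioo (-1:ℝ) 1) = Set.Icc (-1:ℝ) 1 := closure_Ioo (by norm_num)
  have hK0 := hK 0 (by norm_num)
  have hpre := (isPreconnected_Ioo (a := (-1:ℝ)) (b := 1)).image (fun x => K.eval x)
    K.continuous.continuousOn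
  rw [← hcl]
  rcases lt_or_gt_of_ne hK0 with h | h
  · right
    have : Set.Ioo (-1:ℝ) 1 ⊆ {x | K.eval x ≤ 0} := by
      intro x hx
      by_contra hx'
      simp only [Set.mem_setOf_eq, not_le] at hx'
      obtain ⟨z, hz, hz0⟩ := hpre.ordConnected.out (Set.mem_image_of_mem _ (by norm_num))
        (Set.mem_image_of_mem _ hx) (⟨h.le, hx'.le⟩ : (0:ℝ) ∈ Set.Icc (K.eval 0) (K.eval x))
      exact hK z hz hz0
    exact fun x hx => (isClosed_le K.continuous continuous_const).closure_subset_iff.2 this hx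
  · left
    have : Set.Ioo (-1:ℝ) 1 ⊆ {x | 0 ≤ K.eval x} := by
      intro x hx
      by_contra hx'
      simp only [Set.mem_setOf_eq, not_le] at hx'
      obtain ⟨z, hz, hz0⟩ := hpre.ordConnected.out (Set.mem_image_of_mem _ hx)
        (Set.mem_image_of_mem _ (by norm_num))
        (⟨hx'.le, h.le⟩ : (0:ℝ) ∈ Set.Icc (K.eval x) (K.eval 0))
      exact hK z hz hz0
    exact fun x hx => (isClosed_le continuous_const K.continuous).closure_subset_iff.2 this hx

lemma aux_integrable (μ : Measure ℝ) [IsFiniteMeasure μ] (p : ℝ[X]) :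
    IntegrableOn (fun x => p.eval x) (Set.Icc (-1:ℝ) 1) μ :=
  p.continuous.continuousOn.integrableOn_compact isCompact_Icc

lemma aux_int_ne (μ : Measure ℝ) [IsFiniteMeasure μ]
    (hμinf : ∀ p : Polynomial ℝ, p ≠ 0 → 0 < ∫ x in Set.Icc (-1:ℝ) 1, (p.eval x) ^ 2 ∂μ)
    (F : ℝ[X]) (hF : F ≠ 0) (h : ∀ x ∈ Set.Icc (-1:ℝ) 1, 0 ≤ F.eval x) :
    ∫ x in Set.Icc (-1:ℝ) 1, F.eval x ∂μ ≠ 0 := by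
  intro h0
  have h1 := (setIntegral_eq_zero_iff_of_nonneg_ae
    ((ae_restrict_iff' measurableSet_Icc).2 (Eventually.of_forall h)) (aux_integrable μ F)).1 h0
  have h2 : ∫ x in Set.Icc (-1:ℝ) 1, (F.eval x) ^ 2 ∂μ = 0 := by
    rw [integral_eq_zero_of_ae]
    filter_upwards [h1] with x hx
    simp only [Pi.zero_apply] at hx
    simp [hx]
  exact absurd h2 (hμinf F hF).ne'

lemma aux_orth (μ : Measure ℝ) [IsFiniteMeasure μ] {N : ℕ} (c : Fin N → ℝ) (d : Fin N → ℕ)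
    (η : Fin N → ℝ) (S : ℝ[X]) (n : ℕ) (h : ∀ m < n, sobInner μ c d η (X ^ m) S = 0)
    (Q : ℝ[X]) (hQ : Q.natDegree < n) : sobInner μ c d η Q S = 0 := by
  let L : ℝ[X] →ₗ[ℝ] ℝ :=
    { toFun := fun f => sobInner μ c d η f S
      map_add' := by
        intro f g
        have hf := aux_integrable μ (f * S)
        have hg := aux_integrable μ (g * S)
        simp only [eval_mul] at hf hg
        simp only [sobInner, eval_add, add_mul, iterate_map_add, mul_add, Finset.sum_add_distrib]
        rw [integral_add hf hg]
        ring
      map_smul' := by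
        intro r f
        simp only [sobInner, eval_smul, smul_eq_mul, RingHom.id_apply, mul_add, Finset.mul_sum,
          iterate_derivative_smul, mul_assoc, integral_const_mul]
        congr 1
        exact Finset.sum_congr rfl fun j _ => by ring }
  change L Q = 0
  rw [Q.as_sum_range_C_mul_X_pow, map_sum]
  refine Finset.sum_eq_zero fun i hi => ?_
  rw [← smul_eq_C_mul, map_smul]
  have : L (X ^ i) = 0 := h i (by have := Finset.mem_range.1 hi; omega)
  rw [this, smul_zero]


/-- If the discrete Sobolev inner product is sequentially-ordered,
then for every `n` the Sobolev orthogonal polynomial `S n` has at least `n - N`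
changes of sign on `(-1, 1)`. -/
theorem statement0
    (μ : Measure ℝ) [IsFiniteMeasure μ]
    (hμsupp : μ (Set.Icc (-1:ℝ) 1)ᶜ = 0)
    (hμinf : ∀ p : Polynomial ℝ, p ≠ 0 → 0 < ∫ x in Set.Icc (-1:ℝ) 1, (p.eval x) ^ 2 ∂μ)
    {N : ℕ} (c : Fin N → ℝ) (d : Fin N → ℕ)
    (hc : ∀ j, c j ∉ Set.Icc (-1:ℝ) 1)
    (η : Fin N → ℝ) (hη : ∀ j, 0 < η j)
    (hseq : SeqOrdered c d)
    (S : ℕ → Polynomial ℝ)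
    (hSmonic : ∀ n, (S n).Monic) (hSdeg : ∀ n, (S n).natDegree = n)
    (hSorth : ∀ n, ∀ m < n, sobInner μ c d η (X ^ m) (S n) = 0)
    (n : ℕ) :
    ∃ T : Finset ℝ, n - N ≤ T.card ∧
      ∀ t ∈ T, t ∈ Set.Ioo (-1:ℝ) 1 ∧ SignChangeAt (S n) t := by
  obtain ⟨T, H, K, hT, hK, hS⟩ := aux_decomp (S n).natDegree (S n) (hSmonic n).ne_zero le_rfl
  have hS0 : S n ≠ 0 := (hSmonic n).ne_zero
  have hH : H ≠ 0 := by
    rintro rfl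
    exact hS0 (by rw [hS]; simp)
  refine ⟨T, ?_, fun t ht => ⟨hT t ht, ?_⟩⟩
  swap
  · refine aux_sign (S n) ((∏ s ∈ T.erase t, (X - C s)) * K) H t ?_ hH ?_
    · rw [hS, ← Finset.mul_prod_erase T _ ht]
      ring
    · rw [eval_mul, eval_prod]
      refine mul_ne_zero (Finset.prod_ne_zero_iff.2 fun s hs => ?_) (hK t (hT t ht))
      simp only [eval_sub, eval_X, eval_C]
      exact sub_ne_zero.2 (Finset.ne_of_mem_erase hs).symm
  by_contra hlt
  have hlt' : T.card + N < n := by omega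
  let P : ℕ → Prop := fun D => ∃ Q : ℝ[X], Q ≠ 0 ∧ Q.natDegree = D ∧ (∀ t ∈ T, Q.eval t = 0) ∧
      ∀ j, (derivative^[d j] Q).eval (c j) = 0
  obtain ⟨Q1, hQ1, hQ1d, hQ1T, hQ1c⟩ := aux_exists c d T (T.card + N + 1) (by
    have := Finset.card_filter_le (Finset.univ : Finset (Fin N)) (fun j => d j < T.card + N + 1)
    rw [Finset.card_univ, Fintype.card_fin] at this
    omega)
  have hex : ∃ D, P D := ⟨_, Q1, hQ1, rfl, hQ1T, hQ1c⟩
  obtain ⟨Q, hQ, hQd, hQT, hQc⟩ := Nat.find_spec hex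
  have hmin : ∀ Q' : ℝ[X], Q' ≠ 0 → (∀ t ∈ T, Q'.eval t = 0) →
      (∀ j, (derivative^[d j] Q').eval (c j) = 0) → Q.natDegree ≤ Q'.natDegree := by
    intro Q' h1 h2 h3
    rw [hQd]
    exact Nat.find_min' hex ⟨Q', h1, rfl, h2, h3⟩
  have hQdeg : Q.natDegree < n := by
    have := hmin Q1 hQ1 hQ1T hQ1c
    omega
  have hdvd : ∏ t ∈ T, (X - C t) ∣ Q := by
    refine Finset.prod_dvd_of_coprime ?_ ?_
    · intro a _ b _ hab
      exact pairwise_coprime_X_sub_C Function.injective_id hab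
    · intro t ht
      exact dvd_iff_isRoot.2 (hQT t ht)
  obtain ⟨R, hR⟩ := hdvd
  have hRroot : ∀ x ∈ Set.Ioo (-1:ℝ) 1, R.eval x ≠ 0 := by
    intro a ha ha0
    have hcount : T.card + 1 ≤ N0 Q (Set.Ioo (-1:ℝ) 1) := by
      obtain ⟨R', hR'⟩ := dvd_iff_isRoot.2 (show R.IsRoot a from ha0)
      have hle : (a ::ₘ T.val) ≤ Q.roots := by
        rw [← Multiset.prod_X_sub_C_dvd_iff_le_roots hQ]
        refine ⟨R', ?_⟩
        rw [Multiset.map_cons, Multiset.prod_cons, hR, hR']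
        change _ = (X - C a) * (∏ t ∈ T, (X - C t)) * R'
        ring
      have h2 := Multiset.card_le_card
        (Multiset.filter_le_filter (fun x => x ∈ Set.Ioo (-1:ℝ) 1) hle)
      rw [Multiset.filter_eq_self.2] at h2
      · simpa [N0] using h2
      · intro x hx
        rcases Multiset.mem_cons.1 hx with rfl | hx
        · exact ha
        · exact hT x hx
    have hkey := aux_key c d hseq Q hQ hQc
    obtain ⟨Q2, h1, h2, h3, h4⟩ := aux_exists c d T Q.natDegree (by
      have : (Finset.univ.filter (fun j => d j < Q.natDegree)).card ≤
        (Finset.univ.filter (fun j => d j ≤ Q.natDegree)).card :=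
        Finset.card_le_card (Finset.monotone_filter_right _ fun j _ hj => le_of_lt hj)
      omega)
    have := hmin Q2 h1 h3 h4
    omega
  have hfac : Q * S n = ((∏ t ∈ T, (X - C t)) * H) ^ 2 * (K * R) := by
    rw [hS, hR]; ring
  have h0 := aux_orth μ c d η (S n) n (hSorth n) Q hQdeg
  have hint : ∫ x in Set.Icc (-1:ℝ) 1, (Q * S n).eval x ∂μ = 0 := by
    simpa [sobInner, hQc] using h0
  have hne : Q * S n ≠ 0 := mul_ne_zero hQ hS0
  rcases aux_const_sign (K * R) (fun x hx => by
    rw [eval_mul]; exact mul_ne_zero (hK x hx) (hRroot x hx)) with h | h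
  · refine aux_int_ne μ hμinf (Q * S n) hne (fun x hx => ?_) hint
    rw [hfac, eval_mul, eval_pow]
    exact mul_nonneg (sq_nonneg _) (h x hx)
  · refine aux_int_ne μ hμinf (-(Q * S n)) (neg_ne_zero.2 hne) (fun x hx => ?_) ?_
    · rw [hfac, eval_neg, eval_mul, eval_pow]
      exact neg_nonneg.2 (mul_nonpos_of_nonneg_of_nonpos (sq_nonneg _) (h x hx))
    · simp only [eval_neg]
      rw [integral_neg, hint, neg_zero]

end
end

section
/- Extended Markov's Theorem: if the discrete Sobolev inner product ⟨·,·⟩ is sequentially-ordered and μ belongs to the Nevai class M(0,1), then for every k ≥ 1 the rational functions R_n^{[k]} = S_n^{[k]}/S_{n+k} converge, uniformly on every compact subset of Ω_∞* = (ℂ̄ ∖ [−1,1]) ∖ {c_1,…,c_N}, to the kth Markov-type function μ̂_k(z) = ∫_{−1}^{1} Q_{k−1}(x)/(z−x) dμ_ρ(x) as n → ∞. -/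
open MeasureTheory Polynomial Filter
open scoped Classical

noncomputable section

lemma aux_integrable_cont (μ : Measure ℝ) [IsFiniteMeasure μ] {E : Type*} [NormedAddCommGroup E]
    {f : ℝ → E} (hf : ContinuousOn f (Set.Icc (-1:ℝ) 1)) :
    Integrable f (μ.restrict (Set.Icc (-1:ℝ) 1)) :=
  hf.integrableOn_compact isCompact_Icc

lemma aux_integrable_poly (μ : Measure ℝ) [IsFiniteMeasure μ] (p : ℝ[X]) :
    Integrable (fun x => p.eval x) (μ.restrict (Set.Icc (-1:ℝ) 1)) :=
  aux_integrable_cont μ p.continuous.continuousOn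

/-- integration of polynomials as a linear functional -/
def LI (μ : Measure ℝ) [IsFiniteMeasure μ] : ℝ[X] →ₗ[ℝ] ℝ where
  toFun p := ∫ x in Set.Icc (-1:ℝ) 1, p.eval x ∂μ
  map_add' p q := by
    simp only [eval_add]
    exact integral_add (aux_integrable_poly μ p) (aux_integrable_poly μ q)
  map_smul' r p := by
    simp only [eval_smul, smul_eq_mul, RingHom.id_apply]
    exact integral_const_mul r _

lemma LI_apply (μ : Measure ℝ) [IsFiniteMeasure μ] (p : ℝ[X]) :
    LI μ p = ∫ x in Set.Icc (-1:ℝ) 1, p.eval x ∂μ := rfl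

lemma LI_mono (μ : Measure ℝ) [IsFiniteMeasure μ] {p q : ℝ[X]}
    (h : ∀ x ∈ Set.Icc (-1:ℝ) 1, p.eval x ≤ q.eval x) : LI μ p ≤ LI μ q :=
  setIntegral_mono_on (aux_integrable_poly μ p) (aux_integrable_poly μ q) measurableSet_Icc h

lemma LI_nonneg (μ : Measure ℝ) [IsFiniteMeasure μ] {p : ℝ[X]}
    (h : ∀ x ∈ Set.Icc (-1:ℝ) 1, 0 ≤ p.eval x) : 0 ≤ LI μ p := by
  have := LI_mono μ (p := 0) (q := p) (by simpa using h)
  simpa using this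

/-- positivity of the measure on polynomials -/
def PosM (μ : Measure ℝ) [IsFiniteMeasure μ] : Prop := ∀ p : ℝ[X], p ≠ 0 → 0 < LI μ (p ^ 2)

lemma lin_zero (Λ : ℝ[X] →ₗ[ℝ] ℝ) {n : ℕ} (h : ∀ m < n, Λ (X ^ m) = 0) {f : ℝ[X]}
    (hf : f.degree < n) : Λ f = 0 := by
  rcases eq_or_ne f 0 with rfl | h0
  · simp
  have hn : f.natDegree < n := (natDegree_lt_iff_degree_lt h0).2 hf
  rw [f.as_sum_range_C_mul_X_pow, map_sum]
  refine Finset.sum_eq_zero fun i hi => ?_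
  rw [← smul_eq_C_mul, map_smul, h i (by rw [Finset.mem_range] at hi; omega), smul_zero]

/-- `P` is orthogonal to polynomials of degree less than `n` -/
def Orth (μ : Measure ℝ) [IsFiniteMeasure μ] (P : ℝ[X]) (n : ℕ) : Prop :=
  ∀ f : ℝ[X], f.degree < n → LI μ (f * P) = 0

lemma orth_of_pow (μ : Measure ℝ) [IsFiniteMeasure μ] {P : ℝ[X]} {n : ℕ}
    (h : ∀ m < n, (∫ x in Set.Icc (-1:ℝ) 1, x ^ m * P.eval x ∂μ) = 0) : Orth μ P n := by
  intro f hf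
  refine lin_zero ((LI μ).comp (LinearMap.mulRight ℝ P)) (n := n) ?_ hf
  intro m hm
  simpa [LI_apply] using h m hm

lemma orth_roots (μ : Measure ℝ) [IsFiniteMeasure μ] (hpos : PosM μ) {P : ℝ[X]} {n : ℕ}
    (hm : P.Monic) (hd : P.natDegree = n) (ho : Orth μ P n) :
    P.roots.card = n ∧ P.roots.Nodup ∧ ∀ y ∈ P.roots, -1 < y ∧ y < 1 := by
  have hP0 : P ≠ 0 := hm.ne_zero
  have degV : ∀ V W : ℝ[X], P = W * V → 1 ≤ W.natDegree → V ≠ 0 ∧ V.degree < n := by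
    intro V W h h1
    have hV : V ≠ 0 := by rintro rfl; simp at h; exact hP0 h
    have hW : W ≠ 0 := by rintro rfl; simp at h; exact hP0 h
    refine ⟨hV, ?_⟩
    rw [← natDegree_lt_iff_degree_lt hV, ← hd, h, natDegree_mul hW hV]; omega
  have key : ∀ V W : ℝ[X], P = W * V → 1 ≤ W.natDegree → LI μ (V * (W * V)) = 0 := by
    intro V W h h1
    have := ho V (degV V W h h1).2
    rwa [h] at this
  have hsplit : P.Splits := by
    by_contra hns
    have hC : ∃ z : ℂ, aeval z P = 0 ∧ z.im ≠ 0 := by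
      by_contra hcon
      push Not at hcon
      apply hns
      have h1 : (P.map (algebraMap ℝ ℂ)).Splits := IsAlgClosed.splits _
      refine Splits.of_splits_map_of_injective (algebraMap ℝ ℂ).injective h1 ?_
      intro z hz
      have hz0 : aeval z P = 0 := by
        have := isRoot_of_mem_roots hz
        rwa [IsRoot, eval_map, ← aeval_def] at this
      exact ⟨z.re, by apply Complex.ext <;> simp [hcon z hz0]⟩
    obtain ⟨z, hz, him⟩ := hC
    obtain ⟨V, hV⟩ := P.quadratic_dvd_of_aeval_eq_zero_im_ne_zero hz him
    set W : ℝ[X] := X ^ 2 - C (2 * z.re) * X + C (‖z‖ ^ 2) with hW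
    have hWd : W.natDegree = 2 := by rw [hW]; compute_degree!
    have hWd1 : 1 ≤ W.natDegree := by omega
    have k1 := key V W hV hWd1
    have hV0 := (degV V W hV hWd1).1
    have : V * (W * V) = ((X - C z.re) * V) ^ 2 + C (z.im ^ 2) * V ^ 2 := by
      have : ‖z‖ ^ 2 = z.re ^ 2 + z.im ^ 2 := by rw [← Complex.normSq_eq_norm_sq, Complex.normSq_apply]; ring
      rw [hW, this]
      simp only [map_add, map_mul, map_pow]
      have : (C 2 : ℝ[X]) = 2 := rfl
      rw [this]; ring
    rw [this, map_add, ← smul_eq_C_mul, map_smul] at k1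
    have h2 := hpos V hV0
    have h3 : 0 ≤ LI μ (((X - C z.re) * V) ^ 2) := LI_nonneg μ (fun x _ => by rw [eval_pow]; positivity)
    have : 0 < z.im ^ 2 := by positivity
    rw [smul_eq_mul] at k1
    have := mul_pos this h2
    linarith
  have hnd : P.roots.Nodup := by
    rw [Multiset.nodup_iff_count_le_one]
    intro a
    by_contra hcon
    rw [count_roots] at hcon
    have : 2 ≤ P.rootMultiplicity a := by omega
    rw [le_rootMultiplicity_iff hP0] at this
    obtain ⟨V, hV⟩ := this
    have h1 : 1 ≤ ((X - C a) ^ 2).natDegree := by rw [natDegree_pow, natDegree_X_sub_C]; norm_num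
    have k1 := key V _ hV h1
    have : V * ((X - C a) ^ 2 * V) = ((X - C a) * V) ^ 2 := by ring
    rw [this] at k1
    exact absurd k1 (hpos _ (mul_ne_zero (X_sub_C_ne_zero a) (degV V _ hV h1).1)).ne'
  refine ⟨?_, hnd, ?_⟩
  · rw [← hd]; exact hsplit.natDegree_eq_card_roots.symm
  · intro y hy
    have hr := isRoot_of_mem_roots hy
    obtain ⟨V, hV⟩ := dvd_iff_isRoot.2 hr
    have h1 : 1 ≤ (X - C y : ℝ[X]).natDegree := by rw [natDegree_X_sub_C]
    have k1 := key V _ hV h1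
    have hV0 := (degV V _ hV h1).1
    constructor
    · by_contra hcon
      push Not at hcon
      have hle : LI μ (((X - C (-1)) * V) ^ 2) ≤ LI μ (C 2 * (V * ((X - C y) * V))) := by
        refine LI_mono μ fun x hx => ?_
        simp only [eval_pow, eval_mul, eval_sub, eval_X, eval_C]
        have : (x - -1) ^ 2 ≤ 2 * (x - y) := by nlinarith [hx.1, hx.2]
        nlinarith [sq_nonneg (V.eval x), mul_le_mul_of_nonneg_right this (sq_nonneg (V.eval x))]
      rw [← smul_eq_C_mul, map_smul, k1, smul_zero] at hle
      exact absurd hle (not_le.2 (hpos _ (mul_ne_zero (X_sub_C_ne_zero _) hV0)))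
    · by_contra hcon
      push Not at hcon
      have hle : LI μ (((X - C 1) * V) ^ 2) ≤ LI μ (C (-2) * (V * ((X - C y) * V))) := by
        refine LI_mono μ fun x hx => ?_
        simp only [eval_pow, eval_mul, eval_sub, eval_X, eval_C]
        have : (x - 1) ^ 2 ≤ -2 * (x - y) := by nlinarith [hx.1, hx.2]
        nlinarith [sq_nonneg (V.eval x), mul_le_mul_of_nonneg_right this (sq_nonneg (V.eval x))]
      rw [← smul_eq_C_mul, map_smul, k1, smul_zero] at hle
      exact absurd hle (not_le.2 (hpos _ (mul_ne_zero (X_sub_C_ne_zero _) hV0)))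

/-- sorted nodes -/
structure Nodes (P : ℝ[X]) (n : ℕ) (y : ℕ → ℝ) : Prop where
  prod : P = ∏ i ∈ Finset.range n, (X - C (y i))
  lo : ∀ i < n, -1 < y i
  hi : ∀ i < n, y i < 1
  last : y n = 1
  inc : ∀ i j, i < j → j ≤ n → y i < y j

lemma exists_nodes (μ : Measure ℝ) [IsFiniteMeasure μ] (hpos : PosM μ) {P : ℝ[X]} {n : ℕ}
    (hm : P.Monic) (hd : P.natDegree = n) (ho : Orth μ P n) : ∃ y, Nodes P n y := by
  obtain ⟨h1, h2, h3⟩ := orth_roots μ hpos hm hd ho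
  have hcard : P.roots.toFinset.card = n := by rw [Multiset.toFinset_card_of_nodup h2, h1]
  set e := P.roots.toFinset.orderEmbOfFin hcard with he
  set y : ℕ → ℝ := fun i => if h : i < n then e ⟨i, h⟩ else 1 with hy
  have hyi : ∀ i (h : i < n), y i = e ⟨i, h⟩ := fun i h => by simp [hy, h]
  have hmem : ∀ i (h : i < n), y i ∈ P.roots := fun i h => by
    rw [hyi i h, ← Multiset.mem_toFinset]; exact Finset.orderEmbOfFin_mem _ _ _
  refine ⟨y, ?_, fun i h => (h3 _ (hmem i h)).1, fun i h => (h3 _ (hmem i h)).2, by simp [hy], ?_⟩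
  · have := prod_multiset_X_sub_C_of_monic_of_roots_card_eq hm (by rw [h1, hd])
    conv_lhs => rw [← this]
    have e2 : P.roots = P.roots.toFinset.val := by rw [Multiset.toFinset_val, h2.dedup]
    rw [e2, ← Finset.prod_eq_multiset_prod, Finset.prod_range]
    rw [← Finset.image_orderEmbOfFin_univ P.roots.toFinset hcard, Finset.prod_image]
    · exact Finset.prod_congr rfl fun i _ => by rw [hyi i i.2]
    · intro a _ b _ hab; exact e.injective hab
  · intro i j hij hj
    rcases hj.eq_or_lt with rfl | hj
    · have : y j = 1 := by simp [hy]
      rw [this]; exact (h3 _ (hmem i hij)).2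
    · rw [hyi i (hij.trans hj), hyi j hj]
      exact e.strictMono hij

lemma quadrature (μ : Measure ℝ) [IsFiniteMeasure μ] (hpos : PosM μ) {P : ℝ[X]} {n : ℕ} {y : ℕ → ℝ}
    (hm : P.Monic) (hd : P.natDegree = n) (ho : Orth μ P n) (hy : Nodes P n y) :
    ∃ w : ℕ → ℝ, (∀ i < n, 0 < w i) ∧ ∀ f : ℝ[X], f.degree < (2 * n : ℕ) →
      LI μ f = ∑ i ∈ Finset.range n, w i * f.eval (y i) := by
  have hinj : Set.InjOn y (Finset.range n : Set ℕ) := by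
    intro i hi j hj h
    simp only [Finset.coe_range, Set.mem_Iio] at hi hj
    rcases lt_trichotomy i j with h1 | h1 | h1
    · exact absurd h (hy.inc i j h1 hj.le).ne
    · exact h1
    · exact absurd h (hy.inc j i h1 hi.le).ne'
  set ℓ := fun i => Lagrange.basis (Finset.range n) y i with hl
  have main : ∀ f : ℝ[X], f.degree < (2 * n : ℕ) →
      LI μ f = ∑ i ∈ Finset.range n, LI μ (ℓ i) * f.eval (y i) := by
    intro f hf
    have h1 : LI μ ((f /ₘ P) * P) = 0 := by
      apply ho
      rcases eq_or_ne (f /ₘ P) 0 with h0 | h0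
      · rw [h0, degree_zero]; exact WithBot.bot_lt_coe _
      rw [← natDegree_lt_iff_degree_lt h0, natDegree_divByMonic _ hm, hd]
      have hf0 : f ≠ 0 := by rintro rfl; simp at h0
      have := (natDegree_lt_iff_degree_lt hf0).2 hf
      by_contra hh
      have h5 : n = 0 := by omega
      omega
    have h2 : f %ₘ P = Lagrange.interpolate (Finset.range n) y (fun i => f.eval (y i)) := by
      refine Lagrange.eq_interpolate_of_eval_eq _ hinj ?_ ?_
      · rw [Finset.card_range, ← hd, ← degree_eq_natDegree hm.ne_zero]
        exact degree_modByMonic_lt _ hm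
      · intro i hi
        have : P.eval (y i) = 0 := by
          rw [hy.prod, eval_prod]; exact Finset.prod_eq_zero hi (by simp)
        conv_rhs => rw [← modByMonic_add_div f P]
        simp [this]
    have h3 : f = f %ₘ P + (f /ₘ P) * P := by
      conv_lhs => rw [← modByMonic_add_div f P]
      ring
    have h4 : LI μ f = LI μ (f %ₘ P) := by
      conv_lhs => rw [h3]
      rw [map_add, h1, add_zero]
    rw [h4, h2, Lagrange.interpolate_apply, map_sum]
    refine Finset.sum_congr rfl fun i _ => ?_
    rw [← smul_eq_C_mul, map_smul, smul_eq_mul, mul_comm]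
  refine ⟨fun i => LI μ (ℓ i), ?_, main⟩
  intro i hi
  have hi' : i ∈ Finset.range n := Finset.mem_range.2 hi
  have hl0 : ℓ i ≠ 0 := Lagrange.basis_ne_zero hinj hi'
  have h1 := hpos (ℓ i) hl0
  rw [main] at h1
  · have h2 : ∑ j ∈ Finset.range n, LI μ (ℓ j) * eval (y j) (ℓ i ^ 2) = LI μ (ℓ i) := by
      rw [Finset.sum_eq_single i]
      · rw [eval_pow, Lagrange.eval_basis_self hinj hi']; simp
      · intro j hj hji
        rw [eval_pow, Lagrange.eval_basis_of_ne hji.symm hj]; simp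
      · intro h; exact absurd hi' h
    rwa [h2] at h1
  · rw [← natDegree_lt_iff_degree_lt (pow_ne_zero 2 hl0), natDegree_pow]
    have h4 : (ℓ i).degree = ((n - 1 : ℕ) : WithBot ℕ) := by
      rw [Lagrange.degree_basis hinj hi', Finset.card_range]
    rw [natDegree_eq_of_degree_eq_some h4]; omega

lemma rolle_filter (p : ℝ[X]) (I : Set ℝ) (hI : I.OrdConnected) :
    (p.roots.filter (· ∈ I)).card ≤ ((derivative p).roots.filter (· ∈ I)).card + 1 := by
  rcases eq_or_ne (derivative p) 0 with hp' | hp'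
  · rw [eq_C_of_derivative_eq_zero hp', roots_C]; simp
  have hp : p ≠ 0 := ne_of_apply_ne derivative (by rwa [derivative_zero])
  set A := p.roots.filter (· ∈ I) with hA
  set B := (derivative p).roots.filter (· ∈ I) with hB
  have hcA : ∀ x ∈ I, A.count x = p.rootMultiplicity x := fun x hx => by
    rw [hA, Multiset.count_filter_of_pos hx, count_roots]
  have hcB : ∀ x ∈ I, B.count x = (derivative p).rootMultiplicity x := fun x hx => by
    rw [hB, Multiset.count_filter_of_pos hx, count_roots]
  have hAI : ∀ x ∈ A.toFinset, x ∈ I := fun x hx => by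
    rw [Multiset.mem_toFinset] at hx; exact (Multiset.mem_filter.1 hx).2
  have inter : A.toFinset.card ≤ (B.toFinset \ A.toFinset).card + 1 := by
    refine Finset.card_le_sdiff_of_interleaved fun x hx y hy hxy hxy' => ?_
    have hxI := hAI x hx
    have hyI := hAI y hy
    rw [Multiset.mem_toFinset, hA, Multiset.mem_filter, mem_roots hp] at hx hy
    obtain ⟨z, hz1, hz2⟩ := exists_deriv_eq_zero hxy p.continuousOn (hx.1.trans hy.1.symm)
    refine ⟨z, ?_, hz1⟩
    rw [Multiset.mem_toFinset, hB, Multiset.mem_filter, mem_roots hp']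
    refine ⟨by rwa [IsRoot, ← p.deriv], hI.out hxI hyI ⟨hz1.1.le, hz1.2.le⟩⟩
  calc
    A.card = ∑ x ∈ A.toFinset, A.count x := (Multiset.toFinset_sum_count_eq _).symm
    _ = ∑ x ∈ A.toFinset, (A.count x - 1 + 1) :=
      (Eq.symm <| Finset.sum_congr rfl fun _ hx => tsub_add_cancel_of_le <|
        Nat.succ_le_iff.2 <| Multiset.count_pos.2 <| Multiset.mem_toFinset.1 hx)
    _ = (∑ x ∈ A.toFinset, (A.count x - 1)) + A.toFinset.card := by
      simp only [Finset.sum_add_distrib, Finset.card_eq_sum_ones]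
    _ ≤ (∑ x ∈ A.toFinset, B.count x) + ((B.toFinset \ A.toFinset).card + 1) := by
      refine add_le_add (Finset.sum_le_sum fun x hx => ?_) inter
      rw [hcA x (hAI x hx), hcB x (hAI x hx)]
      exact rootMultiplicity_sub_one_le_derivative_rootMultiplicity _ _
    _ ≤ (∑ x ∈ A.toFinset, B.count x) + ((∑ x ∈ B.toFinset \ A.toFinset, B.count x) + 1) := by
      simp only [Finset.card_eq_sum_ones]
      gcongr with x hx
      rw [Nat.succ_le_iff, Multiset.count_pos, ← Multiset.mem_toFinset]
      exact (Finset.mem_sdiff.1 hx).1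
    _ = B.card + 1 := by
      rw [← add_assoc, ← Finset.sum_union Finset.disjoint_sdiff, Finset.union_sdiff_self_eq_union, ←
        Multiset.toFinset_sum_count_eq, ← Finset.sum_subset Finset.subset_union_right]
      intro x _ hx₂
      simpa only [Multiset.mem_toFinset, Multiset.count_eq_zero] using hx₂

lemma seq_injective {N : ℕ} {c : Fin N → ℝ} {d : Fin N → ℕ} (hseq : SeqOrdered c d) :
    Function.Injective c := by
  have : ∀ i j : Fin N, i < j → c i ≠ c j := by
    intro i j hij h
    apply hseq.2 j
    apply subset_convexHull
    right
    exact ⟨i, hij, h⟩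
  intro i j h
  rcases lt_trichotomy i j with h1 | h1 | h1
  · exact absurd h (this i j h1)
  · exact h1
  · exact absurd h.symm (this j i h1)

/-- auxiliary hull -/
def hullT {N : ℕ} (c : Fin N → ℝ) (d : Fin N → ℕ) (t : ℕ) : Set ℝ :=
  convexHull ℝ (Set.Ioo (-1:ℝ) 1 ∪ c '' {j : Fin N | d j < t})

lemma seq_count {N : ℕ} {c : Fin N → ℝ} {d : Fin N → ℕ} (hseq : SeqOrdered c d)
    {p : ℝ[X]} (hcond : ∀ j, (derivative^[d j] p).eval (c j) = 0) (t : ℕ)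
    (ht : t ≤ p.natDegree) (hp : p ≠ 0) :
    (p.roots.filter (· ∈ Set.Ioo (-1:ℝ) 1)).card + (Finset.univ.filter (fun j => d j < t)).card ≤
      ((derivative^[t] p).roots.filter (· ∈ hullT c d t)).card + t := by
  induction t with
  | zero =>
    have : hullT c d 0 = Set.Ioo (-1:ℝ) 1 := by
      simp [hullT, (convex_Ioo (-1:ℝ) 1).convexHull_eq]
    simp [this]
  | succ t ih =>
    have ih := ih (by omega)
    set f := derivative^[t] p with hf
    have hf0 : f ≠ 0 := by
      intro h
      have h2 := coeff_iterate_derivative (k := t) p (p.natDegree - t)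
      rw [← hf, h, Nat.sub_add_cancel (by omega), coeff_zero] at h2
      have h3 : p.natDegree.descFactorial t ≠ 0 := by
        rw [Ne, Nat.descFactorial_eq_zero_iff_lt]; omega
      have h4 : (p.natDegree.descFactorial t : ℝ) ≠ 0 := by exact_mod_cast h3
      rw [nsmul_eq_mul] at h2
      rcases mul_eq_zero.1 h2.symm with h5 | h5
      · exact h4 h5
      · exact hp (leadingCoeff_eq_zero.1 h5)
    have hsub : hullT c d t ⊆ hullT c d (t+1) := by
      apply convexHull_mono
      apply Set.union_subset_union_right
      apply Set.image_mono
      intro j hj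
      simp only [Set.mem_ofPred_eq] at hj ⊢; omega
    have h1 : (f.roots.filter (· ∈ hullT c d t)).card + (Finset.univ.filter (fun j => d j = t)).card
        ≤ (f.roots.filter (· ∈ hullT c d (t+1))).card := by
      rw [← Multiset.filter_add_not (· ∈ hullT c d t) (f.roots.filter (· ∈ hullT c d (t+1))),
        Multiset.card_add, Multiset.filter_filter, Multiset.filter_filter]
      refine add_le_add (le_of_eq ?_) ?_
      · congr 1
        apply Multiset.filter_congr
        intro x _
        exact ⟨fun h => ⟨h, hsub h⟩, fun h => h.1⟩
      · rw [← Finset.card_image_of_injective _ (seq_injective hseq), ← Finset.card_val]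
        apply Multiset.card_le_card
        rw [Multiset.le_iff_subset (Finset.nodup _)]
        intro x hx
        simp only [Finset.mem_val, Finset.mem_image, Finset.mem_filter, Finset.mem_univ, true_and] at hx
        obtain ⟨j, hj, rfl⟩ := hx
        rw [Multiset.mem_filter, mem_roots hf0]
        refine ⟨?_, ?_, ?_⟩
        · have := hcond j
          rwa [hj] at this
        · intro hmem
          apply hseq.2 j
          refine convexHull_mono ?_ hmem
          apply Set.union_subset_union_right
          apply Set.image_mono
          intro i hi
          simp only [Set.mem_ofPred_eq] at hi ⊢
          by_contra hij
          have := hseq.1 j i (not_lt.1 hij)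
          omega
        · apply subset_convexHull
          right
          exact ⟨j, by simp only [Set.mem_ofPred_eq]; omega, rfl⟩
    have h2 := rolle_filter f (hullT c d (t+1)) (convex_convexHull ℝ _).ordConnected
    have h3 : (Finset.univ.filter (fun j => d j < t + 1)).card =
        (Finset.univ.filter (fun j => d j < t)).card + (Finset.univ.filter (fun j => d j = t)).card := by
      rw [← Finset.card_union_of_disjoint]
      · congr 1; ext j; simp; omega
      · rw [Finset.disjoint_filter]; intro j _ h; omega
    rw [Function.iterate_succ_apply', h3, ← hf]
    omega

lemma seq_count_final {N : ℕ} {c : Fin N → ℝ} {d : Fin N → ℕ} (hseq : SeqOrdered c d)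
    {p : ℝ[X]} (hcond : ∀ j, (derivative^[d j] p).eval (c j) = 0) (hp : p ≠ 0) :
    (p.roots.filter (· ∈ Set.Ioo (-1:ℝ) 1)).card +
      (Finset.univ.filter (fun j => d j < p.natDegree)).card ≤ p.natDegree := by
  have h := seq_count hseq hcond p.natDegree le_rfl hp
  have h2 : (derivative^[p.natDegree] p).natDegree = 0 := by
    have := natDegree_iterate_derivative p p.natDegree
    omega
  have h3 : ((derivative^[p.natDegree] p).roots.filter (· ∈ hullT c d p.natDegree)).card = 0 := by
    have h4 := card_roots' (derivative^[p.natDegree] p)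
    have h5 := Multiset.card_le_card (Multiset.filter_le (· ∈ hullT c d p.natDegree) (derivative^[p.natDegree] p).roots)
    omega
  omega

/-- evaluation map used for the dimension count -/
lemma dim_count {N l s : ℕ} (c : Fin N → ℝ) (d : Fin N → ℕ) (m : Fin l → ℝ)
    (h : ∀ p : ℝ[X], p.degree < s → (∀ i, p.eval (m i) = 0) →
      (∀ j, (derivative^[d j] p).eval (c j) = 0) → p = 0) :
    s ≤ l + (Finset.univ.filter (fun j => d j < s)).card := by
  let ev : ℝ → (ℝ[X] →ₗ[ℝ] ℝ) := fun a => leval a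
  let F : ℝ[X] →ₗ[ℝ] ((Fin l ⊕ {j : Fin N // d j < s}) → ℝ) :=
    LinearMap.pi (fun a => match a with
      | Sum.inl i => leval (m i)
      | Sum.inr j => (leval (c j)).comp (derivative ^ (d j)))
  have hinj : Function.Injective (F.comp (degreeLT ℝ s).subtype) := by
    rw [← LinearMap.ker_eq_bot, LinearMap.ker_eq_bot']
    rintro ⟨p, hp⟩ hF
    rw [mem_degreeLT] at hp
    have h1 : p = 0 := by
      refine h p hp (fun i => ?_) (fun j => ?_)
      · exact congrFun hF (Sum.inl i)
      · by_cases hj : d j < s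
        · have := congrFun hF (Sum.inr ⟨j, hj⟩)
          simpa [F, Module.End.pow_apply] using this
        · have : derivative^[d j] p = 0 := by
            rcases eq_or_ne p 0 with rfl | hp0
            · simp
            apply iterate_derivative_eq_zero
            have := (natDegree_lt_iff_degree_lt hp0).2 hp
            omega
          rw [this]; simp
    exact Subtype.ext h1
  have h2 := LinearMap.finrank_le_finrank_of_injective hinj
  rw [Module.finrank_fintype_fun_eq_card, Fintype.card_sum, Fintype.card_fin,
    Fintype.card_subtype] at h2
  have h3 : Module.finrank ℝ (degreeLT ℝ s) = s := by
    rw [LinearEquiv.finrank_eq (degreeLTEquiv ℝ s)]; simp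
  omega

lemma exists_p {N l : ℕ} {c : Fin N → ℝ} {d : Fin N → ℕ} (hseq : SeqOrdered c d) (m : Fin l → ℝ) :
    ∃ p : ℝ[X], p ≠ 0 ∧ p.natDegree ≤ l + N ∧ (∀ i, p.eval (m i) = 0) ∧
      (∀ j, (derivative^[d j] p).eval (c j) = 0) ∧
      (p.roots.filter (· ∈ Set.Ioo (-1:ℝ) 1)).card ≤ l := by
  have hex : ∃ s, ∃ p : ℝ[X], p ≠ 0 ∧ p.natDegree = s ∧ (∀ i, p.eval (m i) = 0) ∧
      (∀ j, (derivative^[d j] p).eval (c j) = 0) := by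
    by_contra hcon
    push Not at hcon
    have := dim_count (s := l + N + 1) c d m (by
      intro p _ h1 h2
      by_contra h0
      obtain ⟨j, hj⟩ := hcon _ p h0 rfl h1
      exact hj (h2 j))
    have h2 := Finset.card_le_univ (Finset.univ.filter (fun j => d j < l + N + 1))
    rw [Fintype.card_fin] at h2
    omega
  obtain ⟨p, hp0, hps, hm, hc⟩ := Nat.find_spec hex
  have h1 := dim_count (s := Nat.find hex) c d m (by
      intro q hq h1 h2
      by_contra h0
      have := (natDegree_lt_iff_degree_lt h0).2 hq
      exact Nat.find_min hex this ⟨q, h0, rfl, h1, h2⟩)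
  have h2 := Finset.card_le_univ (Finset.univ.filter (fun j => d j < Nat.find hex))
  rw [Fintype.card_fin] at h2
  have h3 := seq_count_final hseq hc hp0
  rw [hps] at h3
  exact ⟨p, hp0, by omega, hm, hc, by omega⟩

/-- sign with carry -/
def sgn (S : ℝ[X]) (y : ℕ → ℝ) : ℕ → ℝ
  | 0 => if S.eval (y 0) < 0 then -1 else 1
  | (i+1) => if S.eval (y (i+1)) < 0 then -1 else if 0 < S.eval (y (i+1)) then 1 else sgn S y i

lemma sgn_pm (S : ℝ[X]) (y : ℕ → ℝ) (i : ℕ) : sgn S y i = 1 ∨ sgn S y i = -1 := by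
  induction i with
  | zero => rw [sgn]; split_ifs <;> simp
  | succ i ih => rw [sgn]; split_ifs <;> simp [ih]

lemma sgn_mul (S : ℝ[X]) (y : ℕ → ℝ) (i : ℕ) : sgn S y i * S.eval (y i) = |S.eval (y i)| := by
  cases i with
  | zero =>
    rw [sgn]; split_ifs with h
    · rw [abs_of_neg h]; ring
    · rw [abs_of_nonneg (not_lt.1 h)]; ring
  | succ i =>
    rw [sgn]; split_ifs with h h2
    · rw [abs_of_neg h]; ring
    · rw [abs_of_pos h2]; ring
    · have : S.eval (y (i+1)) = 0 := le_antisymm (not_lt.1 h2) (not_lt.1 h)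
      rw [this]; simp

lemma ivt_root (S : ℝ[X]) {a b : ℝ} (hab : a < b) (h : S.eval a * S.eval b < 0) :
    ∃ x, a < x ∧ x < b ∧ S.eval x = 0 := by
  have ha : S.eval a ≠ 0 := by rintro h1; rw [h1] at h; simp at h
  have hb : S.eval b ≠ 0 := by rintro h1; rw [h1] at h; simp at h
  have h0 : (0:ℝ) ∈ Set.uIcc (S.eval a) (S.eval b) := by
    rcases mul_neg_iff.1 h with h1 | h1
    · exact Set.mem_uIcc.2 (Or.inr ⟨h1.2.le, h1.1.le⟩)
    · exact Set.mem_uIcc.2 (Or.inl ⟨h1.1.le, h1.2.le⟩)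
  obtain ⟨x, hx, hx0⟩ := intermediate_value_uIcc (S.continuous.continuousOn (s := Set.uIcc a b)) h0
  rw [Set.uIcc_of_le hab.le] at hx
  refine ⟨x, lt_of_le_of_ne hx.1 ?_, lt_of_le_of_ne hx.2 ?_, hx0⟩
  · rintro rfl; exact ha hx0
  · rintro rfl; exact hb hx0

lemma sgn_change_root (S : ℝ[X]) (y : ℕ → ℝ) (i : ℕ) (hy : y i < y (i+1))
    (h : sgn S y (i+1) ≠ sgn S y i) : ∃ x, S.eval x = 0 ∧ y i ≤ x ∧ x < y (i+1) := by
  by_cases h0 : S.eval (y i) = 0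
  · exact ⟨y i, h0, le_rfl, hy⟩
  have h1 : S.eval (y (i+1)) ≠ 0 := by
    intro h1
    apply h
    rw [sgn]; simp [h1]
  have h2 : S.eval (y i) * S.eval (y (i+1)) < 0 := by
    have e1 := sgn_mul S y i
    have e2 := sgn_mul S y (i+1)
    have p1 : 0 < |S.eval (y i)| := abs_pos.2 h0
    have p2 : 0 < |S.eval (y (i+1))| := abs_pos.2 h1
    rw [← e1] at p1
    rw [← e2] at p2
    rcases sgn_pm S y i with a | a <;> rcases sgn_pm S y (i+1) with b | b <;> rw [a] at p1 h <;>
      rw [b] at p2 h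
    · exact absurd rfl h
    · nlinarith
    · nlinarith
    · exact absurd rfl h
  obtain ⟨x, a, b, e⟩ := ivt_root S hy h2
  exact ⟨x, e, a.le, b⟩

lemma cells (μ : Measure ℝ) [IsFiniteMeasure μ] (hpos : PosM μ) {N : ℕ} {c : Fin N → ℝ} {d : Fin N → ℕ}
    (hseq : SeqOrdered c d) {P S : ℝ[X]} {n : ℕ} {y : ℕ → ℝ}
    (hm : P.Monic) (hd : P.natDegree = n) (ho : Orth μ P n) (hy : Nodes P n y)
    (hSd : S.natDegree = n)
    (hS : ∀ p : ℝ[X], p.degree < n → (∀ j, (derivative^[d j] p).eval (c j) = 0) → LI μ (p * S) = 0) :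
    ∃ J ⊆ Finset.range n, n ≤ J.card + N ∧
      ∃ x : ℕ → ℝ, ∀ i ∈ J, S.eval (x i) = 0 ∧ y i ≤ x i ∧ x i < y (i+1) := by
  by_cases hall : ∀ i < n, S.eval (y i) = 0
  · refine ⟨Finset.range n, subset_rfl, by simp, y, fun i hi => ?_⟩
    rw [Finset.mem_range] at hi
    exact ⟨hall i hi, le_rfl, hy.inc i (i+1) (by omega) (by omega)⟩
  push Not at hall
  obtain ⟨k₀, hk₀, hSk₀⟩ := hall
  set J := (Finset.range (n-1)).filter (fun i => sgn S y (i+1) ≠ sgn S y i) with hJ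
  have hJn : ∀ i ∈ J, i + 1 < n ∧ sgn S y (i+1) ≠ sgn S y i := by
    intro i hi
    rw [hJ, Finset.mem_filter, Finset.mem_range] at hi
    exact ⟨by omega, hi.2⟩
  have hx : ∀ i, ∃ x, i ∈ J → S.eval x = 0 ∧ y i ≤ x ∧ x < y (i+1) := by
    intro i
    by_cases hi : i ∈ J
    · obtain ⟨x, hx⟩ := sgn_change_root S y i (hy.inc i (i+1) (by omega) (hJn i hi).1.le) (hJn i hi).2
      exact ⟨x, fun _ => hx⟩
    · exact ⟨0, fun h => absurd h hi⟩
  choose x hx using hx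
  refine ⟨J, ?_, ?_, x, hx⟩
  · intro i hi; rw [Finset.mem_range]; have := (hJn i hi).1; omega
  by_contra hcon
  push Not at hcon
  set mid : ℕ → ℝ := fun i => (y i + y (i+1)) / 2 with hmid
  have hmid1 : ∀ i ∈ J, y i < mid i ∧ mid i < y (i+1) := by
    intro i hi
    have := hy.inc i (i+1) (by omega) (hJn i hi).1.le
    simp only [hmid]; constructor <;> linarith
  have hyle : ∀ i j, i ≤ j → j ≤ n → y i ≤ y j := by
    intro i j hij hj
    rcases hij.eq_or_lt with rfl | h
    · exact le_rfl
    · exact (hy.inc i j h hj).le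
  have hmidI : ∀ i ∈ J, mid i ∈ Set.Ioo (-1:ℝ) 1 := by
    intro i hi
    have h1 := hmid1 i hi
    have h2 := hJn i hi
    have h3 := hy.lo i (by omega)
    have h4 := hy.hi (i+1) (by omega)
    constructor <;> linarith
  have hmidinj : Set.InjOn mid J := by
    intro i hi j hj hij
    have h1 := hmid1 i hi
    have h2 := hmid1 j hj
    rcases lt_trichotomy i j with h | h | h
    · have := hyle (i+1) j (by omega) (by have := (hJn j hj).1; omega)
      linarith
    · exact h
    · have := hyle (j+1) i (by omega) (by have := (hJn i hi).1; omega)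
      linarith
  obtain ⟨p, hp0, hpd, hpm, hpc, hpr⟩ := exists_p hseq (fun i : Fin J.card => mid (J.equivFin.symm i))
  have hpm' : ∀ i ∈ J, p.eval (mid i) = 0 := by
    intro i hi
    have := hpm (J.equivFin ⟨i, hi⟩)
    simpa using this
  set M := ∏ i ∈ J, (X - C (mid i)) with hM
  have hMd : M ∣ p := by
    refine Finset.prod_dvd_of_coprime ?_ (fun i hi => dvd_iff_isRoot.2 (hpm' i hi))
    intro i hi j hj hij
    exact isCoprime_X_sub_C_of_isUnit_sub (by
      rw [isUnit_iff_ne_zero, sub_ne_zero]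
      intro h; exact hij (hmidinj hi hj h))
  obtain ⟨g, hg⟩ := hMd
  have hMm : M.Monic := monic_prod_of_monic _ _ fun i _ => monic_X_sub_C _
  have hg0 : g ≠ 0 := by rintro rfl; simp at hg; exact hp0 hg
  have hgroot : ∀ t ∈ Set.Ioo (-1:ℝ) 1, g.eval t ≠ 0 := by
    intro t ht h
    have hr : p.roots = M.roots + g.roots := by
      rw [hg, roots_mul (by rw [← hg]; exact hp0)]
    have hMr : M.roots = J.val.map mid := by
      rw [hM]
      have := roots_multiset_prod_X_sub_C (J.val.map mid)
      rwa [Multiset.map_map] at this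
    rw [hr, Multiset.filter_add, Multiset.card_add] at hpr
    have h1 : (M.roots.filter (· ∈ Set.Ioo (-1:ℝ) 1)) = M.roots := by
      rw [Multiset.filter_eq_self, hMr]
      intro a ha
      rw [Multiset.mem_map] at ha
      obtain ⟨i, hi, rfl⟩ := ha
      exact hmidI i hi
    rw [h1, hMr, Multiset.card_map, Finset.card_val] at hpr
    have h2 : t ∈ g.roots.filter (· ∈ Set.Ioo (-1:ℝ) 1) := by
      rw [Multiset.mem_filter, mem_roots hg0]; exact ⟨h, ht⟩
    have h3 := Multiset.card_pos_iff_exists_mem.2 ⟨t, h2⟩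
    omega
  have hgpos : ∀ a b, a < b → a ∈ Set.Ioo (-1:ℝ) 1 → b ∈ Set.Ioo (-1:ℝ) 1 → 0 < g.eval a * g.eval b := by
    intro a b hab ha hb
    by_contra hn
    have h1 : g.eval a * g.eval b < 0 := lt_of_le_of_ne (not_lt.1 hn) (mul_ne_zero (hgroot a ha) (hgroot b hb))
    obtain ⟨t, h2, h3, h4⟩ := ivt_root g hab h1
    exact hgroot t ⟨by linarith [ha.1], by linarith [hb.2]⟩ h4
  have hyI : ∀ k < n, y k ∈ Set.Ioo (-1:ℝ) 1 := fun k hk => ⟨hy.lo k hk, hy.hi k hk⟩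
  have hMstep : ∀ k, k + 1 < n → 0 < (sgn S y k * sgn S y (k+1)) * (M.eval (y k) * M.eval (y (k+1))) := by
    intro k hk
    have e : M.eval (y k) * M.eval (y (k+1)) = ∏ i ∈ J, ((y k - mid i) * (y (k+1) - mid i)) := by
      rw [hM, eval_prod, eval_prod, ← Finset.prod_mul_distrib]; simp
    have hother : ∀ i ∈ J, i ≠ k → 0 < (y k - mid i) * (y (k+1) - mid i) := by
      intro i hi hik
      have h1 := hmid1 i hi
      have h2 := (hJn i hi).1
      rcases lt_or_gt_of_ne hik with h | h
      · have := hyle (i+1) k (by omega) (by omega)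
        have h4 := hyle k (k+1) (by omega) (by omega)
        exact mul_pos (by linarith) (by linarith)
      · have := hyle (k+1) i (by omega) (by omega)
        have h4 := hyle k (k+1) (by omega) (by omega)
        exact mul_pos_of_neg_of_neg (by linarith) (by linarith)
    rw [e]
    by_cases hkJ : k ∈ J
    · have h1 : sgn S y k * sgn S y (k+1) = -1 := by
        have := (hJn k hkJ).2
        rcases sgn_pm S y k with a | a <;> rcases sgn_pm S y (k+1) with b | b <;> rw [a, b] at this ⊢ <;> simp at this ⊢
      rw [h1, ← Finset.mul_prod_erase J _ hkJ]
      have h2 : 0 < ∏ i ∈ J.erase k, ((y k - mid i) * (y (k+1) - mid i)) :=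
        Finset.prod_pos fun i hi => hother i (Finset.mem_of_mem_erase hi) (Finset.ne_of_mem_erase hi)
      have h3 := hmid1 k hkJ
      have h4 : (y k - mid k) * (y (k+1) - mid k) < 0 := mul_neg_of_neg_of_pos (by linarith) (by linarith)
      nlinarith
    · have h1 : sgn S y k * sgn S y (k+1) = 1 := by
        have : sgn S y (k+1) = sgn S y k := by
          by_contra hne
          apply hkJ
          rw [hJ, Finset.mem_filter, Finset.mem_range]
          exact ⟨by omega, hne⟩
        rw [this]
        rcases sgn_pm S y k with a | a <;> rw [a] <;> norm_num
      rw [h1, one_mul]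
      exact Finset.prod_pos fun i hi => hother i hi (by rintro rfl; exact hkJ hi)
  set T : ℕ → ℝ := fun k => sgn S y k * p.eval (y k) with hT
  have hTstep : ∀ k, k + 1 < n → 0 < T k * T (k+1) := by
    intro k hk
    have h1 := hMstep k hk
    have h2 := hgpos (y k) (y (k+1)) (hy.inc k (k+1) (by omega) (by omega)) (hyI k (by omega)) (hyI (k+1) hk)
    have := mul_pos h1 h2
    simp only [hT, hg, eval_mul]
    linarith
  have hT0 : T 0 ≠ 0 := by
    have hn0 : 0 < n := by omega
    simp only [hT, hg, eval_mul]
    refine mul_ne_zero ?_ (mul_ne_zero ?_ (hgroot _ (hyI 0 hn0)))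
    · rcases sgn_pm S y 0 with a | a <;> rw [a] <;> norm_num
    · rw [hM, eval_prod, Finset.prod_ne_zero_iff]
      intro i hi
      have h1 := hmid1 i hi
      have := hyle 0 i (by omega) (by have := (hJn i hi).1; omega)
      simp only [eval_sub, eval_X, eval_C]
      intro h; linarith
  have hTpos : ∀ k < n, 0 < T 0 * T k := by
    intro k
    induction k with
    | zero => intro _; exact mul_self_pos.2 hT0
    | succ k ih =>
      intro hk
      have h1 := mul_pos (ih (by omega)) (hTstep k hk)
      have h2 : T 0 * T k * (T k * T (k+1)) = (T 0 * T (k+1)) * (T k) ^ 2 := by ring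
      rw [h2] at h1
      exact pos_of_mul_pos_left h1 (sq_nonneg _)
  obtain ⟨w, hw, hquad⟩ := quadrature μ hpos hm hd ho hy
  have hpdn : p.degree < n := by rw [← natDegree_lt_iff_degree_lt hp0]; omega
  have hS0 : S ≠ 0 := by rintro rfl; simp at hSk₀
  have hz := hS p hpdn hpc
  rw [hquad _ (by
    rw [← natDegree_lt_iff_degree_lt (mul_ne_zero hp0 hS0), natDegree_mul hp0 hS0]; omega)] at hz
  have hz2 : ∑ i ∈ Finset.range n, w i * ((T 0 * T i) * |S.eval (y i)|) = 0 := by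
    have : ∀ i ∈ Finset.range n, w i * ((T 0 * T i) * |S.eval (y i)|) = T 0 * (w i * (p * S).eval (y i)) := by
      intro i _
      rw [← sgn_mul]
      have : sgn S y i * sgn S y i = 1 := by rcases sgn_pm S y i with a | a <;> rw [a] <;> norm_num
      simp only [hT, eval_mul]
      linear_combination (w i * (sgn S y 0 * eval (y 0) p) * eval (y i) p * eval (y i) S) * this
    rw [Finset.sum_congr rfl this, ← Finset.mul_sum, hz, mul_zero]
  rw [Finset.sum_eq_zero_iff_of_nonneg] at hz2
  · have h1 := hz2 k₀ (Finset.mem_range.2 hk₀)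
    have h2 : 0 < w k₀ * ((T 0 * T k₀) * |S.eval (y k₀)|) :=
      mul_pos (hw _ hk₀) (mul_pos (hTpos _ hk₀) (abs_pos.2 hSk₀))
    exact h2.ne' h1
  · intro i hi
    rw [Finset.mem_range] at hi
    exact mul_nonneg (hw _ hi).le (mul_nonneg (hTpos _ hi).le (abs_nonneg _))

/-- L2 norm of a polynomial -/
def nrm (μ : Measure ℝ) [IsFiniteMeasure μ] (p : ℝ[X]) : ℝ := Real.sqrt (LI μ (p ^ 2))

lemma nrm_pos (μ : Measure ℝ) [IsFiniteMeasure μ] (hpos : PosM μ) {p : ℝ[X]} (hp : p ≠ 0) :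
    0 < nrm μ p := Real.sqrt_pos.2 (hpos p hp)

lemma nrm_sq (μ : Measure ℝ) [IsFiniteMeasure μ] (hpos : PosM μ) {p : ℝ[X]} (hp : p ≠ 0) :
    nrm μ p ^ 2 = LI μ (p ^ 2) := Real.sq_sqrt (hpos p hp).le

/-- total mass plus one -/
def mass1 (μ : Measure ℝ) [IsFiniteMeasure μ] : ℝ := 1 + LI μ 1

lemma mass1_pos (μ : Measure ℝ) [IsFiniteMeasure μ] : 0 < mass1 μ := by
  have : 0 ≤ LI μ 1 := LI_nonneg μ (by simp)
  unfold mass1; linarith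

lemma int_bound (μ : Measure ℝ) [IsFiniteMeasure μ] (hpos : PosM μ) {p : ℝ[X]} (hp : p ≠ 0)
    {h : ℝ → ℂ} {A : ℝ} (hA : ∀ x ∈ Set.Icc (-1:ℝ) 1, ‖h x‖ ≤ A) (hA0 : 0 ≤ A) :
    ‖∫ x in Set.Icc (-1:ℝ) 1, ((p.eval x : ℝ) : ℂ) * h x ∂μ‖ ≤ A * mass1 μ * nrm μ p := by
  set s := nrm μ p with hs
  have hs0 : 0 < s := nrm_pos μ hpos hp
  set G : ℝ[X] := C (A * s⁻¹) * p ^ 2 + C (A * s) * 1 with hG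
  have h1 : ‖∫ x in Set.Icc (-1:ℝ) 1, ((p.eval x : ℝ) : ℂ) * h x ∂μ‖ ≤ LI μ G := by
    rw [LI_apply]
    refine norm_integral_le_of_norm_le (aux_integrable_poly μ G) ?_
    refine (ae_restrict_iff' measurableSet_Icc).2 (Eventually.of_forall fun x hx => ?_)
    rw [norm_mul, Complex.norm_real, Real.norm_eq_abs, hG]
    simp only [eval_add, eval_mul, eval_C, eval_pow, eval_one]
    have h2 : |p.eval x| ≤ s⁻¹ * (p.eval x) ^ 2 + s := by
      rw [← sq_abs (p.eval x)]
      set a := |p.eval x|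
      have : s * a ≤ a ^ 2 + s ^ 2 := by nlinarith [sq_nonneg (a - s), sq_nonneg a, sq_nonneg s]
      have h3 : a = s⁻¹ * (s * a) := by field_simp
      have h4 : s⁻¹ * a ^ 2 + s = s⁻¹ * (a ^ 2 + s ^ 2) := by field_simp
      rw [h4, h3]
      conv_rhs => rw [← h3]
      exact mul_le_mul_of_nonneg_left this (inv_pos.2 hs0).le
    calc |p.eval x| * ‖h x‖ ≤ (s⁻¹ * (p.eval x) ^ 2 + s) * A :=
          mul_le_mul h2 (hA x hx) (norm_nonneg _) (by positivity)
      _ = _ := by ring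
  refine h1.trans (le_of_eq ?_)
  rw [hG, map_add, ← smul_eq_C_mul, ← smul_eq_C_mul, map_smul, map_smul, ← nrm_sq μ hpos hp, ← hs]
  unfold mass1
  simp only [smul_eq_mul]
  field_simp

lemma orth_complex (μ : Measure ℝ) [IsFiniteMeasure μ] {P : ℝ[X]} {n : ℕ} (ho : Orth μ P n)
    (U : ℂ[X]) (hU : U.degree < n) :
    ∫ x in Set.Icc (-1:ℝ) 1, ((P.eval x : ℝ) : ℂ) * U.eval (x : ℂ) ∂μ = 0 := by
  rcases eq_or_ne U 0 with rfl | h0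
  · simp
  have hn := (natDegree_lt_iff_degree_lt h0).2 hU
  have h1 : ∀ x : ℝ, ((P.eval x : ℝ) : ℂ) * U.eval (x : ℂ) =
      ∑ i ∈ Finset.range n, U.coeff i * ((((X ^ i * P).eval x : ℝ)) : ℂ) := by
    intro x
    rw [eval_eq_sum_range' hn, Finset.mul_sum]
    refine Finset.sum_congr rfl fun i _ => ?_
    simp; ring
  simp_rw [h1]
  rw [integral_finsetSum]
  · refine Finset.sum_eq_zero fun i hi => ?_
    rw [integral_const_mul, integral_complex_ofReal, ← LI_apply, ho]
    · simp
    · rw [degree_X_pow]; exact_mod_cast Finset.mem_range.1 hi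
  · intro i _
    exact ((aux_integrable_poly μ (X ^ i * P)).ofReal).const_mul _

lemma seg_dist {z0 : ℂ} (hz : z0 ∉ segIcc) :
    ∃ u : ℂ, ‖u‖ = 1 ∧ ∃ c > 0, (∀ x ∈ Set.Icc (-1:ℝ) 1, c ≤ (u * (1 / (z0 - x))).re) ∧
      ∀ x ∈ Set.Icc (-1:ℝ) 1, c ≤ ‖z0 - x‖ := by
  have hne : ∀ x ∈ Set.Icc (-1:ℝ) 1, z0 - x ≠ 0 := by
    intro x hx h
    exact hz ⟨x, hx, (sub_eq_zero.1 h).symm⟩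
  -- find u
  have hu : ∃ u : ℂ, ‖u‖ = 1 ∧ ∀ x ∈ Set.Icc (-1:ℝ) 1, 0 < (u * (1 / (z0 - x))).re := by
    have aux : ∀ (u : ℂ) (x : ℝ), (u * (1 / (z0 - x))).re =
        (u.re * (z0.re - x) + u.im * z0.im) / Complex.normSq (z0 - x) := by
      intro u x
      simp [Complex.div_re, Complex.div_im, Complex.inv_re, Complex.inv_im]
      ring
    have hn : ∀ x ∈ Set.Icc (-1:ℝ) 1, 0 < Complex.normSq (z0 - x) := fun x hx =>
      Complex.normSq_pos.2 (hne x hx)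
    rcases lt_trichotomy z0.im 0 with h | h | h
    · refine ⟨-Complex.I, by simp, fun x hx => ?_⟩
      rw [aux]; refine div_pos ?_ (hn x hx); simp [h]
    · have : z0.re < -1 ∨ 1 < z0.re := by
        by_contra hcon
        push Not at hcon
        exact hz ⟨z0.re, hcon, by apply Complex.ext <;> simp [h]⟩
      rcases this with h1 | h1
      · refine ⟨-1, by simp, fun x hx => ?_⟩
        rw [aux]; refine div_pos ?_ (hn x hx); simp; linarith [hx.1]
      · refine ⟨1, by simp, fun x hx => ?_⟩
        rw [aux]; refine div_pos ?_ (hn x hx); simp; linarith [hx.2]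
    · refine ⟨Complex.I, by simp, fun x hx => ?_⟩
      rw [aux]; refine div_pos ?_ (hn x hx); simp [h]
  obtain ⟨u, hu1, hu2⟩ := hu
  have hcont0 : ContinuousOn (fun x : ℝ => z0 - (x:ℂ)) (Set.Icc (-1:ℝ) 1) := by fun_prop
  have hcont1 : ContinuousOn (fun x : ℝ => (u * (1 / (z0 - x))).re) (Set.Icc (-1:ℝ) 1) := by
    refine Complex.continuous_re.comp_continuousOn ?_
    exact continuousOn_const.mul (continuousOn_const.div hcont0 hne)
  have hne' : (Set.Icc (-1:ℝ) 1).Nonempty := ⟨0, by norm_num⟩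
  obtain ⟨x1, hx1, hm1⟩ := isCompact_Icc.exists_isMinOn hne' hcont1
  obtain ⟨x2, hx2, hm2⟩ := isCompact_Icc.exists_isMinOn hne' hcont0.norm
  refine ⟨u, hu1, min ((u * (1 / (z0 - x1))).re) ‖z0 - (x2:ℂ)‖,
    lt_min (hu2 x1 hx1) (norm_pos_iff.2 (hne x2 hx2)), ?_, ?_⟩
  · intro x hx; exact (min_le_left _ _).trans (hm1 hx)
  · intro x hx; exact (min_le_right _ _).trans (hm2 hx)

lemma weier {z0 : ℂ} (hz : z0 ∉ segIcc) {ε : ℝ} (hε : 0 < ε) :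
    ∃ t : ℂ[X], ∀ x ∈ Set.Icc (-1:ℝ) 1, ‖1 / (z0 - x) - t.eval (x : ℂ)‖ ≤ ε := by
  have hne : ∀ x ∈ Set.Icc (-1:ℝ) 1, z0 - x ≠ 0 := by
    intro x hx h
    exact hz ⟨x, hx, (sub_eq_zero.1 h).symm⟩
  have hcont0 : ContinuousOn (fun x : ℝ => 1 / (z0 - (x:ℂ))) (Set.Icc (-1:ℝ) 1) := by
    refine continuousOn_const.div ?_ hne
    fun_prop
  obtain ⟨p, hp⟩ := exists_polynomial_near_of_continuousOn (-1) 1 _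
    (Complex.continuous_re.comp_continuousOn hcont0) (ε/2) (by linarith)
  obtain ⟨q, hq⟩ := exists_polynomial_near_of_continuousOn (-1) 1 _
    (Complex.continuous_im.comp_continuousOn hcont0) (ε/2) (by linarith)
  refine ⟨p.map (algebraMap ℝ ℂ) + C Complex.I * q.map (algebraMap ℝ ℂ), fun x hx => ?_⟩
  have e : ∀ r : ℝ[X], (r.map (algebraMap ℝ ℂ)).eval (x:ℂ) = ((r.eval x : ℝ) : ℂ) := by
    intro r
    rw [eval_map]
    exact (hom_eval₂ r (RingHom.id ℝ) (algebraMap ℝ ℂ) x).symm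
  rw [eval_add, eval_mul, eval_C, e, e]
  refine (Complex.norm_le_abs_re_add_abs_im _).trans ?_
  have h1 := hp x hx
  have h2 := hq x hx
  rw [abs_sub_comm] at h1 h2
  have e1 : (1 / (z0 - (x:ℂ)) - (((p.eval x : ℝ):ℂ) + Complex.I * ((q.eval x : ℝ) : ℂ))).re =
    (1 / (z0 - (x:ℂ))).re - p.eval x := by
    rw [Complex.sub_re, Complex.add_re, Complex.mul_re]; simp
  have e2 : (1 / (z0 - (x:ℂ)) - (((p.eval x : ℝ):ℂ) + Complex.I * ((q.eval x : ℝ) : ℂ))).im =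
    (1 / (z0 - (x:ℂ))).im - q.eval x := by
    rw [Complex.sub_im, Complex.add_im, Complex.mul_im]; simp
  rw [e1, e2]
  simp only [Function.comp] at h1 h2
  linarith

lemma orth_second_kind (μ : Measure ℝ) [IsFiniteMeasure μ] {P : ℝ[X]} {n : ℕ} (hd : P.natDegree = n)
    (ho : Orth μ P n) {z : ℂ} (hz : ∀ x ∈ Set.Icc (-1:ℝ) 1, z - x ≠ 0) :
    aeval z P * ∫ x in Set.Icc (-1:ℝ) 1, ((P.eval x : ℝ) : ℂ) * (1 / (z - x)) ∂μ =
      ∫ x in Set.Icc (-1:ℝ) 1, ((P.eval x : ℝ) : ℂ) ^ 2 * (1 / (z - x)) ∂μ := by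
  set PC : ℂ[X] := P.map (algebraMap ℝ ℂ) with hPC
  set U := PC /ₘ (X - C z) with hU
  have hev : ∀ x : ℝ, PC.eval (x:ℂ) = ((P.eval x : ℝ) : ℂ) := by
    intro x
    rw [hPC, eval_map]
    exact (hom_eval₂ P (RingHom.id ℝ) (algebraMap ℝ ℂ) x).symm
  have hz' : PC.eval z = aeval z P := by rw [hPC, eval_map_algebraMap]
  have hdiv : ∀ x : ℝ, ((P.eval x : ℝ) : ℂ) = aeval z P + (x - z) * U.eval (x:ℂ) := by
    intro x
    have h := modByMonic_add_div PC (X - C z)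
    rw [modByMonic_X_sub_C_eq_C_eval] at h
    have h2 := congrArg (eval (x:ℂ)) h
    rw [hev] at h2
    rw [← h2, ← hz']
    simp [hU]
  have hUd : U.degree < n := by
    rcases eq_or_ne U 0 with h0 | h0
    · rw [h0, degree_zero]; exact WithBot.bot_lt_coe _
    rw [← natDegree_lt_iff_degree_lt h0, hU, natDegree_divByMonic _ (monic_X_sub_C z), natDegree_X_sub_C]
    have hPd : PC.natDegree = n := by
      rw [hPC, natDegree_map, hd]
    have : n ≠ 0 := by
      intro hn
      apply h0
      rw [hU, divByMonic_eq_zero_iff (monic_X_sub_C z), degree_X_sub_C]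
      rw [hn] at hPd
      exact lt_of_le_of_lt degree_le_natDegree (by rw [hPd]; norm_num)
    omega
  have h0 := orth_complex μ ho U hUd
  rw [← integral_const_mul, ← sub_eq_zero, ← integral_sub]
  · rw [← h0]
    refine setIntegral_congr_fun measurableSet_Icc fun x hx => ?_
    have h1 := hz x hx
    have h2 := hdiv x
    have h3 : aeval z P = ((P.eval x : ℝ) : ℂ) - (x - z) * U.eval (x:ℂ) := by rw [h2]; ring
    rw [h3]
    field_simp
    ring
  · refine aux_integrable_cont μ (continuousOn_const.mul (ContinuousOn.mul ?_ (continuousOn_const.div ?_ hz)))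
    · exact (Complex.continuous_ofReal.comp P.continuous).continuousOn
    · fun_prop
  · refine aux_integrable_cont μ (ContinuousOn.mul ?_ (continuousOn_const.div ?_ hz))
    · exact ((Complex.continuous_ofReal.comp P.continuous).pow 2).continuousOn
    · fun_prop

lemma P_lower (μ : Measure ℝ) [IsFiniteMeasure μ] (hpos : PosM μ) {P : ℕ → ℝ[X]}
    (hm : ∀ n, (P n).Monic) (hd : ∀ n, (P n).natDegree = n) (ho : ∀ n, Orth μ (P n) n)
    {z0 : ℂ} (hz : z0 ∉ segIcc) {ε : ℝ} (hε : 0 < ε) :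
    ∃ δ > 0, ∃ n0, ∀ n ≥ n0, ∀ z : ℂ, ‖z - z0‖ < δ → nrm μ (P n) ≤ ε * ‖aeval z (P n)‖ := by
  obtain ⟨u, hu1, c, hc, hcu, hcd⟩ := seg_dist hz
  have hmass := mass1_pos μ
  set ε' := ε * c / (4 * mass1 μ) with hε'
  have hε'0 : 0 < ε' := by positivity
  obtain ⟨t, ht⟩ := weier hz hε'0
  -- closeness
  set τ := min ε' (c / 2) with hτ
  have hτ0 : 0 < τ := lt_min hε'0 (by positivity)
  refine ⟨min (c / 2) (τ * (c ^ 2 / 2)), lt_min (by positivity) (by positivity), t.natDegree + 1, fun n hn z hzz => ?_⟩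
  have hz1 : ‖z - z0‖ < c / 2 := hzz.trans_le (min_le_left _ _)
  have hz2 : ‖z - z0‖ < τ * (c ^ 2 / 2) := hzz.trans_le (min_le_right _ _)
  have hlow : ∀ x ∈ Set.Icc (-1:ℝ) 1, c / 2 ≤ ‖z - x‖ := by
    intro x hx
    have h1 := hcd x hx
    have h2 : z0 - x = (z - x) - (z - z0) := by ring
    rw [h2] at h1
    have h3 := norm_sub_le (z - x) (z - z0)
    linarith
  have hne : ∀ x ∈ Set.Icc (-1:ℝ) 1, z - x ≠ 0 := by
    intro x hx h
    have := hlow x hx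
    rw [h, norm_zero] at this; linarith
  have hclose : ∀ x ∈ Set.Icc (-1:ℝ) 1, ‖1 / (z - x) - 1 / (z0 - x)‖ ≤ τ := by
    intro x hx
    have h1 := hcd x hx
    have h2 := hlow x hx
    have hne0 : z0 - x ≠ 0 := by intro h; rw [h, norm_zero] at h1; linarith
    have e : 1 / (z - x) - 1 / (z0 - x) = -(z - z0) / ((z - x) * (z0 - x)) := by
      have := hne x hx
      field_simp; ring
    rw [e, norm_div, norm_neg, norm_mul, div_le_iff₀ (mul_pos (norm_pos_iff.2 (hne x hx)) (norm_pos_iff.2 hne0))]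
    have : c ^ 2 / 2 ≤ ‖z - x‖ * ‖z0 - x‖ := by
      calc c ^ 2 / 2 = (c / 2) * c := by ring
        _ ≤ _ := mul_le_mul h2 h1 hc.le (norm_nonneg _)
    exact hz2.le.trans (mul_le_mul_of_nonneg_left this hτ0.le)
  have hre : ∀ x ∈ Set.Icc (-1:ℝ) 1, c / 2 ≤ (u * (1 / (z - x))).re := by
    intro x hx
    have h1 := hcu x hx
    have h2 : u * (1 / (z - x)) = u * (1 / (z0 - x)) + u * (1 / (z - x) - 1 / (z0 - x)) := by ring
    have h3 : ‖u * (1 / (z - x) - 1 / (z0 - x))‖ ≤ c / 2 := by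
      rw [norm_mul, hu1, one_mul]; exact (hclose x hx).trans (min_le_right _ _)
    have h4 := (abs_le.1 ((Complex.abs_re_le_norm _).trans h3)).1
    rw [h2, Complex.add_re]; linarith
  have hP0 := (hm n).ne_zero
  set s := nrm μ (P n) with hs
  have hs0 : 0 < s := nrm_pos μ hpos hP0
  set Ψ := ∫ x in Set.Icc (-1:ℝ) 1, (((P n).eval x : ℝ) : ℂ) * (1 / (z - x)) ∂μ with hΨ
  have hic : ContinuousOn (fun x : ℝ => (((P n).eval x : ℝ) : ℂ) * (1 / (z - x))) (Set.Icc (-1:ℝ) 1) := by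
    refine (ContinuousOn.mul ?_ (continuousOn_const.div ?_ hne))
    · exact (Complex.continuous_ofReal.comp (P n).continuous).continuousOn
    · fun_prop
  -- lower bound on the product
  have key := orth_second_kind μ (hd n) (ho n) hne
  have hlb : c / 2 * s ^ 2 ≤ ‖aeval z (P n) * Ψ‖ := by
    rw [hΨ, key]
    have h1 : (u * ∫ x in Set.Icc (-1:ℝ) 1, (((P n).eval x : ℝ) : ℂ) ^ 2 * (1 / (z - x)) ∂μ).re ≤
        ‖∫ x in Set.Icc (-1:ℝ) 1, (((P n).eval x : ℝ) : ℂ) ^ 2 * (1 / (z - x)) ∂μ‖ := by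
      refine (Complex.re_le_norm _).trans ?_
      rw [norm_mul, hu1, one_mul]
    refine le_trans ?_ h1
    have hint : ContinuousOn (fun x : ℝ => u * ((((P n).eval x : ℝ) : ℂ) ^ 2 * (1 / (z - x)))) (Set.Icc (-1:ℝ) 1) := by
      refine continuousOn_const.mul (ContinuousOn.mul ?_ (continuousOn_const.div ?_ hne))
      · exact ((Complex.continuous_ofReal.comp (P n).continuous).pow 2).continuousOn
      · fun_prop
    rw [← integral_const_mul]
    have h2 := integral_re (aux_integrable_cont μ hint) (𝕜 := ℂ)
    simp only [RCLike.re_to_complex] at h2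
    rw [← h2, hs, nrm_sq μ hpos hP0]
    have h3 : c / 2 * LI μ (P n ^ 2) = LI μ (C (c/2) * P n ^ 2) := by
      rw [← smul_eq_C_mul, map_smul, smul_eq_mul]
    rw [h3, LI_apply]
    refine setIntegral_mono_on (aux_integrable_poly μ _) ?_ measurableSet_Icc fun x hx => ?_
    · exact aux_integrable_cont μ (Complex.continuous_re.comp_continuousOn hint)
    · have h4 : u * ((((P n).eval x : ℝ) : ℂ) ^ 2 * (1 / (z - x))) =
          (((P n).eval x ^ 2 : ℝ) : ℂ) * (u * (1 / (z - x))) := by push_cast; ring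
      rw [h4, Complex.re_ofReal_mul, eval_mul, eval_C, eval_pow, mul_comm]
      exact mul_le_mul_of_nonneg_left (hre x hx) (sq_nonneg _)
  -- upper bound on Ψ
  have hub : ‖Ψ‖ ≤ 2 * ε' * mass1 μ * s := by
    have h0 : Ψ = ∫ x in Set.Icc (-1:ℝ) 1, (((P n).eval x : ℝ) : ℂ) * (1 / (z - x) - t.eval (x:ℂ)) ∂μ := by
      have h1 := orth_complex μ (ho n) t (lt_of_le_of_lt degree_le_natDegree (by exact_mod_cast hn))
      simp_rw [mul_sub]
      rw [integral_sub (aux_integrable_cont μ hic), h1, sub_zero]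
      refine aux_integrable_cont μ (Continuous.continuousOn ?_)
      exact (Complex.continuous_ofReal.comp (P n).continuous).mul (t.continuous.comp Complex.continuous_ofReal)
    rw [h0]
    refine int_bound μ hpos hP0 (fun x hx => ?_) (by positivity)
    have h2 := hclose x hx
    have h3 := ht x hx
    have h4 : 1 / (z - x) - t.eval (x:ℂ) = (1 / (z - x) - 1 / (z0 - x)) + (1 / (z0 - x) - t.eval (x:ℂ)) := by ring
    rw [h4]
    refine (norm_add_le _ _).trans ?_
    have := min_le_left ε' (c/2)
    linarith
  rw [norm_mul] at hlb
  have h5 : c / 2 * s ^ 2 ≤ ‖aeval z (P n)‖ * (2 * ε' * mass1 μ * s) :=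
    hlb.trans (mul_le_mul_of_nonneg_left hub (norm_nonneg _))
  have h6 : 2 * ε' * mass1 μ = ε * c / 2 := by rw [hε']; field_simp; ring
  rw [h6] at h5
  have h7 : (c / 2 * s) * s ≤ (c / 2 * s) * (ε * ‖aeval z (P n)‖) := by nlinarith
  exact le_of_mul_le_mul_left h7 (by positivity)

lemma factor_exists (μ : Measure ℝ) [IsFiniteMeasure μ] (hpos : PosM μ) {N : ℕ} {c : Fin N → ℝ} {d : Fin N → ℕ}
    (hseq : SeqOrdered c d) {P S : ℝ[X]} {n : ℕ}
    (hm : P.Monic) (hd : P.natDegree = n) (ho : Orth μ P n)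
    (hSm : S.Monic) (hSd : S.natDegree = n)
    (hS : ∀ p : ℝ[X], p.degree < n → (∀ j, (derivative^[d j] p).eval (c j) = 0) → LI μ (p * S) = 0) :
    ∃ s : Multiset ℝ, ∃ r : ℝ[X], S = (s.map fun t => X - C t).prod * r ∧ r.Monic ∧ r.natDegree ≤ N ∧
      (∀ t ∈ s, t ∈ Set.Icc (-1:ℝ) 1) ∧ n ≤ s.card + N ∧
      ∀ (z : ℂ) (δ R : ℝ), 0 < δ → 1 ≤ R → (∀ t ∈ Set.Icc (-1:ℝ) 1, δ ≤ ‖z - t‖) → ‖z‖ + 1 ≤ R →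
        ‖aeval z P‖ ≤ Real.exp (2 / δ) * R ^ N * ‖aeval z (s.map fun t => X - C t).prod‖ := by
  obtain ⟨y, hy⟩ := exists_nodes μ hpos hm hd ho
  obtain ⟨J, hJ, hJc, x, hx⟩ := cells μ hpos hseq hm hd ho hy hSd hS
  have hlt : ∀ i ∈ J, ∀ j ∈ J, i < j → x i < x j := by
    intro i hi j hj hij
    have h1 := (hx i hi).2.2
    have h2 := (hx j hj).2.1
    have hjn := Finset.mem_range.1 (hJ hj)
    have h3 : y (i+1) ≤ y j := by
      rcases eq_or_lt_of_le (Nat.succ_le_of_lt hij) with h | h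
      · exact le_of_eq (congrArg y h)
      · exact (hy.inc _ _ h hjn.le).le
    linarith
  have hinj : Set.InjOn x J := by
    intro i hi j hj h
    rcases lt_trichotomy i j with h' | h' | h'
    · exact absurd h (hlt i hi j hj h').ne
    · exact h'
    · exact absurd h (hlt j hj i hi h').ne'
  have hIcc : ∀ i ∈ J, x i ∈ Set.Icc (-1:ℝ) 1 := by
    intro i hi
    have hin := Finset.mem_range.1 (hJ hi)
    have h1 := hy.lo i hin
    have h2 : y (i+1) ≤ 1 := by
      rcases eq_or_lt_of_le (Nat.succ_le_of_lt hin) with h | h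
      · rw [← hy.last]; exact le_of_eq (congrArg y h)
      · exact (hy.hi _ h).le
    have h3 := hx i hi
    exact ⟨by linarith [h3.2.1], by linarith [h3.2.2]⟩
  set q : ℝ[X] := ∏ i ∈ J, (X - C (x i)) with hq
  have hqm : q.Monic := monic_prod_of_monic _ _ fun i _ => monic_X_sub_C _
  have hqd : q.natDegree = J.card := by
    rw [hq, natDegree_prod_of_monic _ _ fun i _ => monic_X_sub_C _]; simp
  have hdvd : q ∣ S := by
    refine Finset.prod_dvd_of_coprime ?_ fun i hi => dvd_iff_isRoot.2 (hx i hi).1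
    intro i hi j hj hij
    exact pairwise_coprime_X_sub_C (K := ℝ) (s := id) Function.injective_id (fun h => hij (hinj hi hj h))
  obtain ⟨r, hr⟩ := hdvd
  have hs : ((J.val.map x).map fun t => X - C t).prod = q := by
    rw [Multiset.map_map]; rfl
  have hrm : r.Monic := hqm.of_mul_monic_left (hr ▸ hSm)
  refine ⟨J.val.map x, r, by rw [hs]; exact hr, hrm, ?_, ?_, ?_, ?_⟩
  · have := hqm.natDegree_mul hrm
    rw [← hr, hSd, hqd] at this; omega
  · intro t ht
    obtain ⟨i, hi, rfl⟩ := Multiset.mem_map.1 ht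
    exact hIcc i hi
  · simpa using hJc
  intro z δ R hδ hR hzt hzR
  rw [hs]
  have e1 : ‖aeval z P‖ = ∏ i ∈ Finset.range n, ‖z - y i‖ := by
    rw [hy.prod, map_prod, norm_prod]; simp
  have e2 : ‖aeval z q‖ = ∏ i ∈ J, ‖z - x i‖ := by
    rw [hq, map_prod, norm_prod]; simp
  rw [e1, e2, ← Finset.prod_sdiff hJ]
  have h1 : ∏ i ∈ Finset.range n \ J, ‖z - y i‖ ≤ R ^ N := by
    calc _ ≤ ∏ i ∈ Finset.range n \ J, R := by
          refine Finset.prod_le_prod (fun i _ => norm_nonneg _) fun i hi => ?_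
          have hin := Finset.mem_range.1 (Finset.mem_sdiff.1 hi).1
          have : ‖((y i : ℝ):ℂ)‖ ≤ 1 := by
            rw [Complex.norm_real, Real.norm_eq_abs, abs_le]
            exact ⟨(hy.lo i hin).le, (hy.hi i hin).le⟩
          linarith [norm_sub_le z (y i : ℂ)]
      _ = R ^ (Finset.range n \ J).card := by simp
      _ ≤ R ^ N := by
          apply pow_le_pow_right₀ hR
          rw [Finset.card_sdiff_of_subset hJ, Finset.card_range]; omega
  have h2 : ∏ i ∈ J, ‖z - y i‖ ≤ Real.exp (2 / δ) * ∏ i ∈ J, ‖z - x i‖ := by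
    have h3 : ∏ i ∈ J, ‖z - y i‖ ≤ ∏ i ∈ J, (Real.exp ((y (i+1) - y i) / δ) * ‖z - x i‖) := by
      refine Finset.prod_le_prod (fun i _ => norm_nonneg _) fun i hi => ?_
      have h4 := hzt _ (hIcc i hi)
      have h5 := hx i hi
      have h6 : z - y i = (z - x i) + ((x i - y i : ℝ) : ℂ) := by push_cast; ring
      have h7 : ‖((x i - y i : ℝ) : ℂ)‖ = x i - y i := by
        rw [Complex.norm_real, Real.norm_eq_abs, abs_of_nonneg (by linarith [h5.2.1])]
      have h8 := norm_add_le (z - x i) ((x i - y i : ℝ) : ℂ)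
      rw [← h6, h7] at h8
      have h9 := Real.add_one_le_exp ((y (i+1) - y i) / δ)
      have h10 : x i - y i ≤ (y (i+1) - y i) / δ * ‖z - x i‖ := by
        rw [div_mul_eq_mul_div, le_div_iff₀ hδ]
        apply mul_le_mul (by linarith [h5.2.2]) h4 hδ.le (by linarith [h5.2.2, h5.2.1])
      have h11 := mul_le_mul_of_nonneg_right h9 (norm_nonneg (z - x i))
      linarith
    rw [Finset.prod_mul_distrib, ← Real.exp_sum] at h3
    refine h3.trans (mul_le_mul_of_nonneg_right (Real.exp_le_exp.2 ?_) (Finset.prod_nonneg fun i _ => norm_nonneg _))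
    rw [← Finset.sum_div]
    apply div_le_div_of_nonneg_right _ hδ.le
    calc ∑ i ∈ J, (y (i+1) - y i) ≤ ∑ i ∈ Finset.range n, (y (i+1) - y i) :=
          Finset.sum_le_sum_of_subset_of_nonneg hJ fun i hi _ => by
            linarith [hy.inc i (i+1) (Nat.lt_succ_self i) (Finset.mem_range.1 hi)]
      _ = y n - y 0 := Finset.sum_range_sub y n
      _ ≤ 2 := by
        rw [hy.last]
        rcases Nat.eq_zero_or_pos n with h | h
        · have := hy.last; rw [h] at this; linarith
        · linarith [hy.lo 0 h]
  calc _ ≤ R ^ N * (Real.exp (2 / δ) * ∏ i ∈ J, ‖z - x i‖) :=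
        mul_le_mul h1 h2 (Finset.prod_nonneg fun i _ => norm_nonneg _) (by positivity)
    _ = _ := by ring

lemma sub_deg_lt {f g : ℝ[X]} {n : ℕ} (hf : f.Monic) (hg : g.Monic) (hfn : f.natDegree = n)
    (hgn : g.natDegree = n) : (f - g).degree < n := by
  have hfd : f.degree = n := by rw [degree_eq_natDegree hf.ne_zero, hfn]
  have hgd : g.degree = n := by rw [degree_eq_natDegree hg.ne_zero, hgn]
  have h := degree_sub_lt_left (hfd.trans hgd.symm) hf.ne_zero (by rw [hf.leadingCoeff, hg.leadingCoeff])
  rwa [hfd] at h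

lemma norm_rec (μ : Measure ℝ) [IsFiniteMeasure μ] {P : ℕ → ℝ[X]} {a b : ℕ → ℝ}
    (hm : ∀ n, (P n).Monic) (hd : ∀ n, (P n).natDegree = n) (ho : ∀ n, Orth μ (P n) n)
    (hrec : ∀ n, P (n + 2) = (X - C (b (n + 1))) * P (n + 1) - C ((a (n + 1)) ^ 2) * P n) (n : ℕ) :
    LI μ (P (n+1) ^ 2) = a (n+1) ^ 2 * LI μ (P n ^ 2) := by
  have h1 : LI μ (P n * P (n+2)) = 0 := by
    apply ho
    rw [degree_eq_natDegree (hm n).ne_zero, hd n]; exact_mod_cast (by omega)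
  have h2 : LI μ (((X - C (b (n+1))) * P n - P (n+1)) * P (n+1)) = 0 := by
    apply ho
    refine sub_deg_lt ((monic_X_sub_C _).mul (hm n)) (hm _) ?_ (hd _)
    rw [(monic_X_sub_C _).natDegree_mul (hm n), natDegree_X_sub_C, hd]; omega
  have h3 : P n * P (n+2) = ((X - C (b (n+1))) * P n - P (n+1)) * P (n+1) + P (n+1)^2
      - (a (n+1)^2) • (P n ^2) := by
    rw [hrec, smul_eq_C_mul]; ring
  rw [h3, map_sub, map_add, h2, map_smul, smul_eq_mul] at h1
  linarith

lemma norm_shift (μ : Measure ℝ) [IsFiniteMeasure μ] {P : ℕ → ℝ[X]} {a b : ℕ → ℝ}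
    (hm : ∀ n, (P n).Monic) (hd : ∀ n, (P n).natDegree = n) (ho : ∀ n, Orth μ (P n) n)
    (hrec : ∀ n, P (n + 2) = (X - C (b (n + 1))) * P (n + 1) - C ((a (n + 1)) ^ 2) * P n)
    (ha : Tendsto a atTop (nhds (1 / 2))) (D : ℕ) :
    ∃ n0, ∀ m ≥ n0, LI μ (P m ^ 2) ≤ 9 ^ D * LI μ (P (m + D) ^ 2) := by
  obtain ⟨n0, hn0⟩ := eventually_atTop.1 (ha.eventually (lt_mem_nhds (show (1/3:ℝ) < 1/2 by norm_num)))
  refine ⟨n0, ?_⟩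
  induction D with
  | zero => intro m _; simp
  | succ D ih =>
    intro m hmn
    refine (ih m hmn).trans ?_
    rw [pow_succ (9:ℝ) D, mul_assoc]
    refine mul_le_mul_of_nonneg_left ?_ (by positivity)
    rw [← add_assoc, norm_rec μ hm hd ho hrec]
    have h1 := hn0 (m + D + 1) (by omega)
    have h2 : 0 ≤ LI μ (P (m+D)^2) := LI_nonneg μ fun x _ => by rw [eval_pow]; positivity
    have h3 : 1 ≤ 9 * a (m + D + 1) ^ 2 := by nlinarith
    nlinarith

/-- evaluation of a derivative as a linear functional -/
def dEv (k : ℕ) (t : ℝ) : ℝ[X] →ₗ[ℝ] ℝ := (leval t).comp (derivative ^ k)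

lemma dEv_apply (k : ℕ) (t : ℝ) (p : ℝ[X]) : dEv k t p = (derivative^[k] p).eval t := by
  simp [dEv, Module.End.pow_apply]

lemma sob_eq (μ : Measure ℝ) [IsFiniteMeasure μ] {N : ℕ} (c : Fin N → ℝ) (d : Fin N → ℕ) (η : Fin N → ℝ)
    (f g : ℝ[X]) : sobInner μ c d η f g = LI μ (f * g) + ∑ j, η j * dEv (d j) (c j) f * dEv (d j) (c j) g := by
  simp [sobInner, LI_apply, dEv_apply]

lemma sob_orth (μ : Measure ℝ) [IsFiniteMeasure μ] {N : ℕ} {c : Fin N → ℝ} {d : Fin N → ℕ} {η : Fin N → ℝ}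
    {S : ℝ[X]} {n : ℕ} (h : ∀ m < n, sobInner μ c d η (X ^ m) S = 0) {f : ℝ[X]} (hf : f.degree < n) :
    LI μ (f * S) + ∑ j, η j * dEv (d j) (c j) f * dEv (d j) (c j) S = 0 := by
  have := lin_zero ((LI μ).comp (LinearMap.mulRight ℝ S) +
    ∑ j, (η j * dEv (d j) (c j) S) • dEv (d j) (c j)) (n := n) (f := f) ?_ hf
  · simp only [LinearMap.add_apply, LinearMap.comp_apply, LinearMap.mulRight_apply, LinearMap.sum_apply,
      LinearMap.smul_apply, smul_eq_mul] at this
    rw [← this]; congr 1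
    exact Finset.sum_congr rfl fun j _ => by ring
  · intro m hm
    have h1 := h m hm
    rw [sob_eq] at h1
    simp only [LinearMap.add_apply, LinearMap.comp_apply, LinearMap.mulRight_apply, LinearMap.sum_apply,
      LinearMap.smul_apply, smul_eq_mul]
    rw [← h1]; congr 1
    exact Finset.sum_congr rfl fun j _ => by ring

lemma sob_orth' (μ : Measure ℝ) [IsFiniteMeasure μ] {N : ℕ} {c : Fin N → ℝ} {d : Fin N → ℕ} {η : Fin N → ℝ}
    {S : ℝ[X]} {n : ℕ} (h : ∀ m < n, sobInner μ c d η (X ^ m) S = 0) (p : ℝ[X]) (hf : p.degree < n)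
    (hp : ∀ j, (derivative^[d j] p).eval (c j) = 0) : LI μ (p * S) = 0 := by
  have := sob_orth μ h hf
  simpa [dEv_apply, hp] using this

/-- monic polynomial vanishing at the mass points -/
def rhoM {N : ℕ} (c : Fin N → ℝ) (d : Fin N → ℕ) : ℝ[X] := ∏ j, (X - C (c j)) ^ (d j + 1)

lemma rhoM_monic {N : ℕ} (c : Fin N → ℝ) (d : Fin N → ℕ) : (rhoM c d).Monic :=
  monic_prod_of_monic _ _ fun j _ => (monic_X_sub_C _).pow _

lemma rhoM_dEv {N : ℕ} (c : Fin N → ℝ) (d : Fin N → ℕ) (g : ℝ[X]) (j : Fin N) :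
    dEv (d j) (c j) (rhoM c d * g) = 0 := by
  have h1 : (X - C (c j)) ^ (d j + 1) ∣ rhoM c d * g :=
    (Finset.dvd_prod_of_mem (fun j => (X - C (c j)) ^ (d j + 1)) (Finset.mem_univ j)).mul_right g
  have h2 := pow_sub_dvd_iterate_derivative_of_pow_dvd (d j) h1
  rw [Nat.add_sub_cancel_left, pow_one] at h2
  rw [dEv_apply]
  exact dvd_iff_isRoot.1 h2

lemma S_norm (μ : Measure ℝ) [IsFiniteMeasure μ] (hpos : PosM μ) {N : ℕ} {c : Fin N → ℝ} {d : Fin N → ℕ} {η : Fin N → ℝ}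
    (hη : ∀ j, 0 < η j) {S : ℕ → ℝ[X]} (hSm : ∀ n, (S n).Monic) (hSd : ∀ n, (S n).natDegree = n)
    (hSo : ∀ n, ∀ m < n, sobInner μ c d η (X ^ m) (S n) = 0) {P : ℕ → ℝ[X]} {a b : ℕ → ℝ}
    (hm : ∀ n, (P n).Monic) (hd : ∀ n, (P n).natDegree = n) (ho : ∀ n, Orth μ (P n) n)
    (hrec : ∀ n, P (n + 2) = (X - C (b (n + 1))) * P (n + 1) - C ((a (n + 1)) ^ 2) * P n)
    (ha : Tendsto a atTop (nhds (1 / 2))) :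
    ∃ A > 0, ∃ n0, ∀ n ≥ n0, nrm μ (S n) ≤ A * nrm μ (P n) ∧
      ∀ j, |(derivative^[d j] (S n)).eval (c j)| ≤ A * nrm μ (P n) := by
  set ρ := rhoM c d with hρ
  set D := ρ.natDegree with hD
  obtain ⟨n1, hn1⟩ := norm_shift μ hm hd ho hrec ha D
  obtain ⟨B, hB⟩ := (isCompact_Icc (a := (-1:ℝ)) (b := 1)).exists_bound_of_continuousOn ρ.continuous.continuousOn
  have hB0 : 0 ≤ B := (norm_nonneg _).trans (hB 0 (by simp))
  set T := B ^ 2 * 9 ^ D with hT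
  have hT0 : 0 ≤ T := by positivity
  -- main inequality
  have key : ∀ n ≥ n1 + D, LI μ (S n ^ 2) + ∑ j, η j * (dEv (d j) (c j) (S n)) ^ 2 ≤ T * nrm μ (P n) ^ 2 := by
    intro n hn
    obtain ⟨m, rfl⟩ : ∃ m, n = m + D := ⟨n - D, by omega⟩
    have hfm : (ρ * P m).Monic := (rhoM_monic c d).mul (hm m)
    have hfd : (ρ * P m).natDegree = m + D := by
      rw [(rhoM_monic c d).natDegree_mul (hm m), hd, add_comm]
    have h1 := sob_orth μ (hSo (m + D)) (sub_deg_lt hfm (hSm _) hfd (hSd _))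
    set f := ρ * P m with hf
    set s := S (m + D) with hs
    have h0 : ∀ j, dEv (d j) (c j) f = 0 := fun j => rhoM_dEv c d _ j
    have h2 : ∑ j, η j * dEv (d j) (c j) (f - s) * dEv (d j) (c j) s
        = - ∑ j, η j * (dEv (d j) (c j) s) ^ 2 := by
      rw [← Finset.sum_neg_distrib]
      refine Finset.sum_congr rfl fun j _ => ?_
      rw [map_sub, h0]; ring
    have h3 : LI μ (f ^ 2) = LI μ (s ^ 2) + 2 * LI μ ((f - s) * s) + LI μ ((f - s) ^ 2) := by
      rw [← smul_eq_mul (a := (2:ℝ)), ← map_smul, ← map_add, ← map_add]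
      congr 1
      rw [smul_eq_C_mul, show (C (2:ℝ) : ℝ[X]) = 2 from rfl]; ring
    have h4 : 0 ≤ LI μ ((f - s) ^ 2) := LI_nonneg μ fun x _ => by rw [eval_pow]; positivity
    have h5 : LI μ (f ^ 2) ≤ B ^ 2 * LI μ (P m ^ 2) := by
      rw [← smul_eq_mul, ← map_smul]
      refine LI_mono μ fun x hx => ?_
      rw [hf, eval_smul, smul_eq_mul, eval_pow, eval_pow, eval_mul, mul_pow]
      refine mul_le_mul_of_nonneg_right ?_ (by positivity)
      rw [← sq_abs]
      exact pow_le_pow_left₀ (abs_nonneg _) (hB x hx) 2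
    have h6 := hn1 m (by omega)
    have h7 : 0 ≤ ∑ j, η j * (dEv (d j) (c j) s) ^ 2 :=
      Finset.sum_nonneg fun j _ => mul_nonneg (hη j).le (sq_nonneg _)
    rw [nrm_sq μ hpos (hm _).ne_zero]
    have h8 := mul_le_mul_of_nonneg_left h6 (sq_nonneg B)
    rw [hT]
    nlinarith
  -- constants
  set E := ∑ j, (η j)⁻¹ with hE
  have hE0 : 0 ≤ E := Finset.sum_nonneg fun j _ => inv_nonneg.2 (hη j).le
  refine ⟨Real.sqrt (T * (1 + E)) + 1, by positivity, n1 + D, fun n hn => ?_⟩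
  have hk := key n hn
  have hp := nrm_pos μ hpos (hm n).ne_zero
  have hnn : 0 ≤ LI μ (S n ^ 2) := LI_nonneg μ fun x _ => by rw [eval_pow]; positivity
  have gen : ∀ t : ℝ, 0 ≤ t → t ^ 2 ≤ T * (1 + E) * nrm μ (P n) ^ 2 → t ≤ (Real.sqrt (T * (1 + E)) + 1) * nrm μ (P n) := by
    intro t ht h
    have h1 : t ≤ Real.sqrt (T * (1+E)) * nrm μ (P n) := by
      refine (pow_le_pow_iff_left₀ ht (by positivity) two_ne_zero).1 ?_
      rw [mul_pow, Real.sq_sqrt (by positivity)]; exact h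
    nlinarith
  have hs0 : ∀ i, 0 ≤ η i * (dEv (d i) (c i) (S n)) ^ 2 := fun i => mul_nonneg (hη i).le (sq_nonneg _)
  constructor
  · apply gen (nrm μ (S n)) (Real.sqrt_nonneg _)
    rw [nrm_sq μ hpos (hSm n).ne_zero]
    have := Finset.sum_nonneg (s := Finset.univ) fun i _ => hs0 i
    have h9 : 0 ≤ T * E * nrm μ (P n) ^ 2 := by positivity
    nlinarith
  · intro j
    apply gen _ (abs_nonneg _)
    rw [sq_abs, ← dEv_apply]
    have h1 := Finset.single_le_sum (fun i _ => hs0 i) (Finset.mem_univ j)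
    have h2 : (dEv (d j) (c j) (S n)) ^ 2 ≤ (η j)⁻¹ * (T * nrm μ (P n) ^ 2) := by
      rw [inv_mul_eq_div, le_div_iff₀ (hη j)]; linarith
    have h3 : (η j)⁻¹ ≤ 1 + E := by
      have := Finset.single_le_sum (f := fun j => (η j)⁻¹) (fun i _ => inv_nonneg.2 (hη i).le) (Finset.mem_univ j)
      linarith
    have h4 : 0 ≤ T * nrm μ (P n) ^ 2 := by positivity
    have := mul_le_mul_of_nonneg_right h3 h4
    nlinarith

lemma iter_mul_X_sub (p : ℂ[X]) (a : ℂ) (i : ℕ) :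
    derivative^[i] ((X - C a) * p) = (derivative^[i] p) * (X - C a) + i • derivative^[i - 1] p := by
  have : (X - C a) * p = p * X - C a * p := by ring
  rw [this, iterate_derivative_sub, iterate_derivative_mul_X, iterate_derivative_C_mul]
  ring

lemma far_roots_deriv {c : ℂ} {ε : ℝ} (hε : 0 < ε) {d : ℕ} (s : Multiset ℂ) (hs : ∀ a ∈ s, ε ≤ ‖c - a‖) :
    ∀ i ≤ d, ‖(derivative^[i] (s.map fun a => X - C a).prod).eval c‖ ≤
      (1 + d / ε) ^ s.card * ‖((s.map fun a => X - C a).prod).eval c‖ := by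
  induction s using Multiset.induction_on with
  | empty =>
    intro i _
    rcases Nat.eq_zero_or_pos i with rfl | h
    · simp
    · obtain ⟨i, rfl⟩ : ∃ k, i = k + 1 := ⟨i - 1, by omega⟩
      simp
  | cons a s ih =>
    intro i hi
    have ih' := ih fun b hb => hs b (Multiset.mem_cons_of_mem hb)
    have ha := hs a (Multiset.mem_cons_self a s)
    rw [Multiset.map_cons, Multiset.prod_cons, Multiset.card_cons, iter_mul_X_sub]
    set p := (s.map fun a => X - C a).prod
    set M := (1 + d / ε) ^ s.card with hM
    have hM0 : 0 < M := by positivity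
    have h1 := ih' i hi
    have h2 := ih' (i - 1) (by omega)
    simp only [eval_add, eval_mul, eval_sub, eval_X, eval_C, nsmul_eq_mul, eval_natCast, norm_mul]
    refine (norm_add_le _ _).trans ?_
    rw [norm_mul, norm_mul, Complex.norm_natCast, pow_succ, ← hM]
    have hid : (i:ℝ) ≤ d := by exact_mod_cast hi
    set w := ‖c - a‖
    set v := ‖p.eval c‖
    have hv : 0 ≤ v := norm_nonneg _
    have h3 : ‖eval c (derivative^[i] p)‖ * w ≤ M * v * w :=
      mul_le_mul_of_nonneg_right h1 (norm_nonneg _)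
    have h4 : (i:ℝ) * ‖eval c (derivative^[i-1] p)‖ ≤ d * (M * v) :=
      mul_le_mul hid h2 (norm_nonneg _) (by positivity)
    have h5 : (d:ℝ) * (M * v) ≤ (d / ε * w) * (M * v) := by
      refine mul_le_mul_of_nonneg_right ?_ (by positivity)
      rw [div_mul_eq_mul_div, le_div_iff₀ hε]
      exact mul_le_mul_of_nonneg_left ha (by positivity)
    nlinarith

lemma map_prod_aroots {r : ℝ[X]} (hr : r.Monic) :
    r.map (algebraMap ℝ ℂ) = ((r.aroots ℂ).map fun a => X - C a).prod := by
  have h := IsAlgClosed.splits (r.map (algebraMap ℝ ℂ))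
  exact (prod_multiset_X_sub_C_of_monic_of_roots_card_eq (hr.map _) h.natDegree_eq_card_roots.symm).symm

lemma card_aroots {r : ℝ[X]} : (r.aroots ℂ).card = r.natDegree := by
  have h := IsAlgClosed.splits (r.map (algebraMap ℝ ℂ))
  rw [aroots, ← h.natDegree_eq_card_roots, natDegree_map]

lemma mem_aroots_iff {r : ℝ[X]} (hr : r.Monic) (w : ℂ) : w ∈ r.aroots ℂ ↔ aeval w r = 0 := by
  rw [mem_aroots]; exact ⟨fun h => h.2, fun h => ⟨hr.ne_zero, h⟩⟩

lemma real_far_deriv {r : ℝ[X]} (hr : r.Monic) {N : ℕ} (hN : r.natDegree ≤ N) {c ε : ℝ} (hε : 0 < ε)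
    (h : ∀ w : ℂ, aeval w r = 0 → ε ≤ ‖(c:ℂ) - w‖) {d i : ℕ} (hi : i ≤ d) :
    |(derivative^[i] r).eval c| ≤ (1 + d / ε) ^ N * |r.eval c| := by
  have h1 := far_roots_deriv (c := (c:ℂ)) hε (d := d) (r.aroots ℂ)
    (fun a ha => h a ((mem_aroots_iff hr a).1 ha)) i hi
  rw [← map_prod_aroots hr, iterate_derivative_map, card_aroots] at h1
  have e : ∀ p : ℝ[X], ‖(p.map (algebraMap ℝ ℂ)).eval (c:ℂ)‖ = |p.eval c| := by
    intro p
    have : (p.map (algebraMap ℝ ℂ)).eval (c:ℂ) = ((p.eval c : ℝ) : ℂ) := by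
      exact eval_map_apply (algebraMap ℝ ℂ) c
    rw [this, Complex.norm_real, Real.norm_eq_abs]
  rw [e, e] at h1
  refine h1.trans (mul_le_mul_of_nonneg_right (pow_le_pow_right₀ ?_ hN) (abs_nonneg _))
  have : 0 ≤ (d:ℝ) / ε := by positivity
  linarith

/-- all roots real and located in the interval -/
def Good (f : ℝ[X]) : Prop := f ≠ 0 ∧ (f.roots.filter (· ∈ Set.Icc (-1:ℝ) 1)).card = f.natDegree

lemma Good.deriv {f : ℝ[X]} (hf : Good f) (h1 : 1 ≤ f.natDegree) :
    Good (derivative f) ∧ (derivative f).natDegree = f.natDegree - 1 := by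
  have h0 : derivative f ≠ 0 := by
    intro h
    have := derivative_eq_zero.1 h
    omega
  have h2 : (f.roots.filter (· ∈ Set.Icc (-1:ℝ) 1)).card ≤
      ((derivative f).roots.filter (· ∈ Set.Icc (-1:ℝ) 1)).card + 1 := by
    convert rolle_filter f (Set.Icc (-1) 1) Set.ordConnected_Icc
  have h3 : ((derivative f).roots.filter (· ∈ Set.Icc (-1:ℝ) 1)).card ≤ (derivative f).natDegree :=
    (Multiset.card_le_card (Multiset.filter_le _ _)).trans (card_roots' _)
  have h4 := natDegree_derivative_le f
  have h5 := hf.2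
  exact ⟨⟨h0, by omega⟩, by omega⟩

lemma Good.iter {f : ℝ[X]} (hf : Good f) {i : ℕ} (hi : i ≤ f.natDegree) :
    Good (derivative^[i] f) ∧ (derivative^[i] f).natDegree = f.natDegree - i := by
  induction i with
  | zero => exact ⟨hf, rfl⟩
  | succ i ih =>
    obtain ⟨h1, h2⟩ := ih (by omega)
    rw [Function.iterate_succ_apply']
    obtain ⟨h3, h4⟩ := h1.deriv (by omega)
    exact ⟨h3, by omega⟩

lemma Good.bound {f : ℝ[X]} (hf : Good f) {c : ℝ} (hc : c ∉ Set.Icc (-1:ℝ) 1) :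
    f.natDegree * |f.eval c| ≤ (|c| + 1) * |(derivative f).eval c| := by
  have hcard : f.roots.card = f.natDegree :=
    le_antisymm (card_roots' _) (hf.2 ▸ Multiset.card_le_card (Multiset.filter_le _ _))
  have hfil : f.roots.filter (· ∈ Set.Icc (-1:ℝ) 1) = f.roots :=
    Multiset.eq_of_le_of_card_le (Multiset.filter_le _ _) (by rw [hf.2, hcard])
  have hmem : ∀ t ∈ f.roots, t ∈ Set.Icc (-1:ℝ) 1 := fun t ht => by
    rw [← hfil] at ht; exact (Multiset.mem_filter.1 ht).2
  have hsp : f.Splits := splits_iff_card_roots.2 hcard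
  have hne : f.eval c ≠ 0 := fun h => hc (hmem c ((mem_roots hf.1).2 h))
  have h1 := hsp.eval_derivative_eq_eval_mul_sum hne
  rw [h1, abs_mul]
  have key : (f.natDegree : ℝ) / (|c| + 1) ≤ |(f.roots.map fun z => 1 / (c - z)).sum| := by
    have hgen : ∀ s : Multiset ℝ, (∀ t ∈ s, t ∈ Set.Icc (-1:ℝ) 1) → (1 < c → (s.card : ℝ) / (|c|+1) ≤ (s.map fun z => 1 / (c - z)).sum)
        ∧ (c < -1 → (s.map fun z => 1 / (c - z)).sum ≤ - ((s.card : ℝ) / (|c|+1))) := by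
      intro s
      induction s using Multiset.induction_on with
      | empty => intro _; simp
      | cons a s ih =>
        intro hs
        have ih' := ih fun t ht => hs t (Multiset.mem_cons_of_mem ht)
        have ha := hs a (Multiset.mem_cons_self a s)
        have hp : 0 < |c| + 1 := by positivity
        constructor
        · intro h
          have := ih'.1 h
          rw [Multiset.map_cons, Multiset.sum_cons, Multiset.card_cons]
          push_cast
          rw [add_div]
          have h2 : 1 / (|c| + 1) ≤ 1 / (c - a) :=
            one_div_le_one_div_of_le (by linarith [ha.2]) (by linarith [le_abs_self c, ha.1])
          linarith
        · intro h
          have := ih'.2 h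
          rw [Multiset.map_cons, Multiset.sum_cons, Multiset.card_cons]
          push_cast
          rw [add_div]
          have h2 : 1 / (|c| + 1) ≤ 1 / (a - c) :=
            one_div_le_one_div_of_le (by linarith [ha.1]) (by linarith [neg_abs_le c, ha.2])
          have h3 : 1 / (c - a) = - (1 / (a - c)) := by rw [← neg_sub a c, div_neg]
          rw [h3]
          linarith
    have hg := hgen f.roots hmem
    rw [hcard] at hg
    rcases lt_or_ge 1 c with h | h
    · exact (hg.1 h).trans (le_abs_self _)
    · have h' : c < -1 := by
        by_contra h2; exact hc ⟨not_lt.1 h2, h⟩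
      have := hg.2 h'

      exact le_trans (by linarith) (neg_le_abs _)
  rw [div_le_iff₀ (by positivity)] at key
  nlinarith [abs_nonneg (f.eval c)]

lemma good_prod {s : Multiset ℝ} (hs : ∀ t ∈ s, t ∈ Set.Icc (-1:ℝ) 1) :
    Good (s.map fun t => X - C t).prod ∧ ((s.map fun t => X - C t).prod).natDegree = s.card := by
  have hd : ((s.map fun t => X - C t).prod).natDegree = s.card := natDegree_multiset_prod_X_sub_C_eq_card s
  refine ⟨⟨(monic_multiset_prod_of_monic _ _ fun a _ => monic_X_sub_C a).ne_zero, ?_⟩, hd⟩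
  rw [hd, roots_multiset_prod_X_sub_C, Multiset.filter_eq_self.2 hs]

lemma deriv_lower {c : ℝ} (hc : c ∉ Set.Icc (-1:ℝ) 1) {ε : ℝ} (hε : 0 < ε) (d N : ℕ) :
    ∃ m0 : ℕ, ∀ (s : Multiset ℝ) (r : ℝ[X]), (∀ t ∈ s, t ∈ Set.Icc (-1:ℝ) 1) → m0 ≤ s.card →
      r.Monic → r.natDegree ≤ N → (∀ w : ℂ, aeval w r = 0 → ε ≤ ‖(c:ℂ) - w‖) →
      |((s.map fun t => X - C t).prod * r).eval c| ≤
        2 * |(derivative^[d] ((s.map fun t => X - C t).prod * r)).eval c| := by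
  set M : ℝ := (1 + d / ε) ^ N with hM
  have hM1 : 1 ≤ M := one_le_pow₀ (by have : 0 ≤ (d:ℝ) / ε := by positivity
                                      linarith)
  set l : ℝ := 1 / (2 * 2 ^ d * M) with hl
  have hl0 : 0 < l := by positivity
  have hl1 : l ≤ 1 := by
    rw [hl, div_le_one (by positivity)]
    have : (1:ℝ) ≤ 2 ^ d := one_le_pow₀ (by norm_num)
    nlinarith
  refine ⟨d + ⌈(|c| + 1) / l⌉₊ + 1, fun s r hs hcard hrm hrd hfar => ?_⟩
  obtain ⟨hg, hgd⟩ := good_prod hs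
  set q := (s.map fun t => X - C t).prod with hq
  have hstep : ∀ i < d, |(derivative^[i] q).eval c| ≤ l * |(derivative^[i+1] q).eval c| := by
    intro i hi
    obtain ⟨h1, h2⟩ := hg.iter (i := i) (by omega)
    have h3 := h1.bound hc
    rw [← Function.iterate_succ_apply' derivative i q] at h3
    have h4 : (|c| + 1) / l ≤ (derivative^[i] q).natDegree := by
      refine (Nat.le_ceil _).trans ?_
      exact_mod_cast (by omega)
    rw [div_le_iff₀ hl0] at h4
    have hp : 0 < ((derivative^[i] q).natDegree : ℝ) := by
      have : 0 < (derivative^[i] q).natDegree := by omega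
      exact_mod_cast this
    set D : ℝ := ((derivative^[i] q).natDegree : ℝ)
    have h5 : D * |(derivative^[i] q).eval c| ≤ D * (l * |(derivative^[i+1] q).eval c|) := by
      calc _ ≤ _ := h3
        _ ≤ (D * l) * |(derivative^[i+1] q).eval c| := mul_le_mul_of_nonneg_right h4 (abs_nonneg _)
        _ = _ := by ring
    exact le_of_mul_le_mul_left h5 hp
  set B := |(derivative^[d] q).eval c| with hB
  have hB0 : 0 ≤ B := abs_nonneg _
  have hmono : ∀ k ≤ d, |(derivative^[d - k] q).eval c| ≤ B := by
    intro k
    induction k with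
    | zero => intro _; exact le_rfl
    | succ k ih =>
      intro hk
      have h1 := hstep (d - (k+1)) (by omega)
      rw [show d - (k+1) + 1 = d - k by omega] at h1
      have h2 := ih (by omega)
      nlinarith [abs_nonneg ((derivative^[d - k] q).eval c)]
  have hlt : ∀ k, 1 ≤ k → k ≤ d → |(derivative^[d - k] q).eval c| ≤ l * B := by
    intro k hk1 hk
    refine (hstep (d - k) (by omega)).trans (mul_le_mul_of_nonneg_left ?_ hl0.le)
    rw [show d - k + 1 = d - (k - 1) by omega]
    exact hmono (k-1) (by omega)
  have hr : ∀ k ≤ d, |(derivative^[k] r).eval c| ≤ M * |r.eval c| := fun k hk =>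
    real_far_deriv hrm hrd hε hfar hk
  rw [iterate_derivative_mul, Finset.sum_range_succ', eval_add, eval_finsetSum]
  simp only [Nat.choose_zero_right, one_smul, Nat.sub_zero, Function.iterate_zero, id_eq, eval_mul, abs_mul]
  set rc := |r.eval c| with hrc
  have hrc0 : 0 ≤ rc := abs_nonneg _
  have hrest : |∑ k ∈ Finset.range d, eval c (d.choose (k+1) • (derivative^[d - (k+1)] q * derivative^[k+1] r))|
      ≤ B * rc / 2 := by
    refine (Finset.abs_sum_le_sum_abs _ _).trans ?_
    calc _ ≤ ∑ k ∈ Finset.range d, (d.choose (k+1) : ℝ) * (l * B * (M * rc)) := by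
          refine Finset.sum_le_sum fun k hk => ?_
          have hk' := Finset.mem_range.1 hk
          rw [nsmul_eq_mul, eval_mul, eval_mul, eval_natCast, abs_mul, abs_mul, Nat.abs_cast]
          exact mul_le_mul_of_nonneg_left (mul_le_mul (hlt _ (by omega) (by omega)) (hr _ (by omega))
            (abs_nonneg _) (by positivity)) (by positivity)
      _ = (∑ k ∈ Finset.range d, (d.choose (k+1) : ℝ)) * (l * B * (M * rc)) := by rw [Finset.sum_mul]
      _ ≤ 2 ^ d * (l * B * (M * rc)) := by
          refine mul_le_mul_of_nonneg_right ?_ (by positivity)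
          have h1 := Nat.sum_range_choose d
          rw [Finset.sum_range_succ'] at h1
          have h2 : ∑ k ∈ Finset.range d, d.choose (k+1) ≤ 2 ^ d := by omega
          exact_mod_cast h2
      _ = B * rc / 2 := by
          rw [hl]; field_simp
  have h0 := hmono d le_rfl
  rw [Nat.sub_self, Function.iterate_zero, id_eq] at h0
  set Z := ∑ k ∈ Finset.range d, eval c (d.choose (k+1) • (derivative^[d - (k+1)] q * derivative^[k+1] r))
  have h6 : B * rc ≤ |Z + eval c (derivative^[d] q) * eval c r| + |Z| := by
    rw [hB, hrc, ← abs_mul]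
    have := abs_sub (Z + eval c (derivative^[d] q) * eval c r) Z
    rwa [add_sub_cancel_left] at this
  have h7 : |eval c q| * rc ≤ B * rc := mul_le_mul_of_nonneg_right h0 hrc0
  linarith

/-- factorization data -/
def Fac (P S : ℝ[X]) (N n : ℕ) (s : Multiset ℝ) (r : ℝ[X]) : Prop :=
  S = (s.map fun t => X - C t).prod * r ∧ r.Monic ∧ r.natDegree ≤ N ∧
      (∀ t ∈ s, t ∈ Set.Icc (-1:ℝ) 1) ∧ n ≤ s.card + N ∧
      ∀ (z : ℂ) (δ R : ℝ), 0 < δ → 1 ≤ R → (∀ t ∈ Set.Icc (-1:ℝ) 1, δ ≤ ‖z - t‖) → ‖z‖ + 1 ≤ R →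
        ‖aeval z P‖ ≤ Real.exp (2 / δ) * R ^ N * ‖aeval z (s.map fun t => X - C t).prod‖

lemma r_lower {r : ℝ[X]} (hr : r.Monic) {N : ℕ} (hN : r.natDegree ≤ N) {z : ℂ} {e : ℝ} (he : 0 < e) (he1 : e ≤ 1)
    (h : ∀ w : ℂ, aeval w r = 0 → e ≤ ‖z - w‖) : e ^ N ≤ ‖aeval z r‖ := by
  have gen : ∀ s : Multiset ℂ, (∀ a ∈ s, e ≤ ‖z - a‖) →
      e ^ s.card ≤ ‖((s.map fun a => X - C a).prod).eval z‖ := by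
    intro s
    induction s using Multiset.induction_on with
    | empty => simp
    | cons a s ih =>
      intro hs
      rw [Multiset.map_cons, Multiset.prod_cons, Multiset.card_cons, eval_mul, norm_mul, pow_succ, mul_comm]
      refine mul_le_mul ?_ (ih fun b hb => hs b (Multiset.mem_cons_of_mem hb)) (by positivity) (norm_nonneg _)
      simpa using hs a (Multiset.mem_cons_self a s)
  have h1 := gen (r.aroots ℂ) fun a ha => h a ((mem_aroots_iff hr a).1 ha)
  rw [← map_prod_aroots hr, card_aroots, eval_map_algebraMap] at h1
  exact (pow_le_pow_of_le_one he.le he1 hN).trans h1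

lemma S_lower {P S : ℝ[X]} {N n : ℕ} {s : Multiset ℝ} {r : ℝ[X]} (hF : Fac P S N n s r)
    {z : ℂ} {δ R e : ℝ} (hδ : 0 < δ) (hR : 1 ≤ R) (hz : ∀ t ∈ Set.Icc (-1:ℝ) 1, δ ≤ ‖z - t‖) (hzR : ‖z‖ + 1 ≤ R)
    (he : 0 < e) (he1 : e ≤ 1) (h : ∀ w : ℂ, aeval w r = 0 → e ≤ ‖z - w‖) :
    e ^ N * ‖aeval z P‖ ≤ Real.exp (2 / δ) * R ^ N * ‖aeval z S‖ := by
  obtain ⟨h1, h2, h3, h4, h5, h6⟩ := hF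
  have h7 := h6 z δ R hδ hR hz hzR
  have h8 := r_lower h2 h3 he he1 h
  rw [h1, map_mul, norm_mul]
  calc _ ≤ ‖aeval z r‖ * (Real.exp (2 / δ) * R ^ N * ‖aeval z (s.map fun t => X - C t).prod‖) :=
        mul_le_mul h8 h7 (norm_nonneg _) (norm_nonneg _)
    _ = _ := by ring

lemma real_not_seg {c : ℝ} (hc : c ∉ Set.Icc (-1:ℝ) 1) : (c:ℂ) ∉ segIcc := by
  rintro ⟨x, hx, h⟩
  exact hc (by rwa [← Complex.ofReal_injective h])

lemma root_near (μ : Measure ℝ) [IsFiniteMeasure μ] (hpos : PosM μ) {P S : ℕ → ℝ[X]}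
    (hm : ∀ n, (P n).Monic) (hd : ∀ n, (P n).natDegree = n) (ho : ∀ n, Orth μ (P n) n)
    {N : ℕ} {s : ℕ → Multiset ℝ} {r : ℕ → ℝ[X]} (hF : ∀ n, Fac (P n) (S n) N n (s n) (r n))
    {c : ℝ} (hc : c ∉ Set.Icc (-1:ℝ) 1) {d : ℕ} {A : ℝ} (hA0 : 0 < A)
    (hA : ∃ n0, ∀ n ≥ n0, |(derivative^[d] (S n)).eval c| ≤ A * nrm μ (P n)) {ε : ℝ} (hε : 0 < ε) :
    ∃ n0, ∀ n ≥ n0, ∃ w : ℂ, aeval w (r n) = 0 ∧ ‖(c:ℂ) - w‖ < ε := by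
  have hcs := real_not_seg hc
  obtain ⟨u, hu1, δ, hδ, -, hδd⟩ := seg_dist hcs
  obtain ⟨m0, hm0⟩ := deriv_lower hc hε d N
  obtain ⟨n0, hn0⟩ := hA
  set R := ‖(c:ℂ)‖ + 1 with hR
  have hR1 : 1 ≤ R := by rw [hR]; linarith [norm_nonneg (c:ℂ)]
  set G := Real.exp (2 / δ) * R ^ N with hG
  have hG0 : 0 < G := by positivity
  set e := min 1 ε with he
  have he0 : 0 < e := lt_min one_pos hε
  have hε' : 0 < e ^ N / (4 * A * G) := by positivity
  obtain ⟨δ', hδ', n1, hn1⟩ := P_lower μ hpos hm hd ho hcs hε'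
  refine ⟨max n0 (max n1 (m0 + N)), fun n hn => ?_⟩
  by_contra hcon
  push Not at hcon
  have hn0' := hn0 n (by omega)
  have hn1' := hn1 n (by omega) c (by simpa using hδ')
  have hS := S_lower (hF n) hδ hR1 hδd le_rfl he0 (min_le_left _ _) (fun w hw => (min_le_right _ _).trans (hcon w hw))
  obtain ⟨h1, h2, h3, h4, h5, h6⟩ := hF n
  have hl := hm0 (s n) (r n) h4 (by omega) h2 h3 hcon
  rw [← h1] at hl
  have e1 : ‖aeval (c:ℂ) (S n)‖ = |(S n).eval c| := by
    have : aeval (c:ℂ) (S n) = (((S n).eval c : ℝ) : ℂ) := by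
      rw [← eval_map_algebraMap]; exact eval_map_apply (algebraMap ℝ ℂ) c
    rw [this, Complex.norm_real, Real.norm_eq_abs]
  rw [e1] at hS
  have hp := nrm_pos μ hpos (hm n).ne_zero
  set p := ‖aeval (c:ℂ) (P n)‖
  have h7 : G * |(S n).eval c| ≤ G * (2 * (A * (e ^ N / (4 * A * G) * p))) := by
    refine mul_le_mul_of_nonneg_left ?_ hG0.le
    have := mul_le_mul_of_nonneg_left hn1' hA0.le
    linarith
  have h8 : G * (2 * (A * (e ^ N / (4 * A * G) * p))) = e ^ N * p / 2 := by field_simp; ring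
  have h9 : e ^ N * p ≤ e ^ N * p / 2 := by rw [← h8]; exact hS.trans h7
  have h10 : 0 < p := by
    by_contra h
    have : e ^ N / (4 * A * G) * p ≤ 0 := mul_nonpos_of_nonneg_of_nonpos hε'.le (not_lt.1 h)
    linarith
  have : 0 < e ^ N * p := by positivity
  linarith

lemma roots_all {r : ℝ[X]} (hr : r.Monic) {N : ℕ} (hN : r.natDegree ≤ N) {c : Fin N → ℂ} {e : ℝ}
    (hsep : ∀ i j, i ≠ j → 2 * e ≤ ‖c i - c j‖) (h : ∀ j, ∃ w : ℂ, aeval w r = 0 ∧ ‖c j - w‖ < e) :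
    ∀ w : ℂ, aeval w r = 0 → ∃ j, ‖c j - w‖ < e := by
  choose w hw1 hw2 using h
  have hinj : Function.Injective w := by
    intro i j hij
    by_contra hne
    have h1 := hsep i j hne
    have h2 : c i - c j = (c i - w i) - (c j - w j) := by rw [hij]; ring
    have h3 := norm_sub_le (c i - w i) (c j - w j)
    rw [← h2] at h3
    linarith [hw2 i, hw2 j]
  have hle : (Finset.univ.image w).val ≤ r.aroots ℂ := by
    rw [Multiset.le_iff_subset (Finset.univ.image w).nodup]
    intro a ha
    obtain ⟨j, -, rfl⟩ := Finset.mem_image.1 (Finset.mem_val ▸ ha)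
    exact (mem_aroots_iff hr _).2 (hw1 j)
  have heq := Multiset.eq_of_le_of_card_le hle (by
    rw [card_aroots, Finset.card_val, Finset.card_image_of_injective _ hinj]; simpa using hN)
  intro z hz
  have := (mem_aroots_iff hr z).2 hz
  rw [← heq] at this
  obtain ⟨j, -, rfl⟩ := Finset.mem_image.1 (Finset.mem_val ▸ this)
  exact ⟨j, hw2 j⟩

lemma markov_diff (μ : Measure ℝ) [IsFiniteMeasure μ] (ρ Q S : ℝ[X]) {z : ℂ}
    (hz : ∀ x ∈ Set.Icc (-1:ℝ) 1, z - x ≠ 0) (hS : aeval z S ≠ 0) :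
    markovHat μ ρ Q z - assocFun μ ρ Q S z / aeval z S =
      (∫ x in Set.Icc (-1:ℝ) 1, ((S.eval x : ℝ) : ℂ) * (((Q.eval x * ρ.eval x : ℝ) : ℂ) / (z - x)) ∂μ) / aeval z S := by
  have hQ : ContinuousOn (fun x : ℝ => ((Q.eval x * ρ.eval x : ℝ) : ℂ)) (Set.Icc (-1) 1) :=
    (Complex.continuous_ofReal.comp (Q.continuous.mul ρ.continuous)).continuousOn
  have hzc : ContinuousOn (fun x : ℝ => z - (x:ℂ)) (Set.Icc (-1) 1) := by fun_prop
  have hSc : ContinuousOn (fun x : ℝ => ((S.eval x : ℝ) : ℂ)) (Set.Icc (-1) 1) :=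
    (Complex.continuous_ofReal.comp S.continuous).continuousOn
  have key : assocFun μ ρ Q S z = aeval z S * markovHat μ ρ Q z -
      ∫ x in Set.Icc (-1:ℝ) 1, ((S.eval x : ℝ) : ℂ) * (((Q.eval x * ρ.eval x : ℝ) : ℂ) / (z - x)) ∂μ := by
    unfold assocFun markovHat
    rw [← integral_const_mul, ← integral_sub]
    · refine setIntegral_congr_fun measurableSet_Icc fun x hx => ?_
      have := hz x hx
      field_simp
    · exact aux_integrable_cont μ (continuousOn_const.mul (hQ.div hzc hz))
    · exact aux_integrable_cont μ (hSc.mul (hQ.div hzc hz))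
  rw [key]
  field_simp
  ring

lemma final_local (μ : Measure ℝ) [IsFiniteMeasure μ] (hpos : PosM μ) {P S : ℕ → ℝ[X]}
    (hm : ∀ n, (P n).Monic) (hd : ∀ n, (P n).natDegree = n) (ho : ∀ n, Orth μ (P n) n)
    {N : ℕ} {s : ℕ → Multiset ℝ} {r : ℕ → ℝ[X]} (hF : ∀ n, Fac (P n) (S n) N n (s n) (r n))
    (hSm : ∀ n, (S n).Monic)
    {c : Fin N → ℝ} (hc : ∀ j, c j ∉ Set.Icc (-1:ℝ) 1) (hinj : Function.Injective c)
    {d : Fin N → ℕ} {A : ℝ} (hA0 : 0 < A)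
    (hA : ∃ n0, ∀ n ≥ n0, nrm μ (S n) ≤ A * nrm μ (P n) ∧
      ∀ j, |(derivative^[d j] (S n)).eval (c j)| ≤ A * nrm μ (P n))
    (ρ Q : ℝ[X]) {z0 : ℂ} (hz0 : z0 ∉ segIcc) (hz0c : ∀ j, z0 ≠ (c j : ℂ)) {ε : ℝ} (hε : 0 < ε) :
    ∃ t > 0, ∃ n0, ∀ n ≥ n0, ∀ z : ℂ, ‖z - z0‖ < t →
      ‖markovHat μ ρ Q z - assocFun μ ρ Q (S n) z / aeval z (S n)‖ < ε := by
  obtain ⟨u, hu1, δ, hδ, -, hδd⟩ := seg_dist hz0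
  obtain ⟨e, he0, he1, hez, hec⟩ : ∃ e : ℝ, 0 < e ∧ e ≤ 1 ∧ (∀ j, 3 * e ≤ ‖(c j : ℂ) - z0‖) ∧
      ∀ i j, i ≠ j → 2 * e ≤ ‖(c i : ℂ) - c j‖ := by
    have gen : ∀ a b : ℝ, 0 < a → 0 < b → ∀ᶠ e in nhdsWithin (0:ℝ) (Set.Ioi 0), b * e ≤ a := by
      intro a b ha hb
      have : ∀ᶠ e in nhds (0:ℝ), b * e < a := by
        have hcont : Tendsto (fun e : ℝ => b * e) (nhds 0) (nhds (b * 0)) := by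
          exact (continuous_const.mul continuous_id).tendsto 0
        rw [mul_zero] at hcont
        exact hcont.eventually (gt_mem_nhds ha)
      exact (this.filter_mono nhdsWithin_le_nhds).mono fun e h => h.le
    have h1 : ∀ᶠ e in nhdsWithin (0:ℝ) (Set.Ioi 0), ∀ j, 3 * e ≤ ‖(c j : ℂ) - z0‖ :=
      eventually_all.2 fun j => gen _ 3 (norm_pos_iff.2 (sub_ne_zero.2 (hz0c j).symm)) (by norm_num)
    have h2 : ∀ᶠ e in nhdsWithin (0:ℝ) (Set.Ioi 0), ∀ i j, i ≠ j → 2 * e ≤ ‖(c i : ℂ) - c j‖ := by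
      refine eventually_all.2 fun i => eventually_all.2 fun j => ?_
      by_cases hij : i = j
      · exact Eventually.of_forall fun e h => absurd hij h
      · refine (gen ‖(c i : ℂ) - c j‖ 2 (norm_pos_iff.2 (sub_ne_zero.2 ?_)) (by norm_num)).mono fun e h _ => h
        exact fun h => hij (hinj (Complex.ofReal_injective h))
    obtain ⟨e, ⟨⟨h3, h4⟩, h5⟩, h6⟩ := (((h1.and h2).and (gen 1 1 one_pos one_pos)).and self_mem_nhdsWithin).exists
    exact ⟨e, h6, by linarith, h3, h4⟩
  obtain ⟨B, hB⟩ := (isCompact_Icc (a := (-1:ℝ)) (b := 1)).exists_bound_of_continuousOn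
    (Q.continuous.mul ρ.continuous).continuousOn
  have hB0 : 0 ≤ B := (norm_nonneg _).trans (hB 0 (by simp))
  set R := ‖z0‖ + 2 with hR
  have hR1 : 1 ≤ R := by rw [hR]; linarith [norm_nonneg z0]
  set G := Real.exp (2 / (δ/2)) * R ^ N with hG
  have hG0 : 0 < G := by positivity
  have hmass := mass1_pos μ
  set H := B / (δ/2) * mass1 μ * A * G with hH
  have hH0 : 0 ≤ H := by positivity
  have hε' : 0 < ε * e ^ N / (H + 1) := by positivity
  obtain ⟨δ', hδ', n1, hn1⟩ := P_lower μ hpos hm hd ho hz0 hε'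
  obtain ⟨n0, hn0⟩ := hA
  have hroots : ∀ j, ∀ᶠ n in atTop, ∃ w : ℂ, aeval w (r n) = 0 ∧ ‖(c j:ℂ) - w‖ < e := fun j =>
    eventually_atTop.2 (root_near μ hpos hm hd ho hF (hc j) hA0 ⟨n0, fun n hn => (hn0 n hn).2 j⟩ he0)
  obtain ⟨n2, hn2⟩ := eventually_atTop.1 (eventually_all.2 hroots)
  refine ⟨min (min δ' (δ/2)) e, lt_min (lt_min hδ' (by positivity)) he0, max n0 (max n1 n2), fun n hn z hz => ?_⟩
  have hz1 : ‖z - z0‖ < δ' := hz.trans_le ((min_le_left _ _).trans (min_le_left _ _))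
  have hz2 : ‖z - z0‖ < δ / 2 := hz.trans_le ((min_le_left _ _).trans (min_le_right _ _))
  have hz3 : ‖z - z0‖ < e := hz.trans_le (min_le_right _ _)
  have hlow : ∀ x ∈ Set.Icc (-1:ℝ) 1, δ / 2 ≤ ‖z - x‖ := by
    intro x hx
    have h1 := hδd x hx
    have h2 : z0 - x = (z - x) - (z - z0) := by ring
    rw [h2] at h1
    have h3 := norm_sub_le (z - x) (z - z0)
    linarith
  have hne : ∀ x ∈ Set.Icc (-1:ℝ) 1, z - x ≠ 0 := by
    intro x hx h
    have := hlow x hx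
    rw [h, norm_zero] at this; linarith
  have hzR : ‖z‖ + 1 ≤ R := by
    have : z = z0 + (z - z0) := by ring
    have h1 := norm_add_le z0 (z - z0)
    rw [← this] at h1
    rw [hR]; linarith
  have hfar : ∀ w : ℂ, aeval w (r n) = 0 → e ≤ ‖z - w‖ := by
    intro w hw
    obtain ⟨j, hj⟩ := roots_all (hF n).2.1 (hF n).2.2.1 hec (hn2 n (by omega)) w hw
    have h1 := hez j
    have h2 : (c j : ℂ) - z0 = (c j - w) - (z - w) + (z - z0) := by ring
    rw [h2] at h1
    have h3 := norm_add_le ((c j - w) - (z - w)) (z - z0)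
    have h4 := norm_sub_le (c j - w) (z - w)
    linarith
  have hS := S_lower (hF n) (half_pos hδ) hR1 hlow hzR he0 he1 hfar
  have hP := hn1 n (by omega) z hz1
  have hSn := (hn0 n (by omega)).1
  have hp := nrm_pos μ hpos (hm n).ne_zero
  rw [← hG] at hS
  set p := ‖aeval z (P n)‖ with hpdef
  set ν := nrm μ (P n)
  have hSpos : 0 < ‖aeval z (S n)‖ := by
    have hp0 : 0 < p := by
      by_contra h
      have := mul_nonpos_of_nonneg_of_nonpos hε'.le (not_lt.1 h)
      linarith
    have : 0 < e ^ N * p := by positivity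
    by_contra h
    have := mul_nonpos_of_nonneg_of_nonpos hG0.le (not_lt.1 h)
    linarith
  rw [markov_diff μ ρ Q (S n) hne (norm_pos_iff.1 hSpos), norm_div, div_lt_iff₀ hSpos]
  have hint := int_bound μ hpos (hSm n).ne_zero
    (h := fun x => (((Q.eval x * ρ.eval x : ℝ) : ℂ) / (z - x))) (A := B / (δ/2)) (fun x hx => by
      rw [norm_div, Complex.norm_real]
      exact div_le_div₀ hB0 (hB x hx) (half_pos hδ) (hlow x hx)) (by positivity)
  refine hint.trans_lt ?_
  have h1 : B / (δ/2) * mass1 μ * nrm μ (S n) ≤ B / (δ/2) * mass1 μ * (A * ν) :=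
    mul_le_mul_of_nonneg_left hSn (by positivity)
  refine h1.trans_lt ?_
  refine lt_of_mul_lt_mul_left ?_ hG0.le
  have h2 : (H + 1) * ν ≤ ε * (e ^ N * p) := by
    rw [div_mul_eq_mul_div, le_div_iff₀ (by positivity)] at hP
    linarith
  have h3 := mul_le_mul_of_nonneg_left hS hε.le
  calc G * (B / (δ/2) * mass1 μ * (A * ν)) = H * ν := by rw [hH]; ring
    _ < (H + 1) * ν := by linarith
    _ ≤ _ := h2
    _ ≤ _ := h3
    _ = _ := by ring

theorem statement1
    (μ : Measure ℝ) [IsFiniteMeasure μ]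
    (hμsupp : μ (Set.Icc (-1:ℝ) 1)ᶜ = 0)
    (hμinf : ∀ p : Polynomial ℝ, p ≠ 0 → 0 < ∫ x in Set.Icc (-1:ℝ) 1, (p.eval x) ^ 2 ∂μ)
    {N : ℕ} (c : Fin N → ℝ) (d : Fin N → ℕ)
    (hc : ∀ j, c j ∉ Set.Icc (-1:ℝ) 1)
    (η : Fin N → ℝ) (hη : ∀ j, 0 < η j)
    (hseq : SeqOrdered c d)
    (S : ℕ → Polynomial ℝ)
    (hSmonic : ∀ n, (S n).Monic) (hSdeg : ∀ n, (S n).natDegree = n)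
    (hSorth : ∀ n, ∀ m < n, sobInner μ c d η (X ^ m) (S n) = 0)
    (Q : ℕ → Polynomial ℝ)
    (hQmonic : ∀ n, (Q n).Monic) (hQdeg : ∀ n, (Q n).natDegree = n)
    (hQorth : ∀ n, ∀ m < n,
      (∫ x in Set.Icc (-1:ℝ) 1, x ^ m * (Q n).eval x * (rhoPoly c d).eval x ∂μ) = 0)
    (hNevai : NevaiClass μ)
    (k : ℕ) (hk : 1 ≤ k)
    (K : Set ℂ) (hK : IsCompact K)
    (hKsub : ∀ z ∈ K, z ∉ segIcc ∧ ∀ j, z ≠ (c j : ℂ)) :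
    TendstoUniformlyOn
      (fun (n : ℕ) (z : ℂ) =>
        assocFun μ (rhoPoly c d) (Q (k - 1)) (S (n + k)) z / aeval z (S (n + k)))
      (markovHat μ (rhoPoly c d) (Q (k - 1))) atTop K := by
  have hpos : PosM μ := by
    intro p hp
    rw [LI_apply]
    simpa only [eval_pow] using hμinf p hp
  obtain ⟨-, -, P, a, b, hm, hd, hPo, -, -, hrec, ha, -⟩ := hNevai
  have ho : ∀ n, Orth μ (P n) n := fun n => orth_of_pow μ (hPo n)
  have hfac : ∀ n, ∃ s r, Fac (P n) (S n) N n s r := fun n =>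
    factor_exists μ hpos hseq (hm n) (hd n) (ho n) (hSmonic n) (hSdeg n) (sob_orth' μ (hSorth n))
  choose s r hF using hfac
  obtain ⟨A, hA0, hA⟩ := S_norm μ hpos hη hSmonic hSdeg hSorth hm hd ho hrec ha
  refine (tendstoLocallyUniformlyOn_iff_tendstoUniformlyOn_of_compact hK).1 ?_
  rw [Metric.tendstoLocallyUniformlyOn_iff]
  intro ε hε z0 hz0
  obtain ⟨t, ht, n0, hn0⟩ := final_local μ hpos hm hd ho hF hSmonic hc (seq_injective hseq) hA0 hA
    (rhoPoly c d) (Q (k-1)) (hKsub z0 hz0).1 (hKsub z0 hz0).2 hε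
  refine ⟨Metric.ball z0 t, mem_nhdsWithin_of_mem_nhds (Metric.ball_mem_nhds _ ht), ?_⟩
  filter_upwards [eventually_ge_atTop n0] with n hn z hz
  rw [dist_eq_norm]
  exact hn0 (n + k) (by omega) z (by rwa [Metric.mem_ball, dist_eq_norm] at hz)

end
end

section
/- If n > d, then the Sobolev orthogonal polynomial S_n has at least n − d changes of sign on (−1,1), where d = N + Σ_{j=1}^N d_j is the degree of ρ. -/
open MeasureTheory Polynomial Filter
open scoped Classical

noncomputable section

lemma s3_int (μ : Measure ℝ) [IsFiniteMeasure μ] (p : Polynomial ℝ) :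
    IntegrableOn (fun x => p.eval x) (Set.Icc (-1:ℝ) 1) μ :=
  p.continuous.continuousOn.integrableOn_compact isCompact_Icc

lemma s3_add (μ : Measure ℝ) [IsFiniteMeasure μ] {N : ℕ} (c : Fin N → ℝ) (d : Fin N → ℕ)
    (η : Fin N → ℕ → ℝ) (f g h : Polynomial ℝ) :
    sobInner2 μ c d η (f + g) h = sobInner2 μ c d η f h + sobInner2 μ c d η g h := by
  unfold sobInner2
  have h1 := s3_int μ (f * h)
  have h2 := s3_int μ (g * h)
  simp only [eval_mul] at h1 h2
  simp only [eval_add, add_mul, iterate_map_add, mul_add, Finset.sum_add_distrib]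
  rw [integral_add h1 h2]
  ring

lemma s3_smul (μ : Measure ℝ) {N : ℕ} (c : Fin N → ℝ) (d : Fin N → ℕ)
    (η : Fin N → ℕ → ℝ) (a : ℝ) (f h : Polynomial ℝ) :
    sobInner2 μ c d η (C a * f) h = a * sobInner2 μ c d η f h := by
  unfold sobInner2
  simp only [eval_mul, eval_C, iterate_derivative_C_mul, mul_assoc]
  rw [integral_const_mul, mul_add, Finset.mul_sum]
  congr 1
  refine Finset.sum_congr rfl fun j _ => ?_
  rw [Finset.mul_sum]
  refine Finset.sum_congr rfl fun i _ => ?_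
  ring

lemma s3_orth (μ : Measure ℝ) [IsFiniteMeasure μ] {N : ℕ} (c : Fin N → ℝ) (d : Fin N → ℕ)
    (η : Fin N → ℕ → ℝ) (h : Polynomial ℝ) (n : ℕ)
    (ho : ∀ m < n, sobInner2 μ c d η (X ^ m) h = 0) (f : Polynomial ℝ) (hf : f.natDegree < n) :
    sobInner2 μ c d η f h = 0 := by
  rw [f.as_sum_range_C_mul_X_pow' hf]
  have key : ∀ k ≤ n, sobInner2 μ c d η (∑ i ∈ Finset.range k, C (f.coeff i) * X ^ i) h = 0 := by
    intro k
    induction k with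
    | zero => intro _; simp [sobInner2]
    | succ k ih =>
      intro hk
      rw [Finset.sum_range_succ, s3_add, s3_smul, ih (by omega), ho k (by omega)]
      simp
  exact key n le_rfl

lemma s3_sign (H : Polynomial ℝ) (hH : ∀ x ∈ Set.Ioo (-1:ℝ) 1, H.eval x ≠ 0)
    (x : ℝ) (hx : x ∈ Set.Icc (-1:ℝ) 1) : 0 ≤ H.eval 0 * H.eval x := by
  by_contra hneg
  push Not at hneg
  have hiv := intermediate_value_uIcc (a := 0) (b := x) (f := fun y => H.eval y)
    H.continuous.continuousOn
  have h0 : (0:ℝ) ∈ Set.uIcc (H.eval 0) (H.eval x) := by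
    rw [Set.mem_uIcc]
    rcases mul_neg_iff.1 hneg with h | h
    · right; exact ⟨h.2.le, h.1.le⟩
    · left; exact ⟨h.1.le, h.2.le⟩
  obtain ⟨y, hy, hy0⟩ := hiv h0
  simp only at hy0
  have hyx : y ≠ x := by
    rintro rfl
    rw [hy0] at hneg; simp at hneg
  refine hH y ?_ hy0
  rw [Set.mem_uIcc] at hy
  obtain ⟨hx1, hx2⟩ := hx
  rcases hy with ⟨h1, h2⟩ | ⟨h1, h2⟩
  · exact ⟨by linarith, lt_of_lt_of_le (lt_of_le_of_ne h2 hyx) hx2⟩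
  · exact ⟨lt_of_le_of_lt hx1 (lt_of_le_of_ne h1 hyx.symm), by linarith⟩

lemma s3_change (p : Polynomial ℝ) (hp : p ≠ 0) (t : ℝ) (ho : Odd (p.rootMultiplicity t)) :
    SignChangeAt p t := by
  obtain ⟨G, hG, hnd⟩ := exists_eq_pow_rootMultiplicity_mul_and_not_dvd p hp t
  have hGt : G.eval t ≠ 0 := fun h => hnd (dvd_iff_isRoot.2 h)
  intro δ hδ
  have hpos : 0 < G.eval t * G.eval t := mul_self_pos.2 hGt
  have hev : ∀ᶠ y in nhds t, 0 < G.eval t * G.eval y :=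
    (continuous_const.mul G.continuous).continuousAt.eventually (lt_mem_nhds hpos)
  obtain ⟨ε, hε, hb⟩ := Metric.eventually_nhds_iff.1 hev
  have hm : 0 < min δ ε := lt_min hδ hε
  obtain ⟨e, he, he2⟩ := exists_between hm
  have hed := he2.trans_le (min_le_left _ _)
  have hee := he2.trans_le (min_le_right _ _)
  have g1 : 0 < G.eval t * G.eval (t - e) := hb (by simp [abs_of_pos he, hee])
  have g2 : 0 < G.eval t * G.eval (t + e) := hb (by simp [abs_of_pos he, hee])
  refine ⟨t - e, ⟨by linarith, by linarith⟩, t + e, ⟨by linarith, by linarith⟩, ?_⟩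
  have g3 : 0 < G.eval (t - e) * G.eval (t + e) := by
    have := mul_pos g1 g2
    have h4 : 0 < (G.eval t * G.eval t) * (G.eval (t - e) * G.eval (t + e)) := by linarith
    exact (mul_pos_iff_of_pos_left hpos).1 h4
  rw [hG]
  simp only [eval_mul, eval_pow, eval_sub, eval_X, eval_C]
  have e1 : t - e - t = -e := by ring
  have e2 : t + e - t = e := by ring
  rw [e1, e2, ho.neg_pow]
  have := mul_pos (mul_pos (pow_pos he (p.rootMultiplicity t))
    (pow_pos he (p.rootMultiplicity t))) g3
  linarith

lemma s3_factor (p : Polynomial ℝ) (hp : p ≠ 0) :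
    ∃ (F : Finset ℝ) (H : Polynomial ℝ), (∀ t ∈ F, t ∈ Set.Ioo (-1:ℝ) 1) ∧
      (∀ x ∈ Set.Ioo (-1:ℝ) 1, H.eval x ≠ 0) ∧
      p = (∏ t ∈ F, (X - C t) ^ p.rootMultiplicity t) * H := by
  obtain ⟨q, hq, -, hr⟩ := exists_prod_multiset_X_sub_C_mul p
  rw [Finset.prod_multiset_map_count] at hq
  simp only [count_roots] at hq
  rw [← Finset.prod_filter_mul_prod_filter_not _ (fun t => t ∈ Set.Ioo (-1:ℝ) 1)] at hq
  refine ⟨_, _, ?_, ?_, (hq.symm.trans (mul_assoc _ _ _))⟩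
  · intro t ht
    exact (Finset.mem_filter.1 ht).2
  · intro x hx
    rw [eval_mul]
    refine mul_ne_zero ?_ ?_
    · rw [eval_prod, Finset.prod_ne_zero_iff]
      intro t ht
      rw [eval_pow, eval_sub, eval_X, eval_C]
      refine pow_ne_zero _ (sub_ne_zero.2 ?_)
      rintro rfl
      exact (Finset.mem_filter.1 ht).2 hx
    · intro h
      have hq0 : q ≠ 0 := by
        rintro rfl
        simp at hq; exact hp hq.symm
      have : x ∈ q.roots := (mem_roots hq0).2 h
      rw [hr] at this; simp at this

/-- If `n > d`, where `d = N + ∑ d j` is the degree of `ρ`, then the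
Sobolev orthogonal polynomial `S n` has at least `n - d` changes of sign on `(-1,1)`. -/
theorem statement3
    (μ : Measure ℝ) [IsFiniteMeasure μ]
    (hμsupp : μ (Set.Icc (-1:ℝ) 1)ᶜ = 0)
    (hμinf : ∀ p : Polynomial ℝ, p ≠ 0 → 0 < ∫ x in Set.Icc (-1:ℝ) 1, (p.eval x) ^ 2 ∂μ)
    {N : ℕ} (c : Fin N → ℝ) (d : Fin N → ℕ)
    (hc : ∀ j, c j ∉ Set.Icc (-1:ℝ) 1)
    (η : Fin N → ℕ → ℝ) (hη : ∀ j i, i ≤ d j → 0 ≤ η j i) (hηd : ∀ j, 0 < η j (d j))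
    (S : ℕ → Polynomial ℝ)
    (hSmonic : ∀ n, (S n).Monic) (hSdeg : ∀ n, (S n).natDegree = n)
    (hSorth : ∀ n, ∀ m < n, sobInner2 μ c d η (X ^ m) (S n) = 0)
    (n : ℕ) (hn : N + ∑ j, d j < n) :
    ∃ T : Finset ℝ, n - (N + ∑ j, d j) ≤ T.card ∧
      ∀ t ∈ T, t ∈ Set.Ioo (-1:ℝ) 1 ∧ SignChangeAt (S n) t := by
  have hS0 : S n ≠ 0 := (hSmonic n).ne_zero
  obtain ⟨F, H, hF, hH, hfac⟩ := s3_factor (S n) hS0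
  set T := F.filter (fun t => Odd ((S n).rootMultiplicity t)) with hT
  refine ⟨T, ?_, fun t ht => ⟨hF t (Finset.mem_filter.1 ht).1,
    s3_change _ hS0 t (Finset.mem_filter.1 ht).2⟩⟩
  by_contra hcard
  push Not at hcard
  set ρ : Polynomial ℝ := ∏ j, (X - C (c j)) ^ (d j + 1) with hρ
  set Q : Polynomial ℝ := ∏ t ∈ T, (X - C t) with hQ
  have hρm : ρ.Monic := monic_prod_of_monic _ _ fun j _ => (monic_X_sub_C _).pow _
  have hQm : Q.Monic := monic_prod_of_monic _ _ fun j _ => monic_X_sub_C _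
  have hρd : ρ.natDegree = N + ∑ j, d j := by
    rw [hρ, natDegree_prod_of_monic _ _ fun j _ => (monic_X_sub_C _).pow _]
    simp [natDegree_pow, Finset.sum_add_distrib, add_comm]
  have hQd : Q.natDegree = T.card := by
    rw [hQ, natDegree_prod_of_monic _ _ fun j _ => monic_X_sub_C _]
    simp
  have hdeg : (ρ * Q).natDegree < n := by
    rw [hρm.natDegree_mul hQm, hρd, hQd]; omega
  have horth := s3_orth μ c d η (S n) n (hSorth n) (ρ * Q) hdeg
  have hint : ∫ x in Set.Icc (-1:ℝ) 1, (ρ * Q).eval x * (S n).eval x ∂μ = 0 := by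
    unfold sobInner2 at horth
    rw [Finset.sum_eq_zero, add_zero] at horth
    · exact horth
    intro j _
    refine Finset.sum_eq_zero fun i hi => ?_
    have hi' : i ≤ d j := by simpa [Nat.lt_succ_iff] using hi
    have hdvd : (X - C (c j)) ^ (d j + 1) ∣ ρ * Q :=
      (Finset.dvd_prod_of_mem (fun j => (X - C (c j)) ^ (d j + 1)) (Finset.mem_univ j)).mul_right Q
    have h2 := pow_sub_dvd_iterate_derivative_of_pow_dvd i hdvd
    have h3 : X - C (c j) ∣ derivative^[i] (ρ * Q) :=
      (dvd_pow_self _ (by omega)).trans h2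
    have h4 : (derivative^[i] (ρ * Q)).eval (c j) = 0 := dvd_iff_isRoot.1 h3
    rw [h4]; simp
  have hHρ : ∀ x ∈ Set.Ioo (-1:ℝ) 1, (H * ρ).eval x ≠ 0 := by
    intro x hx
    rw [eval_mul]
    refine mul_ne_zero (hH x hx) ?_
    rw [hρ, eval_prod, Finset.prod_ne_zero_iff]
    intro j _
    rw [eval_pow, eval_sub, eval_X, eval_C]
    refine pow_ne_zero _ (sub_ne_zero.2 ?_)
    rintro rfl
    exact hc j ⟨hx.1.le, hx.2.le⟩
  set a := (H * ρ).eval 0 with ha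
  have ha0 : a ≠ 0 := hHρ 0 (by norm_num)
  have hnn : ∀ x ∈ Set.Icc (-1:ℝ) 1, 0 ≤ (C a * (ρ * Q * S n)).eval x := by
    intro x hx
    have hs := s3_sign (H * ρ) hHρ x hx
    have hQS : 0 ≤ Q.eval x * (∏ t ∈ F, (X - C t) ^ (S n).rootMultiplicity t).eval x := by
      rw [hQ, hT, Finset.prod_filter, eval_prod, eval_prod, ← Finset.prod_mul_distrib]
      refine Finset.prod_nonneg fun t _ => ?_
      split_ifs with ho
      · simp only [eval_pow, eval_sub, eval_X, eval_C]
        rw [← pow_succ']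
        exact (ho.add_odd odd_one).pow_nonneg _
      · simp only [eval_pow, eval_sub, eval_X, eval_C, eval_one, one_mul]
        exact (Nat.not_odd_iff_even.1 ho).pow_nonneg _
    have h5 := mul_nonneg hs hQS
    have h6 : (C a * (ρ * Q * S n)).eval x = (H * ρ).eval 0 * (H * ρ).eval x *
      (Q.eval x * (∏ t ∈ F, (X - C t) ^ (S n).rootMultiplicity t).eval x) := by
      have h7 := congrArg (eval x) hfac
      rw [eval_mul] at h7
      rw [eval_mul, eval_mul, eval_mul, h7, eval_C, ha, eval_mul (x := x) (p := H)]
      ring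
    rw [h6]; exact h5
  set K := C a * (ρ * Q * S n) with hK
  have hK0 : K ≠ 0 :=
    mul_ne_zero (C_ne_zero.2 ha0) (mul_ne_zero (mul_ne_zero hρm.ne_zero hQm.ne_zero) hS0)
  have hKint : ∫ x in Set.Icc (-1:ℝ) 1, K.eval x ∂μ = 0 := by
    simp only [hK, eval_mul, eval_C] at hint ⊢
    rw [integral_const_mul, hint, mul_zero]
  have hae := (setIntegral_eq_zero_iff_of_nonneg_ae
    (ae_restrict_of_forall_mem measurableSet_Icc hnn) (s3_int μ K)).1 hKint
  have := hμinf K hK0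
  rw [integral_eq_zero_of_ae] at this
  · exact lt_irrefl _ this
  · filter_upwards [hae] with x hx
    simp only [Pi.zero_apply] at hx ⊢
    rw [hx]; norm_num

end
end

section
/- For n > d and every polynomial f with deg f ≤ n − d − 1, the Sobolev orthogonal polynomial S_n satisfies ∫_{−1}^{1} S_n(x) f(x) ρ(x) dμ(x) = 0; that is, S_n is quasi-orthogonal of order d with respect to the measure dμ_ρ = ρ dμ. -/
open MeasureTheory Polynomial Filter
open scoped Classical

noncomputable section

theorem sob_add (μ : Measure ℝ) [IsFiniteMeasure μ] {N : ℕ} (c : Fin N → ℝ) (d : Fin N → ℕ)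
    (η : Fin N → ℕ → ℝ) (p q g : Polynomial ℝ) :
    sobInner2 μ c d η (p + q) g = sobInner2 μ c d η p g + sobInner2 μ c d η q g := by
  have hi : ∀ p : Polynomial ℝ, IntegrableOn (fun x => p.eval x * g.eval x)
      (Set.Icc (-1:ℝ) 1) μ := fun p =>
    (p.continuous.mul g.continuous).continuousOn.integrableOn_compact isCompact_Icc
  unfold sobInner2
  simp only [eval_add, add_mul, iterate_map_add, mul_add, Finset.sum_add_distrib]
  rw [integral_add (hi p) (hi q)]
  ring

theorem sob_smul (μ : Measure ℝ) {N : ℕ} (c : Fin N → ℝ) (d : Fin N → ℕ)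
    (η : Fin N → ℕ → ℝ) (a : ℝ) (p g : Polynomial ℝ) :
    sobInner2 μ c d η (a • p) g = a * sobInner2 μ c d η p g := by
  unfold sobInner2
  simp only [iterate_derivative_smul, eval_smul, smul_eq_mul, mul_assoc]
  rw [integral_const_mul, mul_add, Finset.mul_sum]
  congr 1
  refine Finset.sum_congr rfl fun j _ => ?_
  rw [Finset.mul_sum]
  refine Finset.sum_congr rfl fun i _ => ?_
  ring

theorem sob_lt (μ : Measure ℝ) [IsFiniteMeasure μ] {N : ℕ} (c : Fin N → ℝ) (d : Fin N → ℕ)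
    (η : Fin N → ℕ → ℝ) (g : Polynomial ℝ) (n : ℕ)
    (h : ∀ m < n, sobInner2 μ c d η (X ^ m) g = 0) (p : Polynomial ℝ) (hp : p.natDegree < n) :
    sobInner2 μ c d η p g = 0 := by
  let L : Polynomial ℝ →ₗ[ℝ] ℝ :=
    { toFun := fun p => sobInner2 μ c d η p g
      map_add' := fun p q => sob_add μ c d η p q g
      map_smul' := fun a p => sob_smul μ c d η a p g }
  change L p = 0
  rw [p.as_sum_range' n hp, map_sum]
  refine Finset.sum_eq_zero fun m hm => ?_
  rw [← smul_X_eq_monomial, map_smul]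
  have : L (X ^ m) = 0 := h m (Finset.mem_range.mp hm)
  rw [this, smul_zero]

theorem rho_deg {N : ℕ} (c : Fin N → ℝ) (d : Fin N → ℕ) :
    (rhoPoly c d).natDegree ≤ N + ∑ j, d j := by
  unfold rhoPoly
  have h1 : ∀ j, ((X - C (c j)) ^ (d j + 1)).natDegree ≤ d j + 1 := fun j => by
    rw [natDegree_pow, natDegree_X_sub_C, mul_one]
  have h2 : ∀ j, ((C (c j) - X) ^ (d j + 1)).natDegree ≤ d j + 1 := fun j => by
    rw [← neg_sub, natDegree_pow, natDegree_neg, natDegree_X_sub_C, mul_one]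
  refine natDegree_mul_le.trans ?_
  refine (add_le_add ((natDegree_prod_le _ _).trans (Finset.sum_le_sum fun j _ => h1 j))
    ((natDegree_prod_le _ _).trans (Finset.sum_le_sum fun j _ => h2 j))).trans ?_
  rw [← Finset.sum_union]
  · refine (Finset.sum_le_sum_of_subset (Finset.subset_univ _)).trans ?_
    simp [Finset.sum_add_distrib, add_comm]
  · rw [Finset.disjoint_filter]
    intro j _ h h'
    linarith

theorem rho_dvd {N : ℕ} (c : Fin N → ℝ) (d : Fin N → ℕ)
    (hc : ∀ j, c j ∉ Set.Icc (-1:ℝ) 1) (j : Fin N) :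
    (X - C (c j)) ^ (d j + 1) ∣ rhoPoly c d := by
  unfold rhoPoly
  by_cases h : c j < -1
  · exact Dvd.dvd.mul_right (Finset.dvd_prod_of_mem (fun j => (X - C (c j)) ^ (d j + 1))
      (by simpa using h)) _
  · have h' : 1 < c j := by
      by_contra h'
      exact hc j ⟨not_lt.mp h, not_lt.mp h'⟩
    refine Dvd.dvd.mul_left (dvd_trans (pow_dvd_pow_of_dvd ?_ _)
      (Finset.dvd_prod_of_mem (fun j => (C (c j) - X) ^ (d j + 1))
      (by simpa using h'))) _
    rw [← neg_sub X, dvd_neg]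

/-- Quasi-orthogonality of order `d`: if `n > d` and
`deg f ≤ n - d - 1` then `∫ S_n f ρ dμ = 0`. -/
theorem statement4
    (μ : Measure ℝ) [IsFiniteMeasure μ]
    (hμsupp : μ (Set.Icc (-1:ℝ) 1)ᶜ = 0)
    (hμinf : ∀ p : Polynomial ℝ, p ≠ 0 → 0 < ∫ x in Set.Icc (-1:ℝ) 1, (p.eval x) ^ 2 ∂μ)
    {N : ℕ} (c : Fin N → ℝ) (d : Fin N → ℕ)
    (hc : ∀ j, c j ∉ Set.Icc (-1:ℝ) 1)
    (η : Fin N → ℕ → ℝ) (hη : ∀ j i, i ≤ d j → 0 ≤ η j i) (hηd : ∀ j, 0 < η j (d j))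
    (S : ℕ → Polynomial ℝ)
    (hSmonic : ∀ n, (S n).Monic) (hSdeg : ∀ n, (S n).natDegree = n)
    (hSorth : ∀ n, ∀ m < n, sobInner2 μ c d η (X ^ m) (S n) = 0)
    (n : ℕ) (hn : N + ∑ j, d j < n)
    (f : Polynomial ℝ) (hf : f.natDegree ≤ n - (N + ∑ j, d j) - 1) :
    (∫ x in Set.Icc (-1:ℝ) 1, (S n).eval x * f.eval x * (rhoPoly c d).eval x ∂μ) = 0 := by
  have h0 := sob_lt μ c d η (S n) n (hSorth n) (rhoPoly c d * f) (by
    have := rho_deg c d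
    have := natDegree_mul_le (p := rhoPoly c d) (q := f)
    omega)
  unfold sobInner2 at h0
  rw [Finset.sum_eq_zero, add_zero] at h0
  · rw [← h0]
    congr 1
    ext x
    rw [eval_mul]
    ring
  · intro j _
    refine Finset.sum_eq_zero fun i hi => ?_
    have hi' := Finset.mem_range.mp hi
    have h1 := pow_sub_dvd_iterate_derivative_of_pow_dvd i
      ((rho_dvd c d hc j).mul_right f)
    have h2 : (X - C (c j)) ∣ derivative^[i] (rhoPoly c d * f) :=
      (dvd_pow_self _ (by omega)).trans h1
    rw [dvd_iff_isRoot] at h2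
    rw [h2.eq_zero]
    ring

end
end

section
/- For every k ≥ 1 and every n ≥ 0, the kth associated polynomial S_n^{[k]} is a polynomial of degree exactly n whose leading coefficient equals ‖Q_{k−1}‖²_{μ_ρ} = ∫_{−1}^{1} Q_{k−1}(x)² dμ_ρ(x). -/
open MeasureTheory Polynomial Filter
open scoped Classical

noncomputable section

lemma aux_int (μ : Measure ℝ) [IsFiniteMeasure μ] (p : Polynomial ℝ) :
    Integrable (fun x => p.eval x) (μ.restrict (Set.Icc (-1:ℝ) 1)) :=
  (p.continuous.continuousOn).integrableOn_compact isCompact_Icc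

lemma aux_rho {N : ℕ} (c : Fin N → ℝ) (d : Fin N → ℕ) (x : ℝ) (hx : x ∈ Set.Icc (-1:ℝ) 1) :
    0 < (rhoPoly c d).eval x := by
  unfold rhoPoly
  rw [eval_mul, eval_prod, eval_prod]
  apply mul_pos
  · apply Finset.prod_pos
    intro j hj
    have := (Finset.mem_filter.1 hj).2
    simp only [eval_pow, eval_sub, eval_X, eval_C]
    apply pow_pos
    linarith [hx.1]
  · apply Finset.prod_pos
    intro j hj
    have := (Finset.mem_filter.1 hj).2
    simp only [eval_pow, eval_sub, eval_X, eval_C]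
    apply pow_pos
    linarith [hx.2]

lemma aux_pos (μ : Measure ℝ) [IsFiniteMeasure μ]
    (hμinf : ∀ p : Polynomial ℝ, p ≠ 0 → 0 < ∫ x in Set.Icc (-1:ℝ) 1, (p.eval x) ^ 2 ∂μ)
    {N : ℕ} (c : Fin N → ℝ) (d : Fin N → ℕ) (q : Polynomial ℝ) (hq : q ≠ 0) :
    0 < ∫ x in Set.Icc (-1:ℝ) 1, (q.eval x) ^ 2 * (rhoPoly c d).eval x ∂μ := by
  have hnn : ∀ᵐ x ∂(μ.restrict (Set.Icc (-1:ℝ) 1)),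
      0 ≤ (q.eval x) ^ 2 * (rhoPoly c d).eval x := by
    filter_upwards [ae_restrict_mem measurableSet_Icc] with x hx
    exact mul_nonneg (sq_nonneg _) (aux_rho c d x hx).le
  have hi : Integrable (fun x => (q.eval x) ^ 2 * (rhoPoly c d).eval x)
      (μ.restrict (Set.Icc (-1:ℝ) 1)) := by
    exact (aux_int μ (q ^ 2 * rhoPoly c d)).congr (ae_of_all _ fun x => by simp)
  refine lt_of_le_of_ne (integral_nonneg_of_ae hnn) fun h0 => ?_
  have h1 := (integral_eq_zero_iff_of_nonneg_ae hnn hi).1 h0.symm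
  refine (hμinf q hq).ne' (integral_eq_zero_of_ae ?_)
  filter_upwards [h1, ae_restrict_mem measurableSet_Icc] with x hx hx'
  exact (mul_eq_zero.1 hx).resolve_right (aux_rho c d x hx').ne'

/-- For `k ≥ 1` and `n ≥ 0`, the `k`-th associated polynomial
`S_n^{[k]}` is a polynomial of degree exactly `n` with leading coefficient
`∫ Q_{k-1}² dμ_ρ`. -/
theorem statement5
    (μ : Measure ℝ) [IsFiniteMeasure μ]
    (hμsupp : μ (Set.Icc (-1:ℝ) 1)ᶜ = 0)
    (hμinf : ∀ p : Polynomial ℝ, p ≠ 0 → 0 < ∫ x in Set.Icc (-1:ℝ) 1, (p.eval x) ^ 2 ∂μ)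
    {N : ℕ} (c : Fin N → ℝ) (d : Fin N → ℕ)
    (hc : ∀ j, c j ∉ Set.Icc (-1:ℝ) 1)
    (η : Fin N → ℕ → ℝ) (hη : ∀ j i, i ≤ d j → 0 ≤ η j i) (hηd : ∀ j, 0 < η j (d j))
    (S : ℕ → Polynomial ℝ)
    (hSmonic : ∀ n, (S n).Monic) (hSdeg : ∀ n, (S n).natDegree = n)
    (hSorth : ∀ n, ∀ m < n, sobInner2 μ c d η (X ^ m) (S n) = 0)
    (Q : ℕ → Polynomial ℝ)
    (hQmonic : ∀ n, (Q n).Monic) (hQdeg : ∀ n, (Q n).natDegree = n)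
    (hQorth : ∀ n, ∀ m < n,
      (∫ x in Set.Icc (-1:ℝ) 1, x ^ m * (Q n).eval x * (rhoPoly c d).eval x ∂μ) = 0)
    (k : ℕ) (hk : 1 ≤ k) (n : ℕ) :
    ∃ T : Polynomial ℝ,
      T.degree = (n : ℕ) ∧
      T.leadingCoeff =
        (∫ x in Set.Icc (-1:ℝ) 1, ((Q (k - 1)).eval x) ^ 2 * (rhoPoly c d).eval x ∂μ) ∧
      ∀ z : ℝ, z ∉ Set.Icc (-1:ℝ) 1 →
        T.eval z = ∫ x in Set.Icc (-1:ℝ) 1,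
          (((S (n + k)).eval z - (S (n + k)).eval x) / (z - x)) *
            ((Q (k - 1)).eval x * (rhoPoly c d).eval x) ∂μ := by
  set ν := μ.restrict (Set.Icc (-1:ℝ) 1) with hν
  set ρ := rhoPoly c d with hρ
  set q := Q (k - 1) with hq
  set p := S (n + k) with hp
  have hqm : q.Monic := hQmonic _
  have hqd : q.natDegree = k - 1 := hQdeg _
  have hpm : p.Monic := hSmonic _
  have hpd : p.natDegree = n + k := hSdeg _
  let M : ℕ → ℝ := fun j => ∫ x, x ^ j * q.eval x * ρ.eval x ∂ν
  have hMi : ∀ j, Integrable (fun x => x ^ j * q.eval x * ρ.eval x) ν := by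
    intro j
    exact (aux_int μ (X ^ j * q * ρ)).congr (ae_of_all _ fun x => by simp)
  have hM0 : ∀ j < k - 1, M j = 0 := fun j hj => hQorth (k - 1) j hj
  have hM1 : M (k - 1) = ∫ x, (q.eval x) ^ 2 * ρ.eval x ∂ν := by
    have e : ∀ x, (q.eval x) ^ 2 * ρ.eval x =
        ∑ j ∈ Finset.range (k - 1 + 1), q.coeff j * (x ^ j * q.eval x * ρ.eval x) := by
      intro x
      have : q.eval x = ∑ j ∈ Finset.range (k - 1 + 1), q.coeff j * x ^ j := by
        rw [eval_eq_sum_range, hqd]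
      calc (q.eval x) ^ 2 * ρ.eval x = q.eval x * (q.eval x * ρ.eval x) := by ring
        _ = (∑ j ∈ Finset.range (k - 1 + 1), q.coeff j * x ^ j) * (q.eval x * ρ.eval x) := by
          rw [← this]
        _ = _ := by
          rw [Finset.sum_mul]
          exact Finset.sum_congr rfl fun j _ => by ring
    simp_rw [e]
    rw [integral_finsetSum _ (fun j _ => (hMi j).const_mul _)]
    simp_rw [integral_const_mul]
    rw [Finset.sum_range_succ, Finset.sum_eq_zero, zero_add]
    · have : q.coeff (k - 1) = 1 := by rw [← hqd]; exact hqm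
      rw [this, one_mul]
    · intro j hj
      have := hM0 j (Finset.mem_range.1 hj)
      simp only [M] at this
      rw [this, mul_zero]
  have hpos : 0 < M (k - 1) := by
    rw [hM1]; exact aux_pos μ hμinf c d q hqm.ne_zero
  let T : Polynomial ℝ := ∑ m ∈ Finset.range (n + k + 1), ∑ i ∈ Finset.range m,
    C (p.coeff m * M (m - 1 - i)) * X ^ i
  have hTc : ∀ l, T.coeff l = ∑ m ∈ Finset.range (n + k + 1),
      if l < m then p.coeff m * M (m - 1 - l) else 0 := by
    intro l
    simp only [T, finsetSum_coeff, coeff_C_mul_X_pow]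
    refine Finset.sum_congr rfl fun m _ => ?_
    rw [Finset.sum_ite_eq]
    simp
  have hTn : T.coeff n = M (k - 1) := by
    rw [hTc, Finset.sum_range_succ, Finset.sum_eq_zero, zero_add, if_pos (by omega)]
    · have : p.coeff (n + k) = 1 := by rw [← hpd]; exact hpm
      rw [this, one_mul]
      congr 1
      omega
    · intro m hm
      have := Finset.mem_range.1 hm
      split_ifs with h
      · rw [hM0 _ (by omega), mul_zero]
      · rfl
  have hTdeg : T.degree = (n : ℕ) := by
    apply le_antisymm
    · rw [degree_le_iff_coeff_zero]
      intro l hl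
      have hl' : n < l := by exact_mod_cast hl
      rw [hTc]
      apply Finset.sum_eq_zero
      intro m hm
      have := Finset.mem_range.1 hm
      split_ifs with h
      · rw [hM0 _ (by omega), mul_zero]
      · rfl
    · exact le_degree_of_ne_zero (by rw [hTn]; exact hpos.ne')
  refine ⟨T, hTdeg, ?_, ?_⟩
  · rw [leadingCoeff, natDegree_eq_of_degree_eq_some hTdeg, hTn, hM1]
  · intro z hz
    have e : ∀ᵐ x ∂ν, ((p.eval z - p.eval x) / (z - x)) * (q.eval x * ρ.eval x) =
        ∑ m ∈ Finset.range (n + k + 1), ∑ i ∈ Finset.range m,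
          (p.coeff m * z ^ i) * (x ^ (m - 1 - i) * q.eval x * ρ.eval x) := by
      filter_upwards [ae_restrict_mem measurableSet_Icc] with x hx
      have hzx : z - x ≠ 0 := by
        intro h
        apply hz
        rwa [sub_eq_zero.1 h]
      have hd : (p.eval z - p.eval x) / (z - x) = ∑ m ∈ Finset.range (n + k + 1),
          p.coeff m * ∑ i ∈ Finset.range m, z ^ i * x ^ (m - 1 - i) := by
        rw [div_eq_iff hzx, Finset.sum_mul, eval_eq_sum_range, eval_eq_sum_range, hpd,
          ← Finset.sum_sub_distrib]
        refine Finset.sum_congr rfl fun m _ => ?_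
        rw [mul_assoc, (Commute.all z x).geom_sum₂_mul]
        ring
      rw [hd, Finset.sum_mul]
      refine Finset.sum_congr rfl fun m _ => ?_
      rw [Finset.mul_sum, Finset.sum_mul]
      exact Finset.sum_congr rfl fun i _ => by ring
    rw [integral_congr_ae e, integral_finsetSum _ (fun m _ => integrable_finsetSum _
      (fun i _ => (hMi _).const_mul _))]
    simp only [T, eval_finsetSum, eval_mul, eval_C, eval_pow, eval_X]
    refine Finset.sum_congr rfl fun m _ => ?_
    rw [integral_finsetSum _ (fun i _ => (hMi _).const_mul _)]
    refine Finset.sum_congr rfl fun i _ => ?_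
    rw [integral_const_mul]
    simp only [M]
    ring


end
end
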